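/- arXiv:1910.11225 — 2 statements merged into one kernel-verified Lean document; each statement's English description precedes it below -/
import Mathlib

section
/- Suppose d = d(n) := p(n)·n satisfies (log n)^3 ≪ d ≪ n. Let i = i(n) ∈ ℕ be the largest integer such that c = c(n) := d^i/n ≤ 3·log n, and suppose c − (log d − log log d) → B for some real constant B. Then asymptotically almost surely, for G ∈ G(n,p): ζ(G) ≤ (1 + o(1))·(log d + 2·log log n)·e^c/(e^B + 1), and this bound is asymptotically equal to (log d + 2·log log n)·n/(d^{i−1}·(1 + e^{−B})). -/
open Filter SimpleGraph Set
open scoped Topology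

noncomputable section

/-- The probability, under the Erdős–Rényi binomial random graph `G(n,p)`, of a set `A`
of graphs on vertex set `Fin n`: each pair of distinct vertices is an edge
independently with probability `p`. -/
noncomputable def gnpProb (n : ℕ) (p : ℝ) (A : Set (SimpleGraph (Fin n))) : ℝ := by
  classical
  exact ∑ G ∈ Finset.univ.filter (fun G : SimpleGraph (Fin n) => G ∈ A),
      p ^ (Nat.card G.edgeSet) * (1 - p) ^ (n.choose 2 - Nat.card G.edgeSet)

/-- A sequence of graph events `A n ⊆ G(n, p n)` holds asymptotically almost surely. -/
def AAS (p : ℕ → ℝ) (A : (n : ℕ) → Set (SimpleGraph (Fin n))) : Prop :=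
  Tendsto (fun n : ℕ => gnpProb n (p n) (A n)) atTop (nhds 1)

/-- The set of vertices at graph distance exactly `j` from `v`. -/
def gSphere {V : Type*} (G : SimpleGraph V) (v : V) (j : ℕ) : Set V :=
  {u | G.edist v u = j}

/-- The set of vertices at graph distance at most `j` from some vertex of `A`. -/
def gBall {V : Type*} (G : SimpleGraph V) (A : Set V) (j : ℕ) : Set V :=
  {u | ∃ v ∈ A, G.edist v u ≤ j}

/-- The result of probing with sensor set `S` while the robber is at `v`: the cops
learn the sensor set together with the distance from each sensor to the robber. -/
noncomputable def probe {V : Type*} (G : SimpleGraph V) (S : Finset V) (v : V) :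
    Finset V × (V → ℕ) := by
  classical
  exact (S, fun s => if s ∈ S then G.dist s v else 0)

/-- A cop strategy: given the list of past probe results, choose the next sensor set. -/
def CopStrategy (V : Type*) : Type _ := List (Finset V × (V → ℕ)) → Finset V

/-- A robber trajectory: at each step the robber either stays or moves along an edge. -/
def IsRobberWalk {V : Type*} (G : SimpleGraph V) (w : ℕ → V) : Prop :=
  ∀ t, w (t + 1) = w t ∨ G.Adj (w t) (w (t + 1))

/-- The history of probe results produced in the first `t` rounds when the cops play
strategy `σ` against the robber walk `w` (round `t+1` probes position `w t`). -/
noncomputable def gameHistory {V : Type*} (G : SimpleGraph V) (σ : CopStrategy V)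
    (w : ℕ → V) : ℕ → List (Finset V × (V → ℕ))
  | 0 => []
  | t + 1 => gameHistory G σ w t ++ [probe G (σ (gameHistory G σ w t)) (w t)]

/-- The cops win the localization game on `G` with `k` sensors: there is a strategy,
probing exactly `k` vertices each round, such that for every robber walk there is a
round in which every robber walk producing the same probe results is at the same
vertex, i.e. the cops can locate the robber. -/
def CopsWin {V : Type*} (G : SimpleGraph V) (k : ℕ) : Prop :=
  ∃ σ : CopStrategy V, (∀ h, (σ h).card = k) ∧
    ∀ w : ℕ → V, IsRobberWalk G w → ∃ t : ℕ,
      ∀ w' : ℕ → V, IsRobberWalk G w' →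
        gameHistory G σ w' (t + 1) = gameHistory G σ w (t + 1) → w' t = w t

/-- The localization number `ζ(G)`: the least number of sensors with which the cops
can win the localization game on `G`. -/
noncomputable def localizationNumber {V : Type*} (G : SimpleGraph V) : ℕ :=
  sInf {k | CopsWin G k}

end

namespace LocProof
open Classical

/-- weight of a graph -/
noncomputable def wt {n : ℕ} (p : ℝ) (G : SimpleGraph (Fin n)) : ℝ :=
  p ^ (Nat.card G.edgeSet) * (1 - p) ^ (n.choose 2 - Nat.card G.edgeSet)

noncomputable def ex {n : ℕ} (p : ℝ) (f : SimpleGraph (Fin n) → ℝ) : ℝ :=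
  ∑ G, wt p G * f G

noncomputable def ind (P : Prop) : ℝ := if P then 1 else 0

lemma ind_nonneg (P : Prop) : 0 ≤ ind P := by unfold ind; split_ifs <;> norm_num
lemma ind_le_one (P : Prop) : ind P ≤ 1 := by unfold ind; split_ifs <;> norm_num

lemma gnpProb_eq {n : ℕ} (p : ℝ) (A : Set (SimpleGraph (Fin n))) :
    gnpProb n p A = ex p (fun G => ind (G ∈ A)) := by
  unfold gnpProb ex wt ind
  simp only [mul_ite, mul_one, mul_zero]
  rw [Finset.sum_filter]

noncomputable abbrev topE (n : ℕ) : Finset (Sym2 (Fin n)) :=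
  (⊤ : SimpleGraph (Fin n)).edgeFinset

lemma card_topE (n : ℕ) : (topE n).card = n.choose 2 := by
  have := SimpleGraph.card_edgeFinset_top_eq_card_choose_two (V := Fin n)
  simpa using this

lemma ncard_edge {n : ℕ} (G : SimpleGraph (Fin n)) : Nat.card G.edgeSet = G.edgeFinset.card := by
  rw [Nat.card_eq_fintype_card, SimpleGraph.edgeFinset_card]

lemma edge_sub {n : ℕ} (G : SimpleGraph (Fin n)) : G.edgeFinset ⊆ topE n := by
  intro e he
  rw [SimpleGraph.mem_edgeFinset] at *
  exact SimpleGraph.edgeSet_mono le_top he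

lemma wt_nonneg {n : ℕ} {p : ℝ} (h0 : 0 ≤ p) (h1 : p ≤ 1) (G : SimpleGraph (Fin n)) :
    0 ≤ wt p G := by
  unfold wt
  have : 0 ≤ 1 - p := by linarith
  positivity

lemma ex_empty {n : ℕ} (p : ℝ) (F : Finset (Sym2 (Fin n))) (hF : F ⊆ topE n) :
    ex p (fun G => ind (∀ e ∈ F, e ∉ G.edgeSet)) = (1 - p) ^ F.card := by
  have key : ex p (fun G : SimpleGraph (Fin n) => ind (∀ e ∈ F, e ∉ G.edgeSet)) =
      ∑ s ∈ (topE n \ F).powerset, p ^ s.card * (1 - p) ^ ((topE n).card - s.card) := by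
    unfold ex ind
    simp only [mul_ite, mul_one, mul_zero]
    rw [← Finset.sum_filter]
    refine Finset.sum_bij' (fun G _ => G.edgeFinset)
      (fun s _ => SimpleGraph.fromEdgeSet (s : Set (Sym2 (Fin n)))) ?_ ?_ ?_ ?_ ?_
    · intro G hG
      simp only [Finset.mem_filter, Finset.mem_univ, true_and] at hG
      rw [Finset.mem_powerset]
      intro e he
      rw [Finset.mem_sdiff]
      exact ⟨edge_sub G he, fun h => hG e h (SimpleGraph.mem_edgeFinset.1 he)⟩
    · intro s hs
      rw [Finset.mem_powerset] at hs
      simp only [Finset.mem_filter, Finset.mem_univ, true_and, SimpleGraph.edgeSet_fromEdgeSet]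
      intro e he h
      have := hs h.1
      rw [Finset.mem_sdiff] at this
      exact this.2 he
    · intro G hG
      simp
    · intro s hs
      rw [Finset.mem_powerset] at hs
      ext e
      simp only [SimpleGraph.mem_edgeFinset, SimpleGraph.edgeSet_fromEdgeSet]
      constructor
      · intro h; exact h.1
      · intro h
        refine ⟨h, ?_⟩
        have := hs h
        rw [Finset.mem_sdiff, SimpleGraph.mem_edgeFinset] at this
        exact SimpleGraph.not_isDiag_of_mem_edgeSet _ this.1
    · intro G hG
      unfold wt
      rw [ncard_edge, card_topE]
  rw [key]
  have h1 : ∀ s ∈ (topE n \ F).powerset, p ^ s.card * (1 - p) ^ ((topE n).card - s.card) =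
      (p ^ s.card * (1 - p) ^ ((topE n \ F).card - s.card)) * (1 - p) ^ F.card := by
    intro s hs
    rw [Finset.mem_powerset] at hs
    rw [mul_assoc, ← pow_add]
    congr 2
    have := Finset.card_le_card hs
    have h2 := Finset.card_sdiff_add_card_eq_card hF
    omega
  rw [Finset.sum_congr rfl h1, ← Finset.sum_mul, Finset.sum_pow_mul_eq_add_pow]
  simp

lemma ex_one {n : ℕ} (p : ℝ) : ex (n := n) p (fun _ => 1) = 1 := by
  have := ex_empty (n := n) p ∅ (by simp)
  simpa [ind] using this

lemma ex_mono {n : ℕ} {p : ℝ} (h0 : 0 ≤ p) (h1 : p ≤ 1) {f g : SimpleGraph (Fin n) → ℝ}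
    (h : ∀ G, f G ≤ g G) : ex p f ≤ ex p g :=
  Finset.sum_le_sum fun G _ => mul_le_mul_of_nonneg_left (h G) (wt_nonneg h0 h1 G)

lemma ex_nonneg {n : ℕ} {p : ℝ} (h0 : 0 ≤ p) (h1 : p ≤ 1) {f : SimpleGraph (Fin n) → ℝ}
    (h : ∀ G, 0 ≤ f G) : 0 ≤ ex p f :=
  Finset.sum_nonneg fun G _ => mul_nonneg (wt_nonneg h0 h1 G) (h G)

lemma ex_add {n : ℕ} (p : ℝ) (f g : SimpleGraph (Fin n) → ℝ) :
    ex p (fun G => f G + g G) = ex p f + ex p g := by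
  unfold ex; rw [← Finset.sum_add_distrib]; simp only [mul_add]

lemma ex_sub {n : ℕ} (p : ℝ) (f g : SimpleGraph (Fin n) → ℝ) :
    ex p (fun G => f G - g G) = ex p f - ex p g := by
  unfold ex; rw [← Finset.sum_sub_distrib]; simp only [mul_sub]

lemma ex_smul {n : ℕ} (p a : ℝ) (f : SimpleGraph (Fin n) → ℝ) :
    ex p (fun G => a * f G) = a * ex p f := by
  unfold ex; rw [Finset.mul_sum]; exact Finset.sum_congr rfl fun _ _ => by ring

lemma ex_sum {n : ℕ} {ι : Type*} (p : ℝ) (T : Finset ι) (f : ι → SimpleGraph (Fin n) → ℝ) :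
    ex p (fun G => ∑ t ∈ T, f t G) = ∑ t ∈ T, ex p (f t) := by
  unfold ex; simp only [Finset.mul_sum]; rw [Finset.sum_comm]

def Dep {n : ℕ} {α : Type*} (F : Set (Sym2 (Fin n))) (f : SimpleGraph (Fin n) → α) : Prop :=
  ∀ G G' : SimpleGraph (Fin n), (∀ e ∈ F, e ∈ G.edgeSet ↔ e ∈ G'.edgeSet) → f G = f G'

lemma wt_prod {n : ℕ} (p : ℝ) (G : SimpleGraph (Fin n)) :
    wt p G = ∏ e ∈ topE n, if e ∈ G.edgeSet then p else 1 - p := by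
  rw [Finset.prod_ite, Finset.prod_const, Finset.prod_const]
  unfold wt
  have h1 : (topE n).filter (fun e => e ∈ G.edgeSet) = G.edgeFinset := by
    ext e
    rw [Finset.mem_filter, SimpleGraph.mem_edgeFinset (G := G)]
    exact ⟨fun h => h.2, fun h => ⟨edge_sub G (SimpleGraph.mem_edgeFinset.2 h), h⟩⟩
  have h2 := Finset.card_filter_add_card_filter_not (s := topE n) (fun e => e ∈ G.edgeSet)
  rw [h1] at h2 ⊢
  rw [ncard_edge, ← card_topE]
  congr 2
  omega

def mix {n : ℕ} (F : Set (Sym2 (Fin n))) (G G' : SimpleGraph (Fin n)) : SimpleGraph (Fin n) :=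
  SimpleGraph.fromEdgeSet ((G.edgeSet ∩ F) ∪ (G'.edgeSet \ F))

lemma mem_mix {n : ℕ} (F : Set (Sym2 (Fin n))) (G G' : SimpleGraph (Fin n)) (e : Sym2 (Fin n)) :
    e ∈ (mix F G G').edgeSet ↔ if e ∈ F then e ∈ G.edgeSet else e ∈ G'.edgeSet := by
  unfold mix
  rw [SimpleGraph.edgeSet_fromEdgeSet]
  simp only [Set.mem_diff, Set.mem_union, Set.mem_inter_iff]
  have h1 := SimpleGraph.not_isDiag_of_mem_edgeSet (e := e) G
  have h2 := SimpleGraph.not_isDiag_of_mem_edgeSet (e := e) G'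
  simp only [Sym2.mem_diagSet]
  split_ifs <;> tauto

lemma mix_mix {n : ℕ} (F : Set (Sym2 (Fin n))) (G G' : SimpleGraph (Fin n)) :
    mix F (mix F G G') (mix F G' G) = G := by
  rw [← SimpleGraph.edgeSet_inj]
  ext e
  rw [mem_mix, mem_mix, mem_mix]
  split_ifs <;> rfl

lemma ex_indep {n : ℕ} (p : ℝ) {F F' : Set (Sym2 (Fin n))} (hd : Disjoint F F')
    {f g : SimpleGraph (Fin n) → ℝ} (hf : Dep F f) (hg : Dep F' g) :
    ex p (fun G => f G * g G) = ex p f * ex p g := by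
  have e1 : ex p f * ex p g = ∑ x : SimpleGraph (Fin n) × SimpleGraph (Fin n),
      wt p x.1 * wt p x.2 * (f x.1 * g x.2) := by
    unfold ex
    rw [Finset.sum_mul_sum, Fintype.sum_prod_type]
    exact Finset.sum_congr rfl fun _ _ => Finset.sum_congr rfl fun _ _ => by ring
  have e2 : ex p (fun G => f G * g G) = ∑ x : SimpleGraph (Fin n) × SimpleGraph (Fin n),
      wt p x.1 * wt p x.2 * (f x.1 * g x.1) := by
    rw [← mul_one (ex p _), ← ex_one (n := n) p]
    unfold ex
    rw [Finset.sum_mul_sum, Fintype.sum_prod_type]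
    exact Finset.sum_congr rfl fun _ _ => Finset.sum_congr rfl fun _ _ => by ring
  rw [e1, e2]
  let φ : SimpleGraph (Fin n) × SimpleGraph (Fin n) → SimpleGraph (Fin n) × SimpleGraph (Fin n) :=
    fun x => (mix F x.1 x.2, mix F x.2 x.1)
  have hφ : Function.Involutive φ := fun x => by
    simp only [φ, mix_mix]
  symm
  refine Finset.sum_bij' (fun x _ => φ x) (fun x _ => φ x) (by simp) (by simp)
    (fun x _ => hφ x) (fun x _ => hφ x) ?_
  intro x _
  have hw : wt p x.1 * wt p x.2 = wt p (φ x).1 * wt p (φ x).2 := by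
    simp only [wt_prod, ← Finset.prod_mul_distrib, φ]
    refine Finset.prod_congr rfl fun e _ => ?_
    simp only [mem_mix]
    by_cases h : e ∈ F <;> simp only [h, if_true, if_false]
    rw [mul_comm]
  rw [hw]
  congr 2
  · apply hf
    intro e he
    simp [φ, mem_mix, he]
  · apply hg
    intro e he
    have : e ∉ F := fun h => Set.disjoint_left.1 hd h he
    simp [φ, mem_mix, this]

lemma ex_indep_prod {n : ℕ} {ι : Type*} (p : ℝ) (T : Finset ι) (F : ι → Set (Sym2 (Fin n)))
    (f : ι → SimpleGraph (Fin n) → ℝ)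
    (hd : ∀ s ∈ T, ∀ t ∈ T, s ≠ t → Disjoint (F s) (F t))
    (hf : ∀ t ∈ T, Dep (F t) (f t)) :
    ex p (fun G => ∏ t ∈ T, f t G) = ∏ t ∈ T, ex p (f t) := by
  induction T using Finset.induction_on with
  | empty => simpa using ex_one p
  | insert a T ha ih =>
    simp only [Finset.prod_insert ha]
    rw [ex_indep p (F := F a) (F' := ⋃ t ∈ T, F t), ih]
    · intro s hs t ht; exact hd s (by simp [hs]) t (by simp [ht])
    · intro t ht; exact hf t (by simp [ht])
    · simp only [Set.disjoint_iUnion_right]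
      intro t ht
      exact hd a (by simp) t (by simp [ht]) (by rintro rfl; exact ha ht)
    · exact hf a (by simp)
    · intro G G' h
      refine Finset.prod_congr rfl fun t ht => ?_
      apply hf t (by simp [ht])
      intro e he
      exact h e (Set.mem_biUnion ht he)

lemma Dep.mono {n : ℕ} {α : Type*} {F F' : Set (Sym2 (Fin n))} (h : F ⊆ F')
    {f : SimpleGraph (Fin n) → α} (hf : Dep F f) : Dep F' f :=
  fun G G' hG => hf G G' fun e he => hG e (h he)

lemma Dep.comp {n : ℕ} {α β : Type*} {F : Set (Sym2 (Fin n))}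
    {f : SimpleGraph (Fin n) → α} (hf : Dep F f) (g : α → β) : Dep F (fun G => g (f G)) :=
  fun G G' hG => congrArg g (hf G G' hG)

/-- edges from s to Y -/
def star {n : ℕ} (s : Fin n) (Y : Finset (Fin n)) : Set (Sym2 (Fin n)) := {e | ∃ y ∈ Y, e = s(s, y)}

lemma star_disj {n : ℕ} {Y : Finset (Fin n)} {s t : Fin n} (hs : s ∉ Y) (hst : s ≠ t) :
    Disjoint (star s Y) (star t Y) := by
  rw [Set.disjoint_left]
  rintro e ⟨y, hy, rfl⟩ ⟨z, hz, h⟩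
  rw [Sym2.eq_iff] at h
  rcases h with h | h
  · exact hst h.1
  · exact hs (h.1 ▸ hz)

/-- general exponential moment bound -/
lemma mgf_bound {n : ℕ} {p : ℝ} (h0 : 0 ≤ p) (h1 : p ≤ 1) (T Y : Finset (Fin n))
    (hTY : Disjoint T Y) (X : Fin n → SimpleGraph (Fin n) → Prop)
    (hX : ∀ s ∈ T, Dep (star s Y) (X s)) (l : ℝ) (q : ℝ)
    (hq : ∀ s ∈ T, (Real.exp l - 1) * ex p (fun G => ind (X s G)) ≤ (Real.exp l - 1) * q) :
    ex p (fun G => Real.exp (l * (T.filter (fun s => X s G)).card)) ≤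
      Real.exp (T.card * (q * (Real.exp l - 1))) := by
  have e1 : ∀ G, Real.exp (l * (T.filter (fun s => X s G)).card) =
      ∏ s ∈ T, (1 + (Real.exp l - 1) * ind (X s G)) := by
    intro G
    have : ∀ s ∈ T, (1 + (Real.exp l - 1) * ind (X s G)) = if X s G then Real.exp l else 1 := by
      intro s _; unfold ind; split_ifs <;> ring
    rw [Finset.prod_congr rfl this, Finset.prod_ite, Finset.prod_const, Finset.prod_const_one,
      mul_one, ← Real.exp_nat_mul, mul_comm]
  simp only [e1]
  rw [ex_indep_prod p T (fun s => star s Y)]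
  · have : ∀ s ∈ T, ex p (fun G => 1 + (Real.exp l - 1) * ind (X s G)) ≤
        Real.exp (q * (Real.exp l - 1)) := by
      intro s hs
      rw [ex_add, ex_one, ex_smul]
      calc _ ≤ 1 + (Real.exp l - 1) * q := by linarith [hq s hs]
        _ ≤ _ := by
          have := Real.add_one_le_exp (q * (Real.exp l - 1))
          linarith
    calc _ ≤ ∏ s ∈ T, Real.exp (q * (Real.exp l - 1)) := by
          refine Finset.prod_le_prod (fun s hs => ?_) this
          refine ex_nonneg h0 h1 fun G => ?_
          unfold ind
          split_ifs
          · have := Real.exp_pos l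
            linarith
          · norm_num
      _ = _ := by rw [Finset.prod_const, ← Real.exp_nat_mul]
  · intro s hs t ht hst
    exact star_disj (Finset.disjoint_left.1 hTY hs) hst
  · intro s hs
    exact (hX s hs).comp (fun P => 1 + (Real.exp l - 1) * ind P)

lemma chern_low {n : ℕ} {p : ℝ} (h0 : 0 ≤ p) (h1 : p ≤ 1) (T Y : Finset (Fin n))
    (hTY : Disjoint T Y) (X : Fin n → SimpleGraph (Fin n) → Prop)
    (hX : ∀ s ∈ T, Dep (star s Y) (X s)) (q η : ℝ) (hη : 0 ≤ η) (hq0 : 0 ≤ q)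
    (hq : ∀ s ∈ T, q ≤ ex p (fun G => ind (X s G))) :
    ex p (fun G => ind (((T.filter (fun s => X s G)).card : ℝ) ≤ (1 - η) * (T.card * q))) ≤
      Real.exp (-(T.card * q * η ^ 2 / 2)) := by
  have hl : Real.exp (-η) - 1 ≤ 0 := by
    have : Real.exp (-η) ≤ 1 := Real.exp_le_one_iff.2 (by linarith)
    linarith
  have hm := mgf_bound h0 h1 T Y hTY X hX (-η) q
    (fun s hs => mul_le_mul_of_nonpos_left (hq s hs) hl)
  have hη2 : Real.exp (-η) - 1 ≤ -η + η ^ 2 / 2 := by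
    have h3 : 1 + η + η ^ 2 / 2 ≤ Real.exp η := Real.quadratic_le_exp_of_nonneg hη
    have h4 : Real.exp (-η) * Real.exp η = 1 := by rw [← Real.exp_add]; simp
    have h5 := Real.exp_pos (-η)
    have h6 : Real.exp (-η) * (1 + η + η ^ 2 / 2) ≤ 1 := by nlinarith
    have h7 : 0 < 1 + η + η ^ 2 / 2 := by positivity
    have h8 : Real.exp (-η) ≤ 1 / (1 + η + η ^ 2 / 2) := by
      rw [le_div_iff₀ h7]; exact h6
    have h9 : 1 / (1 + η + η ^ 2 / 2) ≤ 1 - η + η ^ 2 / 2 := by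
      rw [div_le_iff₀ h7]; nlinarith [sq_nonneg (η ^ 2)]
    linarith
  have hN : 0 ≤ (T.card : ℝ) * q := by positivity
  calc _ ≤ ex p (fun G => Real.exp (η * ((1 - η) * (T.card * q))) *
          Real.exp (-η * (T.filter (fun s => X s G)).card)) := by
        refine ex_mono h0 h1 fun G => ?_
        rw [← Real.exp_add]
        unfold ind
        split_ifs with h
        · apply Real.one_le_exp
          nlinarith
        · positivity
    _ ≤ Real.exp (η * ((1 - η) * (T.card * q))) * Real.exp (T.card * (q * (Real.exp (-η) - 1))) := by
        rw [ex_smul]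
        exact mul_le_mul_of_nonneg_left hm (Real.exp_pos _).le
    _ ≤ _ := by
        rw [← Real.exp_add]
        apply Real.exp_le_exp.2
        nlinarith [mul_le_mul_of_nonneg_left hη2 hN]

lemma chern_up {n : ℕ} {p : ℝ} (h0 : 0 ≤ p) (h1 : p ≤ 1) (T Y : Finset (Fin n))
    (hTY : Disjoint T Y) (X : Fin n → SimpleGraph (Fin n) → Prop)
    (hX : ∀ s ∈ T, Dep (star s Y) (X s)) (q η : ℝ) (hη : 0 ≤ η) (hη2 : η ≤ 2) (hq0 : 0 ≤ q)
    (hq : ∀ s ∈ T, ex p (fun G => ind (X s G)) ≤ q) (M : ℝ) (hM : T.card * q ≤ M) :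
    ex p (fun G => ind ((1 + η) * M ≤ ((T.filter (fun s => X s G)).card : ℝ))) ≤
      Real.exp (-(M * η ^ 2 / 4)) := by
  have hl : 0 ≤ Real.exp (η / 2) - 1 := by
    have : 1 ≤ Real.exp (η / 2) := Real.one_le_exp (by linarith)
    linarith
  have hm := mgf_bound h0 h1 T Y hTY X hX (η / 2) q
    (fun s hs => mul_le_mul_of_nonneg_left (hq s hs) hl)
  have hη2 : Real.exp (η / 2) - 1 ≤ η / 2 + (η / 2) ^ 2 := by
    have h3 := Real.abs_exp_sub_one_sub_id_le (x := η / 2) (by rw [abs_le]; constructor <;> linarith)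
    have := (abs_le.1 h3).2
    linarith
  have hN : 0 ≤ (T.card : ℝ) * q := by positivity
  calc _ ≤ ex p (fun G => Real.exp (-(η / 2 * ((1 + η) * M))) *
          Real.exp (η / 2 * (T.filter (fun s => X s G)).card)) := by
        refine ex_mono h0 h1 fun G => ?_
        rw [← Real.exp_add]
        unfold ind
        split_ifs with h
        · apply Real.one_le_exp
          nlinarith
        · positivity
    _ ≤ Real.exp (-(η / 2 * ((1 + η) * M))) * Real.exp (T.card * (q * (Real.exp (η / 2) - 1))) := by
        rw [ex_smul]
        exact mul_le_mul_of_nonneg_left hm (Real.exp_pos _).le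
    _ ≤ _ := by
        rw [← Real.exp_add]
        apply Real.exp_le_exp.2
        have : (T.card : ℝ) * (q * (Real.exp (η / 2) - 1)) ≤ M * (η / 2 + (η / 2) ^ 2) := by
          rw [← mul_assoc]
          exact mul_le_mul hM hη2 hl (le_trans hN hM)
        nlinarith
end LocProof

namespace LocProof
open Classical

noncomputable def nb {V : Type*} [Fintype V] (G : SimpleGraph V) (A : Finset V) : Finset V :=
  Finset.univ.filter (fun v => v ∈ A ∨ ∃ a ∈ A, G.Adj a v)

lemma mem_nb {V : Type*} [Fintype V] (G : SimpleGraph V) (A : Finset V) (v : V) :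
    v ∈ nb G A ↔ v ∈ A ∨ ∃ a ∈ A, G.Adj a v := by simp [nb]

lemma sub_nb {V : Type*} [Fintype V] (G : SimpleGraph V) (A : Finset V) : A ⊆ nb G A :=
  fun v hv => (mem_nb G A v).2 (Or.inl hv)

lemma nb_mono {V : Type*} [Fintype V] (G : SimpleGraph V) {A B : Finset V} (h : A ⊆ B) :
    nb G A ⊆ nb G B := by
  intro v hv
  rw [mem_nb] at *
  rcases hv with hv | ⟨a, ha, hav⟩
  · exact Or.inl (h hv)
  · exact Or.inr ⟨a, h ha, hav⟩

lemma nb_union {V : Type*} [Fintype V] [DecidableEq V] (G : SimpleGraph V) (A B : Finset V) :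
    nb G (A ∪ B) = nb G A ∪ nb G B := by
  ext v
  simp only [mem_nb, Finset.mem_union]
  constructor
  · rintro ((h | h) | ⟨a, (h | h), h2⟩)
    · tauto
    · tauto
    · exact Or.inl (Or.inr ⟨a, h, h2⟩)
    · exact Or.inr (Or.inr ⟨a, h, h2⟩)
  · rintro ((h | ⟨a, h, h2⟩) | (h | ⟨a, h, h2⟩))
    · tauto
    · exact Or.inr ⟨a, Or.inl h, h2⟩
    · tauto
    · exact Or.inr ⟨a, Or.inr h, h2⟩

noncomputable def bl {V : Type*} [Fintype V] (G : SimpleGraph V) (A : Finset V) (j : ℕ) : Finset V :=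
  (nb G)^[j] A

lemma bl_succ {V : Type*} [Fintype V] (G : SimpleGraph V) (A : Finset V) (j : ℕ) :
    bl G A (j + 1) = nb G (bl G A j) := by
  unfold bl; rw [Function.iterate_succ_apply']

lemma bl_succ' {V : Type*} [Fintype V] (G : SimpleGraph V) (A : Finset V) (j : ℕ) :
    bl G A (j + 1) = bl G (nb G A) j := by
  unfold bl; rw [Function.iterate_succ_apply]

lemma bl_zero {V : Type*} [Fintype V] (G : SimpleGraph V) (A : Finset V) :
    bl G A 0 = A := rfl

lemma bl_mono {V : Type*} [Fintype V] (G : SimpleGraph V) (A : Finset V) : Monotone (bl G A) :=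
  monotone_nat_of_le_succ fun j => by rw [bl_succ]; exact sub_nb _ _

lemma bl_union {V : Type*} [Fintype V] [DecidableEq V] (G : SimpleGraph V) (A B : Finset V) (j : ℕ) :
    bl G (A ∪ B) j = bl G A j ∪ bl G B j := by
  induction j with
  | zero => rfl
  | succ j ih => rw [bl_succ, bl_succ, bl_succ, ih, nb_union]

lemma bl_of_walk {V : Type*} [Fintype V] (G : SimpleGraph V) {u v : V} (w : G.Walk u v) :
    ∀ A : Finset V, u ∈ A → v ∈ bl G A w.length := by
  induction w with
  | nil => intro A h; exact h
  | cons h w ih =>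
    intro A hA
    rw [SimpleGraph.Walk.length_cons, bl_succ']
    exact ih _ ((mem_nb _ _ _).2 (Or.inr ⟨_, hA, h⟩))

lemma walk_of_bl {V : Type*} [Fintype V] (G : SimpleGraph V) (u : V) (j : ℕ) :
    ∀ v ∈ bl G {u} j, ∃ w : G.Walk u v, w.length ≤ j := by
  induction j with
  | zero =>
    intro v hv
    rw [bl_zero, Finset.mem_singleton] at hv
    subst hv
    exact ⟨SimpleGraph.Walk.nil, le_refl _⟩
  | succ j ih =>
    intro v hv
    rw [bl_succ, mem_nb] at hv
    rcases hv with hv | ⟨a, ha, hav⟩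
    · obtain ⟨w, hw⟩ := ih v hv
      exact ⟨w, by omega⟩
    · obtain ⟨w, hw⟩ := ih a ha
      refine ⟨w.concat hav, ?_⟩
      rw [SimpleGraph.Walk.length_concat]; omega

/-- a vertex in the `j`-ball of `u`, not in the `j`-ball of `w`, and different from `u`,
distinguishes `u` and `w` -/
lemma dist_ne {V : Type*} [Fintype V] (G : SimpleGraph V) (u w s : V) (j : ℕ)
    (h1 : s ∈ bl G {u} j) (h2 : s ∉ bl G {w} j) (hsu : s ≠ u) : G.dist s u ≠ G.dist s w := by
  obtain ⟨q, hq⟩ := walk_of_bl G u j s h1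
  have hr : G.Reachable u s := ⟨q⟩
  have hd : G.dist u s ≤ j := (SimpleGraph.dist_le q).trans hq
  have hpos : 0 < G.dist u s := hr.pos_dist_of_ne (Ne.symm hsu)
  rw [SimpleGraph.dist_comm (u := s) (v := u), SimpleGraph.dist_comm (u := s) (v := w)]
  intro he
  by_cases hw : G.Reachable w s
  · obtain ⟨r, hr⟩ := hw.exists_walk_length_eq_dist
    apply h2
    have := bl_of_walk G r {w} (by simp)
    exact bl_mono G {w} (by omega) this
  · rw [SimpleGraph.dist_eq_zero_of_not_reachable hw] at he
    omega

/-- the class of candidates -/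
noncomputable def cls {V : Type*} [Fintype V] (G : SimpleGraph V) (A S : Finset V)
    (r : Finset V × (V → ℕ)) : Finset V := A.filter (fun x => probe G S x = r)

lemma gameHistory_len {V : Type*} (G : SimpleGraph V) (σ : CopStrategy V) (w : ℕ → V) (t : ℕ) :
    (gameHistory G σ w t).length = t := by
  induction t with
  | zero => rfl
  | succ t ih => simp [gameHistory, ih]

lemma copsWin_of {V : Type*} [Fintype V] (G : SimpleGraph V) (k : ℕ)
    (h : ∀ A : Finset V, ∃ S : Finset V, S.card = k ∧ ∀ v ∈ A,
      (cls G A S (probe G S v)).card ≤ 1 ∨ (nb G (cls G A S (probe G S v))).card < A.card) :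
    CopsWin G k := by
  choose pick hcard hpick using h
  let cand : List (Finset V × (V → ℕ)) → Finset V := fun l =>
    l.foldl (fun A r => nb G (cls G A (pick A) r)) Finset.univ
  let σ : CopStrategy V := fun l => pick (cand l)
  refine ⟨σ, fun l => hcard _, ?_⟩
  have hstep : ∀ w t, cand (gameHistory G σ w (t + 1)) =
      nb G (cls G (cand (gameHistory G σ w t)) (pick (cand (gameHistory G σ w t)))
        (probe G (pick (cand (gameHistory G σ w t))) (w t))) := by
    intro w t
    simp only [cand, gameHistory, List.foldl_append, List.foldl_cons, List.foldl_nil]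
    rfl
  have hmem : ∀ w, IsRobberWalk G w → ∀ t, w t ∈ cand (gameHistory G σ w t) := by
    intro w hw t
    induction t with
    | zero => simp [cand, gameHistory]
    | succ t ih =>
      rw [hstep, mem_nb]
      have : w t ∈ cls G (cand (gameHistory G σ w t)) (pick (cand (gameHistory G σ w t)))
        (probe G (pick (cand (gameHistory G σ w t))) (w t)) := by
        simp [cls, ih]
      rcases hw t with h | h
      · left; rw [h]; exact this
      · right; exact ⟨_, this, h⟩
  intro w hw
  by_contra hcon
  push Not at hcon
  have hdec : ∀ t, (cand (gameHistory G σ w (t + 1))).card < (cand (gameHistory G σ w t)).card := by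
    intro t
    rw [hstep]
    rcases hpick (cand (gameHistory G σ w t)) (w t) (hmem w hw t) with h | h
    · exfalso
      obtain ⟨w', hw', hh, hne⟩ := hcon t
      simp only [gameHistory] at hh
      obtain ⟨h1, h2⟩ := List.append_inj hh (by rw [gameHistory_len, gameHistory_len])
      rw [h1] at h2
      have h3 := hmem w' hw' t
      rw [h1] at h3
      have h4 : probe G (σ (gameHistory G σ w t)) (w' t) = probe G (σ (gameHistory G σ w t)) (w t) := by
        simpa using h2
      apply hne
      refine Finset.card_le_one.1 h _ ?_ _ ?_
      · simp only [cls, Finset.mem_filter]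
        exact ⟨h3, h4⟩
      · exact Finset.mem_filter.2 ⟨hmem w hw t, rfl⟩
    · exact h
  have : ∀ t, (cand (gameHistory G σ w t)).card + t ≤ (cand (gameHistory G σ w 0)).card := by
    intro t
    induction t with
    | zero => simp
    | succ t ih => have := hdec t; omega
  have := this ((cand (gameHistory G σ w 0)).card + 1)
  omega

/-- sampling -/
lemma exists_sensors {V : Type*} [Fintype V] (G : SimpleGraph V) (k : ℕ)
    (hk : k ≤ Fintype.card V) (z : ℝ) (hz : 0 ≤ z) (hz1 : z ≤ 1) (hV : 0 < Fintype.card V)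
    (hD : ∀ u w : V, u ≠ w → z * Fintype.card V ≤
      ((Finset.univ.filter (fun s => G.dist s u ≠ G.dist s w)).card : ℝ))
    (A : Finset V) :
    ∃ S : Finset V, S.card = k ∧
      ((A.offDiag.filter (fun x => ∀ s ∈ S, G.dist s x.1 = G.dist s x.2)).card : ℝ) ≤
        (A.card : ℝ) ^ 2 * (1 - z) ^ k := by
  have key : ∃ f : Fin k → V,
      ((A.offDiag.filter (fun x => ∀ j, G.dist (f j) x.1 = G.dist (f j) x.2)).card : ℝ) ≤
        (A.card : ℝ) ^ 2 * (1 - z) ^ k := by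
    by_contra hcon
    push Not at hcon
    have hne : Nonempty V := Fintype.card_pos_iff.1 hV
    have h1 : ∑ f : Fin k → V, (A.card : ℝ) ^ 2 * (1 - z) ^ k < ∑ f : Fin k → V,
        ((A.offDiag.filter (fun x => ∀ j, G.dist (f j) x.1 = G.dist (f j) x.2)).card : ℝ) :=
      Finset.sum_lt_sum_of_nonempty Finset.univ_nonempty fun f _ => hcon f
    have h2 : ∑ f : Fin k → V,
        ((A.offDiag.filter (fun x => ∀ j, G.dist (f j) x.1 = G.dist (f j) x.2)).card : ℝ) =
        ∑ x ∈ A.offDiag, ((Finset.univ.filter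
          (fun s => G.dist s x.1 = G.dist s x.2)).card : ℝ) ^ k := by
      simp only [Finset.card_filter, Nat.cast_sum]
      rw [Finset.sum_comm]
      refine Finset.sum_congr rfl fun x _ => ?_
      rw [← Nat.cast_sum, ← Finset.card_filter]
      have : (Finset.univ.filter (fun f : Fin k → V => ∀ j, G.dist (f j) x.1 = G.dist (f j) x.2)) =
          Fintype.piFinset (fun _ : Fin k => Finset.univ.filter
            (fun s => G.dist s x.1 = G.dist s x.2)) := by
        ext f; simp [Fintype.mem_piFinset]
      rw [this, Fintype.card_piFinset_const, ← Nat.cast_sum, ← Finset.card_filter]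
      push_cast; rfl
    rw [h2] at h1
    have h3 : ∑ x ∈ A.offDiag, ((Finset.univ.filter
          (fun s => G.dist s x.1 = G.dist s x.2)).card : ℝ) ^ k ≤
        ∑ x ∈ A.offDiag, ((1 - z) * Fintype.card V) ^ k := by
      refine Finset.sum_le_sum fun x hx => ?_
      refine pow_le_pow_left₀ (by positivity) ?_ k
      have h4 := hD x.1 x.2 (Finset.mem_offDiag.1 hx).2.2
      have h5 := Finset.card_filter_add_card_filter_not (s := (Finset.univ : Finset V))
        (fun s => G.dist s x.1 = G.dist s x.2)
      rw [Finset.card_univ] at h5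
      have h6 : ((Finset.univ.filter (fun s => G.dist s x.1 = G.dist s x.2)).card : ℝ) +
        ((Finset.univ.filter (fun s => ¬ G.dist s x.1 = G.dist s x.2)).card : ℝ) = Fintype.card V := by
        exact_mod_cast h5
      have h7 : z * Fintype.card V ≤
        ((Finset.univ.filter (fun s => ¬ G.dist s x.1 = G.dist s x.2)).card : ℝ) := h4
      linarith
    rw [Finset.sum_const, nsmul_eq_mul] at h3
    rw [Finset.sum_const, nsmul_eq_mul, Finset.card_univ, Fintype.card_fun, Fintype.card_fin] at h1
    have h6 : ((A.offDiag.card : ℕ) : ℝ) ≤ (A.card : ℝ) ^ 2 := by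
      have : A.offDiag.card ≤ A.card * A.card := by rw [Finset.offDiag_card]; omega
      rw [sq]; exact_mod_cast this
    have h7 : 0 ≤ (1 - z) ^ k := pow_nonneg (by linarith) k
    push_cast at h1
    rw [mul_pow] at h3
    have h8 : (0 : ℝ) < (Fintype.card V : ℝ) ^ k := by positivity
    have h9 := mul_le_mul_of_nonneg_right h6 (mul_nonneg h7 h8.le)
    nlinarith
  obtain ⟨f, hf⟩ := key
  have hc : (Finset.univ.image f).card ≤ k := by
    calc _ ≤ (Finset.univ : Finset (Fin k)).card := Finset.card_image_le
      _ = k := by simp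
  obtain ⟨S, hS, hSk⟩ := Finset.exists_superset_card_eq hc hk
  refine ⟨S, hSk, le_trans ?_ hf⟩
  have : (A.offDiag.filter (fun x => ∀ s ∈ S, G.dist s x.1 = G.dist s x.2)) ⊆
      (A.offDiag.filter (fun x => ∀ j, G.dist (f j) x.1 = G.dist (f j) x.2)) := by
    intro x hx
    rw [Finset.mem_filter] at *
    exact ⟨hx.1, fun j => hx.2 _ (hS (Finset.mem_image_of_mem f (Finset.mem_univ j)))⟩
  exact_mod_cast Finset.card_le_card this

lemma nb_card {V : Type*} [Fintype V] (G : SimpleGraph V) (D : ℝ)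
    (hD : ∀ v, ((nb G {v}).card : ℝ) ≤ D) (A : Finset V) : ((nb G A).card : ℝ) ≤ D * A.card := by
  have : nb G A ⊆ A.biUnion (fun v => nb G {v}) := by
    intro x hx
    rw [mem_nb] at hx
    rw [Finset.mem_biUnion]
    rcases hx with h | ⟨a, ha, h⟩
    · exact ⟨x, h, (mem_nb _ _ _).2 (by simp)⟩
    · exact ⟨a, ha, (mem_nb _ _ _).2 (by simp [h])⟩
  calc ((nb G A).card : ℝ) ≤ ((A.biUnion (fun v => nb G {v})).card : ℝ) := by
        exact_mod_cast Finset.card_le_card this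
    _ ≤ ∑ v ∈ A, ((nb G {v}).card : ℝ) := by exact_mod_cast Finset.card_biUnion_le
    _ ≤ ∑ v ∈ A, D := Finset.sum_le_sum fun v _ => hD v
    _ = _ := by rw [Finset.sum_const, nsmul_eq_mul, mul_comm]

lemma bl_card {V : Type*} [Fintype V] (G : SimpleGraph V) (D : ℝ) (hD0 : 0 ≤ D)
    (hD : ∀ v, ((nb G {v}).card : ℝ) ≤ D) (A : Finset V) (j : ℕ) :
    ((bl G A j).card : ℝ) ≤ A.card * D ^ j := by
  induction j with
  | zero => simp [bl_zero]
  | succ j ih =>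
    rw [bl_succ]
    calc _ ≤ D * ((bl G A j).card : ℝ) := nb_card G D hD _
      _ ≤ D * (A.card * D ^ j) := mul_le_mul_of_nonneg_left ih hD0
      _ = _ := by ring

/-- The deterministic game theorem. -/
lemma copsWin_of_dist {V : Type*} [Fintype V] (G : SimpleGraph V) (k : ℕ)
    (hk : k ≤ Fintype.card V) (z D : ℝ) (hz : 0 ≤ z) (hz1 : z ≤ 1) (hV : 0 < Fintype.card V)
    (hD : ∀ u w : V, u ≠ w → z * Fintype.card V ≤
      ((Finset.univ.filter (fun s => G.dist s u ≠ G.dist s w)).card : ℝ))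
    (hdeg : ∀ v, ((nb G {v}).card : ℝ) ≤ D) (hD0 : 0 < D)
    (hsmall : 2 * D ^ 2 * (1 - z) ^ k < 1) : CopsWin G k := by
  apply copsWin_of
  intro A
  obtain ⟨S, hS, hS2⟩ := exists_sensors G k hk z hz hz1 hV hD A
  refine ⟨S, hS, fun v hv => ?_⟩
  set C := cls G A S (probe G S v) with hC
  by_cases h1 : C.card ≤ 1
  · exact Or.inl h1
  right
  push Not at h1
  have hsub : C.offDiag ⊆ A.offDiag.filter (fun x => ∀ s ∈ S, G.dist s x.1 = G.dist s x.2) := by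
    intro x hx
    rw [Finset.mem_offDiag] at hx
    rw [hC] at hx
    simp only [cls, Finset.mem_filter] at hx
    rw [Finset.mem_filter, Finset.mem_offDiag]
    refine ⟨⟨hx.1.1, hx.2.1.1, hx.2.2⟩, fun s hs => ?_⟩
    have h2 := hx.1.2.trans hx.2.1.2.symm
    unfold probe at h2
    have h3 := congrFun (congrArg Prod.snd h2) s
    simpa [hs] using h3
  have h2 : ((C.offDiag.card : ℕ) : ℝ) ≤ (A.card : ℝ) ^ 2 * (1 - z) ^ k :=
    le_trans (by exact_mod_cast Finset.card_le_card hsub) hS2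
  have h3 : ((C.offDiag.card : ℕ) : ℝ) = C.card * C.card - C.card := by
    rw [Finset.offDiag_card, Nat.cast_sub (Nat.le_mul_self _)]; push_cast; ring
  have h4 : (2 : ℝ) ≤ C.card := by exact_mod_cast h1
  have h5 : (C.card : ℝ) ^ 2 ≤ 2 * ((A.card : ℝ) ^ 2 * (1 - z) ^ k) := by nlinarith
  have h6 := nb_card G D hdeg C
  have hA : (0 : ℝ) < A.card := by
    have : 0 < A.card := Finset.card_pos.2 ⟨v, hv⟩
    exact_mod_cast this
  have h7 : (D * C.card) ^ 2 < (A.card : ℝ) ^ 2 := by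
    calc (D * C.card) ^ 2 = D ^ 2 * (C.card : ℝ) ^ 2 := by ring
      _ ≤ D ^ 2 * (2 * ((A.card : ℝ) ^ 2 * (1 - z) ^ k)) := mul_le_mul_of_nonneg_left h5 (by positivity)
      _ = (2 * D ^ 2 * (1 - z) ^ k) * (A.card : ℝ) ^ 2 := by ring
      _ < 1 * (A.card : ℝ) ^ 2 := mul_lt_mul_of_pos_right hsmall (by positivity)
      _ = _ := by ring
  have h8 := lt_of_pow_lt_pow_left₀ 2 hA.le h7
  exact_mod_cast lt_of_le_of_lt h6 h8

end LocProof

namespace LocProof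
open Classical

lemma ind_mono {P Q : Prop} (h : P → Q) : ind P ≤ ind Q := by
  by_cases hP : P
  · simp [ind, hP, h hP]
  · have : ind P = 0 := by simp [ind, hP]
    rw [this]; exact ind_nonneg _

lemma sum_ind_le {ι : Type*} (T : Finset ι) (a : ι) : ∑ x ∈ T, ind (a = x) ≤ 1 := by
  by_cases h : a ∈ T
  · rw [Finset.sum_eq_single_of_mem a h]
    · exact ind_le_one _
    · intro b _ hb
      simp [ind, Ne.symm hb]
  · rw [Finset.sum_eq_zero]
    · norm_num
    · intro b hb
      have : a ≠ b := by rintro rfl; exact h hb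
      simp [ind, this]

lemma ex_union {n : ℕ} {p : ℝ} (h0 : 0 ≤ p) (h1 : p ≤ 1) {ι : Type*} (T : Finset ι)
    (B : ι → SimpleGraph (Fin n) → Prop) (x : ι → ℝ)
    (h : ∀ t ∈ T, ex p (fun G => ind (B t G)) ≤ x t) :
    ex p (fun G => ind (∃ t ∈ T, B t G)) ≤ ∑ t ∈ T, x t := by
  calc _ ≤ ex p (fun G => ∑ t ∈ T, ind (B t G)) := by
        refine ex_mono h0 h1 fun G => ?_
        by_cases hG : ∃ t ∈ T, B t G
        · obtain ⟨t, ht, hB⟩ := hG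
          calc ind _ ≤ 1 := ind_le_one _
            _ = ind (B t G) := by simp [ind, hB]
            _ ≤ _ := Finset.single_le_sum (f := fun t => ind (B t G)) (fun _ _ => ind_nonneg _) ht
        · have : ind (∃ t ∈ T, B t G) = 0 := by simp only [ind, hG, if_false]
          rw [this]
          exact Finset.sum_nonneg fun _ _ => ind_nonneg _
    _ ≤ _ := by rw [ex_sum]; exact Finset.sum_le_sum h

lemma ex_noedge {n : ℕ} (p : ℝ) (s : Fin n) (Y : Finset (Fin n)) (hs : s ∉ Y) :
    ex p (fun G => ind (∀ y ∈ Y, ¬ G.Adj s y)) = (1 - p) ^ Y.card := by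
  have h := ex_empty p (Y.image (fun y => s(s, y))) (by
    intro e he
    rw [Finset.mem_image] at he
    obtain ⟨y, hy, rfl⟩ := he
    rw [SimpleGraph.mem_edgeFinset, SimpleGraph.mem_edgeSet, SimpleGraph.top_adj]
    rintro rfl; exact hs hy)
  rw [Finset.card_image_of_injective] at h
  · rw [← h]
    congr 1
    ext G
    simp [SimpleGraph.mem_edgeSet]
  · intro a b hab
    have h2 := Sym2.eq_iff.1 hab
    rcases h2 with h2 | h2
    · exact h2.2
    · rw [h2.2, h2.1]

lemma dep_adj {n : ℕ} {s : Fin n} {Y : Finset (Fin n)} {G G' : SimpleGraph (Fin n)}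
    (h : ∀ e ∈ star s Y, e ∈ G.edgeSet ↔ e ∈ G'.edgeSet) {y : Fin n} (hy : y ∈ Y) :
    G.Adj s y ↔ G'.Adj s y := by
  have := h s(s, y) ⟨y, hy, rfl⟩
  simpa [SimpleGraph.mem_edgeSet] using this

/-- degree bound -/
lemma ev1 {n : ℕ} {p d η : ℝ} (h0 : 0 ≤ p) (h1 : p ≤ 1) (hd : d = p * n) (hη : 0 ≤ η) (hη2 : η ≤ 2)
    (hηd : 1 ≤ η * d) :
    ex (n := n) p (fun G => ind (∃ v ∈ (Finset.univ : Finset (Fin n)),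
      ¬ ((nb G {v}).card : ℝ) ≤ (1 + 2 * η) * d)) ≤ n * Real.exp (-(d * η ^ 2 / 4)) := by
  have := ex_union (n := n) h0 h1 (Finset.univ : Finset (Fin n))
    (fun v G => ¬ ((nb G {v}).card : ℝ) ≤ (1 + 2 * η) * d)
    (fun _ => Real.exp (-(d * η ^ 2 / 4))) ?_
  · simpa using this
  intro v _
  have hc := chern_up (n := n) h0 h1 (Finset.univ.erase v) {v} (by simp) (fun s G => G.Adj s v)
    (by
      intro s hs G G' h
      exact propext (dep_adj h (by simp))) p η hη hη2 h0 (by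
      intro s hs
      have hsv : s ∉ ({v} : Finset (Fin n)) := by simpa using hs
      have e := ex_noedge p s {v} hsv
      have e2 : ∀ G : SimpleGraph (Fin n), ind (G.Adj s v) = 1 - ind (∀ y ∈ ({v} : Finset (Fin n)), ¬ G.Adj s y) := by
        intro G; simp only [ind, Finset.mem_singleton, forall_eq]; split_ifs <;> simp
      simp only [e2]
      rw [ex_sub, ex_one, e]; simp) d (by
      rw [hd, mul_comm]
      apply mul_le_mul_of_nonneg_left _ h0
      exact_mod_cast le_trans (Finset.card_le_univ _) (by simp))
  refine le_trans (ex_mono h0 h1 fun G => ?_) hc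
  refine ind_mono fun ha => ?_
  · by_contra hb
    apply ha
    push Not at hb
    have hsub : nb G {v} ⊆ insert v ((Finset.univ.erase v).filter (fun s => G.Adj s v)) := by
      intro x hx
      rw [mem_nb] at hx
      rw [Finset.mem_insert, Finset.mem_filter]
      rcases hx with h | ⟨a, ha, h⟩
      · left; simpa using h
      · right
        rw [Finset.mem_singleton] at ha
        subst ha
        exact ⟨by simp [h.ne.symm], h.symm⟩
    have h3 := (Finset.card_le_card hsub).trans (Finset.card_insert_le _ _)
    have h4 : ((nb G {v}).card : ℝ) ≤ ((Finset.univ.erase v).filter (fun s => G.Adj s v)).card + 1 := by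
      exact_mod_cast h3
    nlinarith

/-- expansion -/
lemma ev2 {n : ℕ} {p d η : ℝ} (h0 : 0 ≤ p) (h1 : p ≤ 1) (hd : d = p * n) (hη : 0 ≤ η) (hη2 : η ≤ 1 / 2)
    (hd1 : 1 ≤ d) :
    ex (n := n) p (fun G => ind (∃ A ∈ (Finset.univ : Finset (Finset (Fin n))).erase ∅,
      p * A.card ≤ η / 2 ∧ ¬ (1 - 2 * η) * d * A.card ≤ ((nb G A).card : ℝ))) ≤
      (1 + Real.exp (-(d * η ^ 2 / 4))) ^ n - 1 := by
  have := ex_union (n := n) h0 h1 ((Finset.univ : Finset (Finset (Fin n))).erase ∅)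
    (fun A G => p * A.card ≤ η / 2 ∧ ¬ (1 - 2 * η) * d * A.card ≤ ((nb G A).card : ℝ))
    (fun A => (Real.exp (-(d * η ^ 2 / 4))) ^ A.card) ?_
  · refine this.trans (le_of_eq ?_)
    rw [Finset.sum_erase_eq_sub (Finset.mem_univ _)]
    have e := Finset.sum_pow_mul_eq_add_pow (Real.exp (-(d * η ^ 2 / 4))) (1 : ℝ)
      (Finset.univ : Finset (Fin n))
    simp only [one_pow, mul_one, Finset.card_univ, Fintype.card_fin, Finset.powerset_univ] at e
    rw [e]
    simp [add_comm]
  intro A hA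
  by_cases hpA : p * A.card ≤ η / 2
  swap
  · simp only [hpA, false_and]
    have : ex (n := n) p (fun G => ind False) = 0 := by simp [ex, ind]
    rw [this]; positivity
  simp only [hpA, true_and]
  have hn : (0 : ℝ) < n := by
    rcases Nat.eq_zero_or_pos n with h | h
    · subst h; simp at hd; linarith
    · exact_mod_cast h
  set a : ℝ := (A.card : ℝ) with ha
  have ha0 : 0 ≤ a := by positivity
  set q : ℝ := 1 - (1 - p) ^ A.card with hq
  have hq1 : p * a - (p * a) ^ 2 / 2 ≤ q := by
    have h3 : (1 - p) ^ A.card ≤ Real.exp (-(p * a)) := by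
      calc (1 - p) ^ A.card ≤ (Real.exp (-p)) ^ A.card :=
            pow_le_pow_left₀ (by linarith) (by have := Real.add_one_le_exp (-p); linarith) _
        _ = _ := by rw [← Real.exp_nat_mul]; congr 1; rw [ha]; ring
    have h4 : Real.exp (-(p * a)) ≤ 1 - p * a + (p * a) ^ 2 / 2 := by
      have hx : 0 ≤ p * a := by positivity
      set x := p * a
      have h3 : 1 + x + x ^ 2 / 2 ≤ Real.exp x := Real.quadratic_le_exp_of_nonneg hx
      have h4 : Real.exp (-x) * Real.exp x = 1 := by rw [← Real.exp_add]; simp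
      have h5 := Real.exp_pos (-x)
      have h6 : Real.exp (-x) * (1 + x + x ^ 2 / 2) ≤ 1 := by nlinarith
      have h7 : 0 < 1 + x + x ^ 2 / 2 := by positivity
      have h8 : Real.exp (-x) ≤ 1 / (1 + x + x ^ 2 / 2) := by
        rw [le_div_iff₀ h7]; exact h6
      refine h8.trans ?_
      rw [div_le_iff₀ h7]; nlinarith [sq_nonneg (x ^ 2)]
    linarith
  have hN : ((Finset.univ \ A).card : ℝ) = n - a := by
    rw [Finset.card_sdiff_of_subset (Finset.subset_univ _), Nat.cast_sub (Finset.card_le_card (Finset.subset_univ _))]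
    simp [ha]
  have hpa0 : 0 ≤ p * a := by positivity
  have hNq : (1 - η) * (d * a) ≤ (n - a) * q := by
    have h3 : n * (1 - p * a) ≤ n - a := by
      have : a * 1 ≤ a * d := mul_le_mul_of_nonneg_left hd1 ha0
      rw [hd] at this
      nlinarith
    have h4 : 0 ≤ n * (1 - p * a) := mul_nonneg hn.le (by linarith)
    have h5 : p * a * (1 - η / 4) ≤ q := by nlinarith
    have h6 : 0 ≤ p * a * (1 - η / 4) := mul_nonneg hpa0 (by linarith)
    calc (1 - η) * (d * a) = (n * (p * a)) * (1 - η) := by rw [hd]; ring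
      _ ≤ (n * (p * a)) * ((1 - p * a) * (1 - η / 4)) := by
          apply mul_le_mul_of_nonneg_left _ (by positivity)
          nlinarith
      _ = (n * (1 - p * a)) * (p * a * (1 - η / 4)) := by ring
      _ ≤ _ := mul_le_mul h3 h5 h6 (h4.trans h3)
  have hda : 0 ≤ d * a := by positivity
  have hq0 : 0 ≤ q := by
    have : p * a * (1 - η / 4) ≤ q := by nlinarith
    exact le_trans (mul_nonneg hpa0 (by linarith)) this
  have hc := chern_low (n := n) h0 h1 (Finset.univ \ A) A (Finset.sdiff_disjoint)
    (fun s G => ¬ ∀ y ∈ A, ¬ G.Adj s y)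
    (by
      intro s hs G G' h
      simp only [eq_iff_iff, not_iff_not]
      exact forall₂_congr fun y hy => not_congr (dep_adj h hy)) q η hη hq0 (by
      intro s hs
      have hsv : s ∉ A := by simpa using hs
      have e := ex_noedge p s A hsv
      have e2 : ∀ G : SimpleGraph (Fin n), ind (¬ ∀ y ∈ A, ¬ G.Adj s y) =
          1 - ind (∀ y ∈ A, ¬ G.Adj s y) := by
        intro G; simp only [ind]; split_ifs <;> simp
      simp only [e2]
      rw [ex_sub, ex_one, e])
  refine le_trans (ex_mono h0 h1 fun G => ?_) (hc.trans ?_)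
  · refine ind_mono fun ha => ?_
    · by_contra hb
      apply ha
      push Not at hb
      rw [hN] at hb
      have hsub : ((Finset.univ \ A).filter (fun s => ¬ ∀ y ∈ A, ¬ G.Adj s y)) ⊆ nb G A := by
        intro x hx
        rw [Finset.mem_filter] at hx
        push Not at hx
        rw [mem_nb]
        obtain ⟨y, hy, h⟩ := hx.2
        exact Or.inr ⟨y, hy, h.symm⟩
      have h4 : (((Finset.univ \ A).filter (fun s => ¬ ∀ y ∈ A, ¬ G.Adj s y)).card : ℝ) ≤ (nb G A).card := by
        exact_mod_cast Finset.card_le_card hsub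
      push Not at h4
      have h5 : (1 - η) * ((1 - η) * (d * a)) ≤ (1 - η) * ((n - a) * q) :=
        mul_le_mul_of_nonneg_left hNq (by linarith)
      nlinarith [sq_nonneg η, mul_nonneg (sq_nonneg η) hda]
  · rw [hN, ← Real.exp_nat_mul]
    apply Real.exp_le_exp.2
    have h5 : (1 / 2) * (d * a) ≤ (n - a) * q := le_trans (by nlinarith) hNq
    have := mul_le_mul_of_nonneg_right h5 (sq_nonneg η)
    rw [← ha]
    nlinarith

/-- exploration configuration -/
noncomputable def cfg {n : ℕ} (u w : Fin n) (m : ℕ) (G : SimpleGraph (Fin n)) :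
    Finset (Fin n) × Finset (Fin n) × Finset (Fin n) :=
  (bl G {u} m ∪ bl G {w} m, bl G {u} (m + 1) \ (bl G {u} m ∪ bl G {w} m),
    bl G {w} (m + 1) \ (bl G {u} m ∪ bl G {w} m))

def touch {n : ℕ} (D : Finset (Fin n)) : Set (Sym2 (Fin n)) := {e | ∃ x ∈ D, x ∈ e}

lemma nb_congr {n : ℕ} {D A : Finset (Fin n)} (hA : A ⊆ D) {G G' : SimpleGraph (Fin n)}
    (h : ∀ e ∈ touch D, e ∈ G.edgeSet ↔ e ∈ G'.edgeSet) : nb G A = nb G' A := by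
  ext v
  rw [mem_nb, mem_nb]
  refine or_congr Iff.rfl (exists_congr fun a => and_congr_right fun ha => ?_)
  have := h s(a, v) ⟨a, hA ha, by simp⟩
  simpa [SimpleGraph.mem_edgeSet] using this

lemma bl_congr {n : ℕ} {D A : Finset (Fin n)} {G G' : SimpleGraph (Fin n)} (m : ℕ)
    (hA : bl G A m ⊆ D)
    (h : ∀ e ∈ touch D, e ∈ G.edgeSet ↔ e ∈ G'.edgeSet) :
    ∀ j ≤ m + 1, bl G A j = bl G' A j := by
  intro j
  induction j with
  | zero => intro _; rfl
  | succ j ih =>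
    intro hj
    rw [bl_succ, bl_succ, ← ih (by omega)]
    exact nb_congr ((bl_mono G A (by omega : j ≤ m)).trans hA) h

lemma cfg_dep {n : ℕ} (u w : Fin n) (m : ℕ) (x : Finset (Fin n) × Finset (Fin n) × Finset (Fin n)) :
    Dep (touch x.1) (fun G => cfg u w m G = x) := by
  have key : ∀ G G' : SimpleGraph (Fin n), (∀ e ∈ touch x.1, e ∈ G.edgeSet ↔ e ∈ G'.edgeSet) →
      cfg u w m G = x → cfg u w m G' = x := by
    intro G G' h hx
    rw [← hx]
    have hD : bl G {u} m ∪ bl G {w} m = x.1 := by rw [← hx]; rfl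
    have h1 := bl_congr (A := {u}) m (by rw [← hD]; exact Finset.subset_union_left) h
    have h2 := bl_congr (A := {w}) m (by rw [← hD]; exact Finset.subset_union_right) h
    unfold cfg
    rw [h1 m (by omega), h2 m (by omega), h1 (m + 1) le_rfl, h2 (m + 1) le_rfl]
  intro G G' h
  exact propext ⟨key G G' h, key G' G fun e he => (h e he).symm⟩

def gsel {n : ℕ} (x : Finset (Fin n) × Finset (Fin n) × Finset (Fin n)) (s : Fin n)
    (G : SimpleGraph (Fin n)) : Prop :=
  (∀ y ∈ x.2.1, ¬ G.Adj s y) ∧ ¬ ∀ y ∈ x.2.2, ¬ G.Adj s y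

noncomputable def gcount {n : ℕ} (x : Finset (Fin n) × Finset (Fin n) × Finset (Fin n))
    (G : SimpleGraph (Fin n)) : ℝ :=
  (((Finset.univ \ (x.1 ∪ (x.2.1 ∪ x.2.2))).filter (fun s => gsel x s G)).card : ℝ)

structure Cfg {n : ℕ} (x : Finset (Fin n) × Finset (Fin n) × Finset (Fin n)) (bP bQ bN : ℝ) : Prop where
  d1 : Disjoint x.1 x.2.1
  d2 : Disjoint x.1 x.2.2
  hP : (x.2.1.card : ℝ) ≤ bP
  hQ : bQ ≤ ((x.2.2 \ x.2.1).card : ℝ)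
  hN : bN ≤ ((Finset.univ \ (x.1 ∪ (x.2.1 ∪ x.2.2))).card : ℝ)

lemma ev3 {n : ℕ} {p δ bP bQ bN q : ℝ} (h0 : 0 ≤ p) (h1 : p ≤ 1) (hδ : 0 ≤ δ) (hδ1 : δ ≤ 1)
    (hq0 : 0 ≤ q)
    (hq : ∀ a b : ℕ, (a : ℝ) ≤ bP → bQ ≤ b → q ≤ (1 - p) ^ a * (1 - (1 - p) ^ b))
    (u w : Fin n) (m : ℕ) :
    ex p (fun G => ind (Cfg (cfg u w m G) bP bQ bN ∧ gcount (cfg u w m G) G ≤ (1 - δ) * (bN * q))) ≤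
      Real.exp (-(bN * q * δ ^ 2 / 2)) := by
  set E := Real.exp (-(bN * q * δ ^ 2 / 2)) with hE
  calc _ ≤ ex p (fun G => ∑ x ∈ Finset.univ.filter
          (fun x : Finset (Fin n) × Finset (Fin n) × Finset (Fin n) => Cfg x bP bQ bN),
          ind (cfg u w m G = x) * ind (gcount x G ≤ (1 - δ) * (bN * q))) := by
        refine ex_mono h0 h1 fun G => ?_
        by_cases hG : Cfg (cfg u w m G) bP bQ bN ∧ gcount (cfg u w m G) G ≤ (1 - δ) * (bN * q)
        · refine le_trans ?_ (Finset.single_le_sum (a := cfg u w m G)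
            (fun x _ => mul_nonneg (ind_nonneg _) (ind_nonneg _)) ?_)
          · simp [ind, hG]
          · simp [hG.1]
        · have : ind (Cfg (cfg u w m G) bP bQ bN ∧ gcount (cfg u w m G) G ≤ (1 - δ) * (bN * q)) = 0 := by
            simp only [ind, hG, if_false]
          rw [this]
          exact Finset.sum_nonneg fun x _ => mul_nonneg (ind_nonneg _) (ind_nonneg _)
    _ = ∑ x ∈ Finset.univ.filter
          (fun x : Finset (Fin n) × Finset (Fin n) × Finset (Fin n) => Cfg x bP bQ bN),
          ex p (fun G => ind (cfg u w m G = x) * ind (gcount x G ≤ (1 - δ) * (bN * q))) := ex_sum _ _ _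
    _ ≤ ∑ x ∈ Finset.univ.filter
          (fun x : Finset (Fin n) × Finset (Fin n) × Finset (Fin n) => Cfg x bP bQ bN),
          ex p (fun G => ind (cfg u w m G = x)) * E := by
        refine Finset.sum_le_sum fun x hx => ?_
        have hx : Cfg x bP bQ bN := by simpa using hx
        obtain ⟨d1, d2, hP, hQ, hN⟩ := hx
        set Y := x.2.1 ∪ x.2.2 with hY
        set T := Finset.univ \ (x.1 ∪ Y) with hT
        have hTs : ∀ s ∈ T, s ∉ x.1 ∧ s ∉ Y := by
          intro s hs
          simp only [hT, Finset.mem_sdiff, Finset.mem_univ, true_and, Finset.mem_union] at hs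
          tauto
        have hTY : Disjoint T Y := Finset.disjoint_left.2 fun s hs => (hTs s hs).2
        have hdep : ∀ s ∈ T, Dep (star s Y) (gsel x s) := by
          intro s hs G G' h
          unfold gsel
          apply propext
          refine and_congr (forall₂_congr fun y hy => not_congr (dep_adj h ?_))
            (not_congr (forall₂_congr fun y hy => not_congr (dep_adj h ?_)))
          · rw [hY]; exact Finset.mem_union_left _ hy
          · rw [hY]; exact Finset.mem_union_right _ hy
        rw [ex_indep p (F := touch x.1) (F' := ⋃ s ∈ T, star s Y)]
        · apply mul_le_mul_of_nonneg_left _ (ex_nonneg h0 h1 fun _ => ind_nonneg _)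
          have hc := chern_low h0 h1 T Y hTY (gsel x) hdep q δ hδ hq0 (by
            intro s hs
            have e1 := ex_noedge p s Y (hTs s hs).2
            have e2 := ex_noedge p s x.2.1 (fun h => (hTs s hs).2 (Finset.mem_union_left _ h))
            have e3 : ∀ G : SimpleGraph (Fin n), ind (gsel x s G) =
                ind (∀ y ∈ x.2.1, ¬ G.Adj s y) - ind (∀ y ∈ Y, ¬ G.Adj s y) := by
              intro G
              have hYY : (∀ y ∈ Y, ¬ G.Adj s y) ↔
                  (∀ y ∈ x.2.1, ¬ G.Adj s y) ∧ (∀ y ∈ x.2.2, ¬ G.Adj s y) := by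
                rw [hY]; exact Finset.forall_mem_union
              unfold gsel ind
              rw [hYY]
              generalize (∀ y ∈ x.2.1, ¬ G.Adj s y) = a
              generalize (∀ y ∈ x.2.2, ¬ G.Adj s y) = b
              by_cases ha : a <;> by_cases hb : b <;> simp [ha, hb]
            simp only [e3]
            rw [ex_sub, e1, e2]
            have hcard : Y.card = x.2.1.card + (x.2.2 \ x.2.1).card := by
              rw [hY, ← Finset.union_sdiff_self_eq_union, Finset.card_union_of_disjoint Finset.disjoint_sdiff]
            rw [hcard, pow_add]
            have := hq _ _ hP hQ
            linarith)
          refine le_trans (ex_mono h0 h1 fun G => ?_) (hc.trans ?_)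
          · refine ind_mono fun ha => ?_
            · refine le_trans ha ?_
              apply mul_le_mul_of_nonneg_left _ (by linarith)
              exact mul_le_mul_of_nonneg_right hN hq0
          · rw [hE]
            apply Real.exp_le_exp.2
            have h3 := mul_le_mul_of_nonneg_right hN hq0
            have := mul_le_mul_of_nonneg_right h3 (sq_nonneg δ)
            linarith
        · rw [Set.disjoint_left]
          rintro e ⟨a, ha, hae⟩ he
          simp only [Set.mem_iUnion] at he
          obtain ⟨s, hs, y, hy, rfl⟩ := he
          rw [Sym2.mem_iff] at hae
          rcases hae with rfl | rfl
          · exact (hTs _ hs).1 ha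
          · rw [hY, Finset.mem_union] at hy
            rcases hy with hy | hy
            · exact Finset.disjoint_left.1 d1 ha hy
            · exact Finset.disjoint_left.1 d2 ha hy
        · exact (cfg_dep u w m x).comp ind
        · intro G G' h
          have : T.filter (fun s => gsel x s G) = T.filter (fun s => gsel x s G') := by
            refine Finset.filter_congr fun s hs => ?_
            exact iff_of_eq (hdep s hs G G' fun e he => h e (Set.mem_biUnion hs he))
          show ind (((T.filter (fun s => gsel x s G)).card : ℝ) ≤ _) =
            ind (((T.filter (fun s => gsel x s G')).card : ℝ) ≤ _)
          rw [this]
    _ = ex p (fun G => ∑ x ∈ Finset.univ.filter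
          (fun x : Finset (Fin n) × Finset (Fin n) × Finset (Fin n) => Cfg x bP bQ bN),
          ind (cfg u w m G = x)) * E := by rw [ex_sum, Finset.sum_mul]
    _ ≤ 1 * E := by
        apply mul_le_mul_of_nonneg_right _ (Real.exp_pos _).le
        rw [← ex_one (n := n) p]
        refine ex_mono h0 h1 fun G => ?_
        exact sum_ind_le _ _
    _ = E := one_mul _

end LocProof

namespace LocProof
open Classical

lemma cfg_good {n : ℕ} {p d η δ : ℝ} {m : ℕ} (h0 : 0 ≤ p) (hη : 0 ≤ η) (hη2 : η ≤ 1 / 2)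
    (hd1 : 1 ≤ d)
    (h2 : 2 * p * ((1 + 2 * η) * d) ^ m ≤ η / 2)
    (h3 : ((1 + 2 * η) * d) ^ (m + 1) ≤ (1 + δ) * d ^ (m + 1))
    (h4 : (1 - δ) * d ^ (m + 1) ≤ ((1 - 2 * η) * d) ^ (m + 1))
    (h5 : 2 * ((1 + 2 * η) * d) ^ m ≤ δ * d ^ (m + 1))
    (h6 : 2 * ((1 + 2 * η) * d) ^ (m + 1) ≤ δ * n)
    (G : SimpleGraph (Fin n)) (hE1 : ∀ v, ((nb G {v}).card : ℝ) ≤ (1 + 2 * η) * d)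
    (hE2 : ∀ A : Finset (Fin n), A ≠ ∅ → p * A.card ≤ η / 2 →
      (1 - 2 * η) * d * A.card ≤ ((nb G A).card : ℝ))
    (u w : Fin n) (huw : u ≠ w) :
    Cfg (cfg u w m G) (((1 + 2 * η) * d) ^ (m + 1)) ((1 - 4 * δ) * d ^ (m + 1)) ((1 - δ) * n) := by
  set L := (1 + 2 * η) * d with hL
  have hL1 : 1 ≤ L := by nlinarith
  have hL0 : 0 ≤ L := by linarith
  have hc1 : ∀ v j, ((bl G {v} j).card : ℝ) ≤ L ^ j := by
    intro v j
    have := bl_card G L hL0 hE1 {v} j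
    simpa using this
  have hc2 : ∀ j, ((bl G ({u} ∪ {w}) j).card : ℝ) ≤ 2 * L ^ j := by
    intro j
    rw [bl_union]
    have : ((bl G {u} j ∪ bl G {w} j).card : ℝ) ≤ (bl G {u} j).card + (bl G {w} j).card := by
      exact_mod_cast Finset.card_union_le _ _
    linarith [hc1 u j, hc1 w j]
  have hlow : ∀ j ≤ m + 1, 2 * ((1 - 2 * η) * d) ^ j ≤ ((bl G ({u} ∪ {w}) j).card : ℝ) := by
    intro j
    induction j with
    | zero =>
      intro _
      have : ({u} ∪ {w} : Finset (Fin n)).card = 2 := by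
        rw [Finset.card_union_of_disjoint (by simpa using huw)]; simp
      rw [bl_zero, this]; norm_num
    | succ j ih =>
      intro hj
      have ih := ih (by omega)
      have hLj : L ^ j ≤ L ^ m := pow_le_pow_right₀ hL1 (by omega)
      have hne : bl G ({u} ∪ {w}) j ≠ ∅ := by
        have : u ∈ bl G ({u} ∪ {w}) j := bl_mono G _ (Nat.zero_le j) (by simp [bl_zero])
        exact Finset.ne_empty_of_mem this
      have hs : p * (bl G ({u} ∪ {w}) j).card ≤ η / 2 := by
        refine le_trans (mul_le_mul_of_nonneg_left ((hc2 j).trans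
          (mul_le_mul_of_nonneg_left hLj (by norm_num))) h0) ?_
        linarith
      have := hE2 _ hne hs
      rw [bl_succ]
      refine le_trans ?_ this
      rw [pow_succ]
      have hx : 0 ≤ (1 - 2 * η) * d := mul_nonneg (by linarith) (by linarith)
      calc 2 * (((1 - 2 * η) * d) ^ j * ((1 - 2 * η) * d)) =
          ((1 - 2 * η) * d) * (2 * ((1 - 2 * η) * d) ^ j) := by ring
        _ ≤ _ := mul_le_mul_of_nonneg_left ih hx
  have hsubD : bl G {u} m ∪ bl G {w} m ⊆ bl G {u} (m + 1) ∪ bl G {w} (m + 1) :=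
    Finset.union_subset_union (bl_mono G _ (by omega)) (bl_mono G _ (by omega))
  constructor
  · exact Finset.disjoint_sdiff
  · exact Finset.disjoint_sdiff
  · refine le_trans ?_ (hc1 u (m + 1))
    exact_mod_cast Finset.card_le_card Finset.sdiff_subset
  · have hR := hlow (m + 1) le_rfl
    have hsub : bl G ({u} ∪ {w}) (m + 1) ⊆ ((cfg u w m G).2.2 \ (cfg u w m G).2.1) ∪
        (bl G ({u} ∪ {w}) m ∪ bl G {u} (m + 1)) := by
      intro x hx
      rw [bl_union] at hx ⊢
      simp only [cfg, Finset.mem_union, Finset.mem_sdiff] at hx ⊢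
      tauto
    have hcard : ((bl G ({u} ∪ {w}) (m + 1)).card : ℝ) ≤
        ((cfg u w m G).2.2 \ (cfg u w m G).2.1).card +
        ((bl G ({u} ∪ {w}) m).card + (bl G {u} (m + 1)).card) := by
      have h1 := (Finset.card_le_card hsub).trans (Finset.card_union_le _ _)
      have h2 := Finset.card_union_le (bl G ({u} ∪ {w}) m) (bl G {u} (m + 1))
      exact_mod_cast h1.trans (by omega)
    have := hc2 m
    have := hc1 u (m + 1)
    linarith
  · have hsub : (cfg u w m G).1 ∪ ((cfg u w m G).2.1 ∪ (cfg u w m G).2.2) ⊆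
        bl G ({u} ∪ {w}) (m + 1) := by
      rw [bl_union]
      intro x hx
      have hh := @hsubD x
      simp only [cfg, Finset.mem_union, Finset.mem_sdiff] at hx hh ⊢
      tauto
    have h1 := Finset.card_le_card hsub
    have h2 : (((cfg u w m G).1 ∪ ((cfg u w m G).2.1 ∪ (cfg u w m G).2.2)).card : ℝ) ≤ δ * n := by
      refine le_trans ?_ ((hc2 (m + 1)).trans h6)
      exact_mod_cast h1
    rw [Finset.card_sdiff_of_subset (Finset.subset_univ _),
      Nat.cast_sub (Finset.card_le_card (Finset.subset_univ _))]
    simp only [Finset.card_univ, Fintype.card_fin]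
    linarith

noncomputable def fset {n : ℕ} (u w : Fin n) (m : ℕ) (G : SimpleGraph (Fin n)) : Finset (Fin n) :=
  (cfg u w m G).2.2 \ (cfg u w m G).2.1

noncomputable def gset {n : ℕ} (u w : Fin n) (m : ℕ) (G : SimpleGraph (Fin n)) : Finset (Fin n) :=
  (Finset.univ \ ((cfg u w m G).1 ∪ ((cfg u w m G).2.1 ∪ (cfg u w m G).2.2))).filter
    (fun s => gsel (cfg u w m G) s G)

lemma fset_prop {n : ℕ} {u w : Fin n} {m : ℕ} {G : SimpleGraph (Fin n)} {s : Fin n}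
    (hs : s ∈ fset u w m G) :
    s ∈ bl G {w} (m + 1) ∧ s ∉ bl G {u} (m + 1) ∧ s ≠ w := by
  simp only [fset, cfg, Finset.mem_sdiff, Finset.mem_union] at hs
  refine ⟨hs.1.1, fun h => hs.2 ⟨h, hs.1.2⟩, ?_⟩
  rintro rfl
  apply hs.1.2
  right
  exact bl_mono G _ (Nat.zero_le m) (by simp [bl_zero])

lemma gset_prop {n : ℕ} {u w : Fin n} {m : ℕ} {G : SimpleGraph (Fin n)} {s : Fin n}
    (hs : s ∈ gset u w m G) :
    s ∉ bl G {w} (m + 1) ∧ s ∉ bl G {u} (m + 1) ∧ s ∈ bl G {w} (m + 2) ∧ s ∉ bl G {u} (m + 2) ∧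
      s ≠ w := by
  simp only [gset, Finset.mem_filter, Finset.mem_sdiff, Finset.mem_univ, true_and] at hs
  obtain ⟨h1, h2, h3⟩ := hs
  simp only [cfg, Finset.mem_union, Finset.mem_sdiff] at h1 h2 h3
  have hw : s ∉ bl G {w} (m + 1) := by tauto
  have hu : s ∉ bl G {u} (m + 1) := by tauto
  refine ⟨hw, hu, ?_, ?_, ?_⟩
  · push Not at h3
    obtain ⟨y, hy, hadj⟩ := h3
    rw [bl_succ, mem_nb]
    exact Or.inr ⟨y, hy.1, hadj.symm⟩
  · intro h
    rw [bl_succ, mem_nb] at h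
    rcases h with h | ⟨a, ha, hadj⟩
    · exact hu h
    · by_cases hD : a ∈ bl G {u} m ∨ a ∈ bl G {w} m
      · rcases hD with hD | hD
        · apply hu; rw [bl_succ, mem_nb]; exact Or.inr ⟨a, hD, hadj⟩
        · apply hw; rw [bl_succ, mem_nb]; exact Or.inr ⟨a, hD, hadj⟩
      · exact h2 a ⟨ha, hD⟩ hadj.symm
  · rintro rfl
    exact hw (bl_mono G _ (Nat.zero_le _) (by simp [bl_zero]))

lemma dist_count {n : ℕ} {u w : Fin n} {m : ℕ} {G : SimpleGraph (Fin n)} :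
    (fset u w m G).card + (gset u w m G).card + ((fset w u m G).card + (gset w u m G).card) ≤
      (Finset.univ.filter (fun s => G.dist s u ≠ G.dist s w)).card := by
  have d1 : ∀ u w : Fin n, Disjoint (fset u w m G) (gset u w m G) := fun u w =>
    Finset.disjoint_left.2 fun s h1 h2 => (gset_prop h2).1 (fset_prop h1).1
  rw [← Finset.card_union_of_disjoint (d1 u w), ← Finset.card_union_of_disjoint (d1 w u),
    ← Finset.card_union_of_disjoint]
  · apply Finset.card_le_card
    intro s hs
    rw [Finset.mem_filter]
    refine ⟨Finset.mem_univ _, ?_⟩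
    simp only [Finset.mem_union] at hs
    rcases hs with (h | h) | (h | h)
    · have := fset_prop h
      exact (dist_ne G w u s _ this.1 this.2.1 this.2.2).symm
    · have := gset_prop h
      exact (dist_ne G w u s _ this.2.2.1 this.2.2.2.1 this.2.2.2.2).symm
    · have := fset_prop h
      exact dist_ne G u w s _ this.1 this.2.1 this.2.2
    · have := gset_prop h
      exact dist_ne G u w s _ this.2.2.1 this.2.2.2.1 this.2.2.2.2
  · rw [Finset.disjoint_left]
    intro s h1 h2
    rw [Finset.mem_union] at h1 h2
    rcases h1 with h1 | h1 <;> rcases h2 with h2 | h2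
    · exact (fset_prop h1).2.1 (fset_prop h2).1
    · exact (gset_prop h2).2.1 (fset_prop h1).1
    · exact (gset_prop h1).2.1 (fset_prop h2).1
    · exact (gset_prop h1).2.2.2.1 (gset_prop h2).2.2.1

def goodSet (n : ℕ) (z D : ℝ) : Set (SimpleGraph (Fin n)) :=
  {G | (∀ u w : Fin n, u ≠ w → z ≤
      ((Finset.univ.filter (fun s => G.dist s u ≠ G.dist s w)).card : ℝ)) ∧
    ∀ v, ((nb G {v}).card : ℝ) ≤ D}

lemma core {n : ℕ} {p d η δ q : ℝ} {m : ℕ} (h0 : 0 ≤ p) (h1 : p ≤ 1) (hd : d = p * n)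
    (hη : 0 ≤ η) (hη2 : η ≤ 1 / 2)
    (hd1 : 1 ≤ d) (hηd : 1 ≤ η * d) (hδ : 0 ≤ δ) (hδ1 : δ ≤ 1) (hq0 : 0 ≤ q)
    (h2 : 2 * p * ((1 + 2 * η) * d) ^ m ≤ η / 2)
    (h3 : ((1 + 2 * η) * d) ^ (m + 1) ≤ (1 + δ) * d ^ (m + 1))
    (h4 : (1 - δ) * d ^ (m + 1) ≤ ((1 - 2 * η) * d) ^ (m + 1))
    (h5 : 2 * ((1 + 2 * η) * d) ^ m ≤ δ * d ^ (m + 1))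
    (h6 : 2 * ((1 + 2 * η) * d) ^ (m + 1) ≤ δ * n)
    (hq : ∀ a b : ℕ, (a : ℝ) ≤ ((1 + 2 * η) * d) ^ (m + 1) → (1 - 4 * δ) * d ^ (m + 1) ≤ b →
      q ≤ (1 - p) ^ a * (1 - (1 - p) ^ b)) :
    1 - (n * Real.exp (-(d * η ^ 2 / 4)) + ((1 + Real.exp (-(d * η ^ 2 / 4))) ^ n - 1) +
      n ^ 2 * Real.exp (-((1 - δ) * n * q * δ ^ 2 / 2))) ≤
    gnpProb n p (goodSet n (2 * ((1 - 4 * δ) * d ^ (m + 1) + (1 - δ) * ((1 - δ) * n * q)))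
      ((1 + 2 * η) * d)) := by
  rw [gnpProb_eq]
  set b1 : SimpleGraph (Fin n) → Prop := fun G => ∃ v ∈ (Finset.univ : Finset (Fin n)),
      ¬ ((nb G {v}).card : ℝ) ≤ (1 + 2 * η) * d with hb1
  set b2 : SimpleGraph (Fin n) → Prop := fun G =>
    ∃ A ∈ (Finset.univ : Finset (Finset (Fin n))).erase ∅,
      p * A.card ≤ η / 2 ∧ ¬ (1 - 2 * η) * d * A.card ≤ ((nb G A).card : ℝ) with hb2
  set b3 : SimpleGraph (Fin n) → Prop := fun G => ∃ x ∈ (Finset.univ : Finset (Fin n × Fin n)),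
    (Cfg (cfg x.1 x.2 m G) (((1 + 2 * η) * d) ^ (m + 1)) ((1 - 4 * δ) * d ^ (m + 1)) ((1 - δ) * n) ∧
      gcount (cfg x.1 x.2 m G) G ≤ (1 - δ) * ((1 - δ) * n * q)) with hb3
  have e1 : ex p (fun G => ind (b1 G)) ≤ _ := ev1 h0 h1 hd hη (by linarith) hηd
  have e2 : ex p (fun G => ind (b2 G)) ≤ _ := ev2 h0 h1 hd hη hη2 hd1
  have e3 : ex p (fun G => ind (b3 G)) ≤ _ := ex_union h0 h1 _ _ _
    (fun x _ => ev3 h0 h1 hδ hδ1 hq0 hq x.1 x.2 m)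
  rw [Finset.sum_const, Finset.card_univ, Fintype.card_prod, Fintype.card_fin, nsmul_eq_mul,
    Nat.cast_mul, ← sq] at e3
  set gd : SimpleGraph (Fin n) → Prop := fun G => G ∈ goodSet n
    (2 * ((1 - 4 * δ) * d ^ (m + 1) + (1 - δ) * ((1 - δ) * n * q))) ((1 + 2 * η) * d) with hgd
  have hcover : ∀ G, b1 G ∨ b2 G ∨ b3 G ∨ gd G := by
    intro G
    by_contra hcon
    push Not at hcon
    obtain ⟨n1, n2, n3, n4⟩ := hcon
    apply n4
    simp only [hb1, not_exists, not_and, not_not] at n1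
    have n1 : ∀ v, ((nb G {v}).card : ℝ) ≤ (1 + 2 * η) * d := fun v => n1 v (Finset.mem_univ _)
    refine ⟨?_, n1⟩
    have hcf : ∀ u w : Fin n, u ≠ w → (1 - 4 * δ) * d ^ (m + 1) + (1 - δ) * ((1 - δ) * n * q) ≤
        (fset u w m G).card + (gset u w m G).card := by
      intro u w huw
      have hC := cfg_good (m := m) h0 hη hη2 hd1 h2 h3 h4 h5 h6 G n1 (by
        intro A hA hpA
        by_contra hc
        exact n2 ⟨A, by simp [hA], hpA, hc⟩) u w huw
      have hg : ¬ gcount (cfg u w m G) G ≤ (1 - δ) * ((1 - δ) * n * q) := fun hc =>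
        n3 ⟨(u, w), Finset.mem_univ _, hC, hc⟩
      push Not at hg
      have h7 : (1 - 4 * δ) * d ^ (m + 1) ≤ (fset u w m G).card := hC.hQ
      have h8 : gcount (cfg u w m G) G = (gset u w m G).card := rfl
      rw [h8] at hg
      linarith
    intro u w huw
    have h9 := dist_count (u := u) (w := w) (m := m) (G := G)
    have h10 : ((fset u w m G).card : ℝ) + (gset u w m G).card + ((fset w u m G).card + (gset w u m G).card) ≤
      (Finset.univ.filter (fun s => G.dist s u ≠ G.dist s w)).card := by exact_mod_cast h9
    have := hcf u w huw
    have := hcf w u huw.symm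
    linarith
  have hsum : (1 : ℝ) ≤ ex p (fun G => ((ind (b1 G) + ind (b2 G)) + ind (b3 G)) + ind (gd G)) := by
    rw [← ex_one (n := n) p]
    refine ex_mono h0 h1 fun G => ?_
    have i1 := ind_nonneg (b1 G)
    have i2 := ind_nonneg (b2 G)
    have i3 := ind_nonneg (b3 G)
    have i4 := ind_nonneg (gd G)
    have it : ∀ P : Prop, P → ind P = 1 := fun P h => by simp [ind, h]
    rcases hcover G with h | h | h | h <;> have := it _ h <;> linarith
  rw [ex_add, ex_add, ex_add] at hsum
  linarith

lemma gnpProb_le_one {n : ℕ} {p : ℝ} (h0 : 0 ≤ p) (h1 : p ≤ 1) (A : Set (SimpleGraph (Fin n))) :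
    gnpProb n p A ≤ 1 := by
  rw [gnpProb_eq, ← ex_one (n := n) p]
  exact ex_mono h0 h1 fun G => ind_le_one _

lemma gnpProb_mono {n : ℕ} {p : ℝ} (h0 : 0 ≤ p) (h1 : p ≤ 1) {A B : Set (SimpleGraph (Fin n))}
    (h : A ⊆ B) : gnpProb n p A ≤ gnpProb n p B := by
  rw [gnpProb_eq, gnpProb_eq]
  exact ex_mono h0 h1 fun G => ind_mono fun hA => h hA

end LocProof

namespace LocProof
open Classical

lemma pow_upper {x : ℝ} (hx : 0 ≤ x) (k : ℕ) (h : x * k ≤ 1) : (1 + x) ^ k ≤ 1 + 2 * (x * k) := by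
  have h1 : (1 + x) ^ k ≤ Real.exp (x * k) := by
    rw [mul_comm, Real.exp_nat_mul]
    exact pow_le_pow_left₀ (by linarith) (by linarith [Real.add_one_le_exp x]) k
  have h0 : 0 ≤ x * k := by positivity
  have h2 := Real.abs_exp_sub_one_le (x := x * k) (by rwa [abs_of_nonneg h0])
  rw [abs_of_nonneg h0] at h2
  linarith [(abs_le.1 h2).2]

lemma pow_lower {x : ℝ} (hx : x ≤ 1) (k : ℕ) : 1 - x * k ≤ (1 - x) ^ k := by
  have := one_add_mul_le_pow (a := -x) (by linarith) k
  rw [← sub_eq_add_neg] at this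
  linarith

lemma one_sub_pow_lower {p : ℝ} (h0 : 0 ≤ p) (h1 : p ≤ 1 / 2) (a : ℕ) :
    Real.exp (-((1 + 2 * p) * (p * a))) ≤ (1 - p) ^ a := by
  have h : Real.exp (-((1 + 2 * p) * p)) ≤ 1 - p := by
    have h2 : (1 - p) * (1 + (1 + 2 * p) * p) ≥ 1 := by nlinarith [mul_nonneg h0 h0]
    have h3 := Real.add_one_le_exp ((1 + 2 * p) * p)
    rw [Real.exp_neg]
    apply inv_le_of_inv_le₀ (by linarith)
    rw [inv_le_iff_one_le_mul₀ (by linarith)]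
    nlinarith
  calc Real.exp (-((1 + 2 * p) * (p * a))) = Real.exp (-((1 + 2 * p) * p)) ^ a := by
        rw [← Real.exp_nat_mul]; congr 1; ring
    _ ≤ _ := pow_le_pow_left₀ (Real.exp_pos _).le h a

lemma one_sub_pow_upper {p : ℝ} (h1 : p ≤ 1) (b : ℕ) :
    (1 - p) ^ b ≤ Real.exp (-(p * b)) := by
  calc (1 - p) ^ b ≤ Real.exp (-p) ^ b :=
        pow_le_pow_left₀ (by linarith) (by linarith [Real.add_one_le_exp (-p)]) b
    _ = _ := by rw [← Real.exp_nat_mul]; congr 1; ring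

set_option maxHeartbeats 1600000 in
lemma per_n {n m : ℕ} {p d η δ ε c B Λ l : ℝ} (hn : 1 ≤ n) (hΛ : Λ = Real.log n)
    (hl : l = Real.log d)
    (hdp : d = p * n) (hcd : c = d ^ (m + 2) / n)
    (hε : 0 < ε) (hε1 : ε ≤ 1) (hδε : δ = ε / 20) (hd1 : 1 ≤ d) (hη : 0 ≤ η)
    (hηd : d * η ^ 2 = 12 * Λ) (H0 : 1 ≤ Λ) (H1 : Λ * η ≤ δ / 64)
    (H2 : (m + 2 : ℕ) * l ≤ 2 * Λ) (hl1 : 1 ≤ l) (hc2 : c ≤ 2 * l)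
    (H3 : 4 ≤ δ * d) (H3' : 4 * c ≤ δ * d) (H4 : c ^ 2 / d ≤ δ / 8)
    (H5 : Real.exp (-(c / 2)) ≤ δ)
    (H6 : 3 * Λ ≤ (1 - δ) * n * ((1 - δ) ^ 2 * Real.exp (-c)) * δ ^ 2 / 2)
    (H7 : (1 - δ) * (Real.exp B + 1) ≤ c * Real.exp c / d + 1)
    (H8 : 2 ≤ Real.log Λ)
    (H9 : (1 + ε) * (l + 2 * Real.log Λ) * (Real.exp c / (Real.exp B + 1)) ≤ n)
    (H10 : 2 * (c / d + Real.exp (-c)) ≤ 1) :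
    1 - (n * Real.exp (-(3 * Λ)) + ((1 + Real.exp (-(3 * Λ))) ^ n - 1) +
      n ^ 2 * Real.exp (-(3 * Λ))) ≤
    gnpProb n p {G : SimpleGraph (Fin n) | (localizationNumber G : ℝ) ≤
      (1 + ε) * (l + 2 * Real.log Λ) * (Real.exp c / (Real.exp B + 1))} := by
  have hδ0 : 0 < δ := by rw [hδε]; positivity
  have hδ1 : δ ≤ 1 / 20 := by rw [hδε]; linarith
  have hn0 : (0 : ℝ) < n := by exact_mod_cast hn
  have hd0 : 0 < d := by linarith
  have hp0 : 0 < p := by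
    by_contra h
    have : p * n ≤ 0 := mul_nonpos_of_nonpos_of_nonneg (by linarith) hn0.le
    linarith
  have hc0 : 0 < c := by rw [hcd]; positivity
  have hpd : p = d / n := by rw [hdp]; field_simp
  have hpow1 : p * d ^ (m + 1) = c := by rw [hcd, hpd]; field_simp; ring
  have hpow0 : p * d ^ m = c / d := by rw [← hpow1]; field_simp; ring
  have hpowc : d ^ (m + 1) = c / d * n := by rw [hcd]; field_simp; ring
  have hpcd : p ≤ c / d := by
    rw [← hpow0]
    exact le_mul_of_one_le_right hp0.le (one_le_pow₀ hd1)
  have hp20 : p ≤ 1 / 20 := by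
    have : c / d ≤ δ / 4 := by rw [div_le_iff₀ hd0]; linarith
    linarith
  have hpc : p * c ≤ δ / 8 := by
    calc p * c ≤ c / d * c := by gcongr
      _ = c ^ 2 / d := by ring
      _ ≤ _ := H4
  have hη64 : η ≤ δ / 64 := (le_mul_of_one_le_left hη H0).trans H1
  have hmΛ : ((m + 2 : ℕ) : ℝ) ≤ 2 * Λ := by
    have : (0 : ℝ) ≤ ((m + 2 : ℕ) : ℝ) := by positivity
    exact (le_mul_of_one_le_right this hl1).trans H2
  have hm1 : ((m + 1 : ℕ) : ℝ) ≤ ((m + 2 : ℕ) : ℝ) := by push_cast; linarith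
  have hm0 : ((m : ℕ) : ℝ) ≤ ((m + 2 : ℕ) : ℝ) := by push_cast; linarith
  have hmη : 2 * η * ((m + 2 : ℕ) : ℝ) ≤ δ / 16 := by
    have : η * ((m + 2 : ℕ) : ℝ) ≤ η * (2 * Λ) := by gcongr
    linarith
  have hmη1 : 2 * η * ((m + 1 : ℕ) : ℝ) ≤ δ / 16 :=
    le_trans (by gcongr) hmη
  have hmη0 : 2 * η * ((m : ℕ) : ℝ) ≤ δ / 16 :=
    le_trans (by gcongr) hmη
  have hU1 := pow_upper (x := 2 * η) (by linarith) (m + 1) (by linarith)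
  have hU0 := pow_upper (x := 2 * η) (by linarith) m (by linarith)
  have hL1 := pow_lower (x := 2 * η) (by linarith) (m + 1)
  have hcη : c * (2 * (2 * η * ((m + 1 : ℕ) : ℝ))) ≤ δ / 4 := by
    have h1 : c * ((m + 1 : ℕ) : ℝ) ≤ 4 * Λ := by
      calc c * ((m + 1 : ℕ) : ℝ) ≤ 2 * l * ((m + 2 : ℕ) : ℝ) := by gcongr
        _ ≤ _ := by linarith
    have h2 : η * (c * ((m + 1 : ℕ) : ℝ)) ≤ η * (4 * Λ) := by gcongr
    linarith
  have hηd1 : 16 * Λ ≤ η * d := by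
    have hη0 : 0 < η := by
      rcases hη.lt_or_eq with h | h
      · exact h
      · rw [← h] at hηd; norm_num at hηd; linarith
    have : η * (16 * Λ) ≤ η * (η * d) := by linarith [show η * (η * d) = 12 * Λ by linarith]
    exact le_of_mul_le_mul_left this hη0
  have hlΛ : l ≤ Λ := by
    have : (2 : ℝ) ≤ ((m + 2 : ℕ) : ℝ) := by push_cast; linarith [(Nat.cast_nonneg m : (0:ℝ) ≤ m)]
    have : 2 * l ≤ ((m + 2 : ℕ) : ℝ) * l := by gcongr
    linarith
  have hpm1 : 0 < d ^ (m + 1) := by positivity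
  have hpm : 0 < d ^ m := by positivity
  set q : ℝ := (1 - δ) ^ 2 * Real.exp (-c) with hqd
  have hcore := core (n := n) (p := p) (d := d) (η := η) (δ := δ) (q := q) (m := m) hp0.le
    (by linarith) hdp hη (by linarith) hd1 (by linarith) hδ0.le (by linarith) (by positivity)
    (by
      rw [mul_pow]
      calc 2 * p * ((1 + 2 * η) ^ m * d ^ m) = 2 * (c / d) * (1 + 2 * η) ^ m := by
            rw [← hpow0]; ring
        _ ≤ 2 * (c / d) * 2 := by gcongr; linarith
        _ = 4 * c / d := by ring
        _ ≤ η / 2 := by rw [div_le_iff₀ hd0]; linarith)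
    (by rw [mul_pow]; gcongr; linarith)
    (by rw [mul_pow]; gcongr; linarith)
    (by
      rw [mul_pow]
      calc 2 * ((1 + 2 * η) ^ m * d ^ m) ≤ 2 * (2 * d ^ m) := by gcongr; linarith
        _ = 4 * d ^ m := by ring
        _ ≤ δ * d * d ^ m := by gcongr
        _ = _ := by ring)
    (by
      rw [mul_pow]
      calc 2 * ((1 + 2 * η) ^ (m + 1) * d ^ (m + 1)) ≤ 2 * (2 * d ^ (m + 1)) := by
            gcongr; linarith
        _ = 4 * c / d * n := by rw [hpowc]; ring
        _ ≤ δ * n := by gcongr; rw [div_le_iff₀ hd0]; linarith)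
    (by
      intro a b ha hb
      have hpa : p * a ≤ c + δ / 4 := by
        calc p * a ≤ p * ((1 + 2 * η) * d) ^ (m + 1) := by gcongr
          _ = c * (1 + 2 * η) ^ (m + 1) := by rw [mul_pow, ← hpow1]; ring
          _ ≤ c * (1 + 2 * (2 * η * ((m + 1 : ℕ) : ℝ))) := by gcongr
          _ ≤ _ := by linarith
      have hpb : (1 - 4 * δ) * c ≤ p * b := by
        calc (1 - 4 * δ) * c = p * ((1 - 4 * δ) * d ^ (m + 1)) := by rw [← hpow1]; ring
          _ ≤ _ := by gcongr
      have e1 : (1 - δ) * Real.exp (-c) ≤ (1 - p) ^ a := by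
        refine le_trans ?_ (one_sub_pow_lower hp0.le (by linarith) a)
        calc (1 - δ) * Real.exp (-c) ≤ Real.exp (-δ) * Real.exp (-c) := by
              gcongr; linarith [Real.add_one_le_exp (-δ)]
          _ = Real.exp (-δ + -c) := by rw [Real.exp_add]
          _ ≤ _ := by
            apply Real.exp_le_exp.2
            have : (1 + 2 * p) * (p * a) ≤ (1 + 2 * p) * (c + δ / 4) := by gcongr
            have : p * δ ≤ 1 / 20 * δ := by gcongr
            linarith
      have e2 : (1 - p) ^ b ≤ δ := by
        refine (one_sub_pow_upper (by linarith) b).trans (le_trans ?_ H5)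
        apply Real.exp_le_exp.2
        have : δ * c ≤ 1 / 20 * c := by gcongr
        linarith
      calc q = (1 - δ) * Real.exp (-c) * (1 - δ) := by rw [hqd]; ring
        _ ≤ (1 - p) ^ a * (1 - (1 - p) ^ b) := by
            apply mul_le_mul e1 (by linarith) (by linarith)
            apply pow_nonneg; linarith)
  have h34 : d * η ^ 2 / 4 = 3 * Λ := by rw [hηd]; ring
  rw [h34] at hcore
  refine le_trans ?_ (hcore.trans (gnpProb_mono hp0.le (by linarith) ?_))
  · gcongr
  · intro G hG
    obtain ⟨hG1, hG2⟩ := hG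
    set K : ℝ := (1 + ε) * (l + 2 * Real.log Λ) * (Real.exp c / (Real.exp B + 1)) with hK
    have hK0 : 0 ≤ K := by positivity
    have hkK : (⌊K⌋₊ : ℝ) ≤ K := Nat.floor_le hK0
    have hkK' : K - 1 ≤ (⌊K⌋₊ : ℝ) := by linarith [Nat.lt_floor_add_one K]
    set z : ℝ := 2 * ((1 - 4 * δ) * (c / d + Real.exp (-c))) with hz
    have hz0 : 0 ≤ z := by
      have : 0 ≤ 1 - 4 * δ := by linarith
      positivity
    have hce : 0 < c / d + Real.exp (-c) := by positivity
    have hz1 : z ≤ 1 := by 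
      have : (1 - 4 * δ) * (c / d + Real.exp (-c)) ≤ 1 * (c / d + Real.exp (-c)) := by
        gcongr; linarith
      linarith
    have hzK : 2 * (l + 2 * Real.log Λ) ≤ z * K := by
      have e1 : z * K = 2 * (l + 2 * Real.log Λ) *
          ((1 - 4 * δ) * (1 + ε) * ((c * Real.exp c / d + 1) / (Real.exp B + 1))) := by
        rw [hz, hK, Real.exp_neg]
        have := Real.exp_pos c
        have := Real.exp_pos B
        field_simp
      have e2 : 1 - δ ≤ (c * Real.exp c / d + 1) / (Real.exp B + 1) := by
        rw [le_div_iff₀ (by positivity)]; exact H7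
      have e3 : 1 ≤ (1 - 4 * δ) * (1 + ε) * ((c * Real.exp c / d + 1) / (Real.exp B + 1)) := by
        calc (1 : ℝ) ≤ (1 - 4 * δ) * (1 + ε) * (1 - δ) := by
              rw [hδε]; clear * - hε hε1; nlinarith [mul_nonneg hε.le hε.le, mul_nonneg hε.le (sub_nonneg.2 hε1), mul_nonneg (mul_nonneg hε.le hε.le) hε.le]
          _ ≤ _ := by
            apply mul_le_mul_of_nonneg_left e2
            apply mul_nonneg <;> linarith
      rw [e1]
      exact le_mul_of_one_le_right (by linarith) e3
    show (localizationNumber G : ℝ) ≤ K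
    refine le_trans ?_ hkK
    have hw : CopsWin G ⌊K⌋₊ := by
      apply copsWin_of_dist G _ ?_ z ((1 + 2 * η) * d) hz0 hz1 ?_ ?_ hG2 (by positivity) ?_
      · rw [Fintype.card_fin]
        exact_mod_cast hkK.trans H9
      · rw [Fintype.card_fin]; exact hn
      · intro u w huw
        refine le_trans ?_ (hG1 u w huw)
        rw [Fintype.card_fin, hz, hpowc, hqd]
        have e4 : 1 - 4 * δ ≤ (1 - δ) ^ 4 := by
          have := pow_lower (x := δ) (by linarith) 4
          push_cast at this; linarith
        have e5 : (1 - 4 * δ) * (Real.exp (-c) * n) ≤ (1 - δ) ^ 4 * (Real.exp (-c) * n) := by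
          gcongr
        linarith
      · have f1 : (1 - z) ^ ⌊K⌋₊ ≤ Real.exp (-(2 * l + 7)) := by
          refine (one_sub_pow_upper hz1 _).trans (Real.exp_le_exp.2 ?_)
          have : z * (K - 1) ≤ z * ⌊K⌋₊ := by gcongr
          linarith
        have f2 : Real.exp (-(2 * l + 7)) * d ^ 2 = Real.exp (-7) := by
          have : d = Real.exp l := by rw [hl, Real.exp_log hd0]
          rw [this, ← Real.exp_nat_mul, ← Real.exp_add]; congr 1; push_cast; ring
        have f3 : 8 * Real.exp (-7) < 1 := by
          rw [Real.exp_neg, ← div_eq_mul_inv, div_lt_one (Real.exp_pos _)]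
          have := Real.add_one_le_exp (7/2 : ℝ)
          have h7 : Real.exp 7 = Real.exp (7/2) * Real.exp (7/2) := by
            rw [← Real.exp_add]; norm_num
          rw [h7]; clear * - this; nlinarith
        calc 2 * ((1 + 2 * η) * d) ^ 2 * (1 - z) ^ ⌊K⌋₊
            ≤ 2 * (2 * d) ^ 2 * Real.exp (-(2 * l + 7)) := by
              have : 0 ≤ (1 - z) ^ ⌊K⌋₊ := pow_nonneg (by linarith) _
              gcongr; linarith
          _ = 8 * (Real.exp (-(2 * l + 7)) * d ^ 2) := by ring
          _ < 1 := by rw [f2]; exact f3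
    exact_mod_cast Nat.sInf_le hw

end LocProof

namespace LocProof
open Classical

lemma tendsto_sub_log : Tendsto (fun x : ℝ => x - Real.log x) atTop atTop := by
  have h : Tendsto (fun x : ℝ => x / 2 + (1 - Real.log 2)) atTop atTop :=
    tendsto_atTop_add_const_right _ _ (tendsto_id.atTop_div_const (by norm_num))
  refine tendsto_atTop_mono' _ ?_ h
  filter_upwards [eventually_gt_atTop 0] with x hx
  have := Real.log_le_sub_one_of_pos (x := x / 2) (by linarith)
  rw [Real.log_div hx.ne' (by norm_num)] at this
  linarith

lemma tendsto_logn : Tendsto (fun n : ℕ => Real.log (n : ℝ)) atTop atTop :=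
  Real.tendsto_log_atTop.comp tendsto_natCast_atTop_atTop

lemma asy (p d : ℕ → ℝ) (i : ℕ → ℕ) (c : ℕ → ℝ)
    (hd : ∀ n, d n = p n * n)
    (hc : ∀ n, c n = d n ^ i n / n)
    (hlog3 : Filter.Tendsto (fun n : ℕ => (Real.log n) ^ 3 / d n) Filter.atTop (nhds 0))
    (hdn : Filter.Tendsto (fun n : ℕ => d n / n) Filter.atTop (nhds 0))
    (himax : ∀ᶠ n : ℕ in Filter.atTop,
      c n ≤ 3 * Real.log n ∧ 3 * Real.log n < d n ^ (i n + 1) / n)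
    (B : ℝ)
    (hcB : Filter.Tendsto
      (fun n : ℕ => c n - (Real.log (d n) - Real.log (Real.log (d n))))
      Filter.atTop (nhds B)) :
    Tendsto d atTop atTop ∧ Tendsto c atTop atTop ∧
    Tendsto (fun n => c n * Real.exp (c n) / d n) atTop (nhds (Real.exp B)) ∧
    (∀ᶠ n in atTop, 2 ≤ i n) ∧ (∀ᶠ n in atTop, (i n : ℝ) * Real.log (d n) ≤ 2 * Real.log n) ∧
    (∀ᶠ n in atTop, c n ≤ 2 * Real.log (d n)) := by
  have hlog1 : ∀ᶠ n : ℕ in atTop, 1 ≤ Real.log (n : ℝ) := tendsto_logn.eventually_ge_atTop 1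
  have habs : ∀ᶠ n : ℕ in atTop, Real.log (n : ℝ) ≤ |d n| := by
    have h1 : ∀ᶠ n : ℕ in atTop, |(Real.log n) ^ 3 / d n| < 1 := by
      have := hlog3.abs
      rw [abs_zero] at this
      exact this.eventually_lt_const (by norm_num)
    filter_upwards [h1, himax, hlog1] with n h1 h2 h3
    have hd0 : d n ≠ 0 := by
      intro h
      rw [h, zero_pow (by omega), zero_div] at h2
      linarith [h2.2]
    have habs : 0 < |d n| := abs_pos.2 hd0
    rw [abs_div, div_lt_one habs, abs_of_nonneg (by positivity)] at h1
    have : Real.log n ≤ Real.log n ^ 3 := le_self_pow₀ h3 (by norm_num)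
    linarith
  have hdabs : Tendsto (fun n => |d n|) atTop atTop := tendsto_atTop_mono' _ habs tendsto_logn
  have hl : Tendsto (fun n => Real.log (d n)) atTop atTop := by
    have := Real.tendsto_log_atTop.comp hdabs
    refine this.congr (fun n => ?_)
    simp [Real.log_abs]
  have hg : Tendsto (fun n => Real.log (d n) - Real.log (Real.log (d n))) atTop atTop :=
    tendsto_sub_log.comp hl
  have hct : Tendsto c atTop atTop := by
    have := hcB.add_atTop hg
    refine this.congr (fun n => ?_)
    ring
  have hdpos : ∀ᶠ n in atTop, 0 < d n := by
    filter_upwards [himax, hct.eventually_gt_atTop 0, hlog1, eventually_gt_atTop 0] with n h1 h2 h3 h4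
    have hn : (0 : ℝ) < n := by exact_mod_cast h4
    rw [hc, lt_div_iff₀ hn, zero_mul] at h2
    have h5 : 0 < d n ^ (i n + 1) := by
      have : 0 < d n ^ (i n + 1) / n := by linarith [h1.2]
      rwa [lt_div_iff₀ hn, zero_mul] at this
    rw [pow_succ] at h5
    exact (mul_pos_iff_of_pos_left h2).1 h5
  have hdt : Tendsto d atTop atTop := by
    refine hdabs.congr' ?_
    filter_upwards [hdpos] with n h
    exact abs_of_pos h
  have hcl : Tendsto (fun n => c n / Real.log (d n)) atTop (nhds 1) := by
    have h1 : Tendsto (fun n => (c n - (Real.log (d n) - Real.log (Real.log (d n)))) / Real.log (d n))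
        atTop (nhds 0) := hcB.div_atTop hl
    have h2 : Tendsto (fun n => Real.log (Real.log (d n)) / Real.log (d n)) atTop (nhds 0) :=
      (Real.isLittleO_log_id_atTop.tendsto_div_nhds_zero).comp hl
    have h3 := (h1.add_const 1).sub h2
    rw [zero_add, sub_zero] at h3
    refine h3.congr' ?_
    filter_upwards [hl.eventually_gt_atTop 0] with n h
    field_simp
    ring
  refine ⟨hdt, hct, ?_, ?_, ?_, ?_⟩
  · have h1 := ((Real.continuous_exp.tendsto B).comp hcB).mul hcl
    rw [mul_one] at h1
    refine h1.congr' ?_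
    filter_upwards [hl.eventually_gt_atTop 0, hdpos] with n h h'
    simp only [Function.comp]
    rw [Real.exp_sub, Real.exp_sub, Real.exp_log h', Real.exp_log h]
    field_simp
  · filter_upwards [hct.eventually_gt_atTop 1, hdn.eventually_lt_const (show (0 : ℝ) < 1 by norm_num),
      eventually_gt_atTop 0] with n h1 h2 h3
    have hn : (1 : ℝ) ≤ n := by exact_mod_cast h3
    by_contra hcon
    have : i n = 0 ∨ i n = 1 := by omega
    rw [hc] at h1
    rcases this with h | h
    · rw [h, pow_zero, lt_div_iff₀ (by linarith)] at h1
      linarith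
    · rw [h, pow_one] at h1
      linarith
  · have h3l : ∀ᶠ n : ℕ in atTop, 3 * Real.log (n : ℝ) ≤ n := by
      have h := (Real.isLittleO_log_id_atTop.tendsto_div_nhds_zero).comp
        (tendsto_natCast_atTop_atTop (R := ℝ))
      filter_upwards [h.eventually_lt_const (show (0 : ℝ) < 1 / 3 by norm_num),
        eventually_gt_atTop 0] with n h1 h2
      have hn : (0 : ℝ) < n := by exact_mod_cast h2
      simp only [Function.comp, id] at h1
      rw [div_lt_iff₀ hn] at h1
      linarith
    filter_upwards [hdpos, himax, h3l, eventually_gt_atTop 0] with n h1 h2 h3 h4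
    have hn : (0 : ℝ) < n := by exact_mod_cast h4
    have h5 := h2.1
    rw [hc, div_le_iff₀ hn] at h5
    have h6 : d n ^ i n ≤ (n : ℝ) ^ 2 := by
      rw [sq]; exact h5.trans (by gcongr)
    have h7 := Real.log_le_log (by positivity) h6
    rw [Real.log_pow, Real.log_pow] at h7
    exact_mod_cast h7
  · filter_upwards [hl.eventually_gt_atTop 0, hcl.eventually_lt_const (show (1 : ℝ) < 2 by norm_num)]
      with n h h'
    rw [div_lt_iff₀ h] at h'
    exact h'.le

lemma err_bound {n : ℕ} (hn : 1 ≤ n) : n * Real.exp (-(3 * Real.log n)) +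
    ((1 + Real.exp (-(3 * Real.log n))) ^ n - 1) +
      (n : ℝ) ^ 2 * Real.exp (-(3 * Real.log n)) ≤ 4 / n := by
  have hn0 : (0 : ℝ) < n := by exact_mod_cast hn
  have hn1 : (1 : ℝ) ≤ n := by exact_mod_cast hn
  have he : Real.exp (-(3 * Real.log n)) = 1 / (n : ℝ) ^ 3 := by
    rw [Real.exp_neg, one_div]
    congr 1
    have := Real.exp_nat_mul (Real.log n) 3
    rw [Real.exp_log hn0] at this
    exact_mod_cast this
  rw [he]
  have e1 : 1 / (n : ℝ) ^ 3 * n ≤ 1 / n := by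
    rw [div_mul_eq_mul_div, div_le_div_iff₀ (by positivity) hn0]
    have : (1 : ℝ) ≤ n := hn1
    nlinarith [mul_nonneg (mul_pos hn0 hn0).le (sub_nonneg.2 hn1)]
  have e2 : (n : ℝ) ^ 2 * (1 / (n : ℝ) ^ 3) = 1 / n := by field_simp
  have e3 : 1 / (n : ℝ) ≤ 1 := by rw [div_le_one hn0]; exact hn1
  have e4 := pow_upper (x := 1 / (n : ℝ) ^ 3) (by positivity) n (e1.trans e3)
  have e5 : (4 : ℝ) / n = 4 * (1 / n) := by ring
  rw [e2, e5, mul_comm (n : ℝ)]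
  linarith

lemma main_eps (p d : ℕ → ℝ) (i : ℕ → ℕ) (c : ℕ → ℝ)
    (hd : ∀ n, d n = p n * n)
    (hc : ∀ n, c n = d n ^ i n / n)
    (hlog3 : Filter.Tendsto (fun n : ℕ => (Real.log n) ^ 3 / d n) Filter.atTop (nhds 0))
    (hdn : Filter.Tendsto (fun n : ℕ => d n / n) Filter.atTop (nhds 0))
    (himax : ∀ᶠ n : ℕ in Filter.atTop,
      c n ≤ 3 * Real.log n ∧ 3 * Real.log n < d n ^ (i n + 1) / n)
    (B : ℝ)
    (hcB : Filter.Tendsto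
      (fun n : ℕ => c n - (Real.log (d n) - Real.log (Real.log (d n))))
      Filter.atTop (nhds B)) (ε : ℝ) (hε : 0 < ε) (hε1 : ε ≤ 1) :
    ∀ᶠ n : ℕ in atTop, 1 - 4 / (n : ℝ) ≤ gnpProb n (p n)
      {G : SimpleGraph (Fin n) |
          (localizationNumber G : ℝ)
            ≤ (1 + ε) * (Real.log (d n) + 2 * Real.log (Real.log n))
                * (Real.exp (c n) / (Real.exp B + 1))} := by
  obtain ⟨hdt, hct, hlim, hi, hil, hc2⟩ := asy p d i c hd hc hlog3 hdn himax B hcB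
  set δ : ℝ := ε / 20 with hδ
  have hδ0 : 0 < δ := by positivity
  have hδ1 : δ ≤ 1 / 20 := by rw [hδ]; linarith
  have hδ1' : 0 < 1 - δ := by linarith
  set κ : ℝ := (1 - δ) * (1 - δ) ^ 2 * δ ^ 2 / 2 / (Real.exp B + 1) with hκ
  have hκ0 : 0 < κ := by positivity
  have hη : Tendsto (fun n : ℕ => Real.log n * Real.sqrt (12 * Real.log n / d n)) atTop (nhds 0) := by
    have h1 : Tendsto (fun n : ℕ => Real.sqrt (12 * (Real.log n ^ 3 / d n))) atTop (nhds 0) := by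
      have := (Real.continuous_sqrt.tendsto _).comp (hlog3.const_mul 12)
      rw [mul_zero, Real.sqrt_zero] at this
      exact this
    refine h1.congr' ?_
    filter_upwards [tendsto_logn.eventually_ge_atTop 1] with n hn
    rw [show 12 * (Real.log n ^ 3 / d n) = Real.log n ^ 2 * (12 * Real.log n / d n) by ring,
      Real.sqrt_mul (by positivity), Real.sqrt_sq (by linarith)]
  have hloglog : Tendsto (fun n : ℕ => Real.log (Real.log (n : ℝ))) atTop atTop :=
    Real.tendsto_log_atTop.comp tendsto_logn
  have hlogd : Tendsto (fun n : ℕ => Real.log (d n)) atTop atTop :=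
    Real.tendsto_log_atTop.comp hdt
  have h5 : Tendsto (fun n => Real.exp (-(c n / 2))) atTop (nhds 0) :=
    Real.tendsto_exp_neg_atTop_nhds_zero.comp (hct.atTop_div_const (by norm_num))
  have h7lt : (1 - δ) * (Real.exp B + 1) - 1 < Real.exp B := by
    have := Real.exp_pos B
    nlinarith
  filter_upwards [eventually_ge_atTop 1, tendsto_logn.eventually_ge_atTop 1,
    hdt.eventually_ge_atTop 1, hdt.eventually_ge_atTop (4 / δ), hct.eventually_gt_atTop 0, hi, hil, hc2,
    hlogd.eventually_ge_atTop 1, hloglog.eventually_ge_atTop 2,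
    hη.eventually_lt_const (show (0 : ℝ) < δ / 64 by positivity),
    hlog3.eventually_lt_const (show (0 : ℝ) < δ / 100 by positivity),
    hlog3.eventually_lt_const (show (0 : ℝ) < κ / 3 by positivity),
    h5.eventually_lt_const hδ0, hlim.eventually_const_lt h7lt,
    hlim.eventually_lt_const (show Real.exp B < Real.exp B + 1 by linarith), himax]
    with n hn hΛ hd1 hd4 hc0 hi hil hc2 hl1 hll hη hs hs2 h5 h7 h7' him
  have hn0 : (0 : ℝ) < n := by exact_mod_cast hn
  have hd0 : 0 < d n := by linarith
  have hB := Real.exp_pos B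
  have him := him.1
  obtain ⟨m, hm⟩ := Nat.exists_eq_add_of_le' hi
  set Λ := Real.log (n : ℝ) with hΛd
  rw [div_lt_iff₀ hd0] at hs hs2
  have hΛ3 : Λ ≤ Λ ^ 3 := le_self_pow₀ hΛ (by norm_num)
  have hΛ23 : Λ ^ 2 ≤ Λ ^ 3 := pow_le_pow_right₀ hΛ (by norm_num)
  have hec : Real.exp (c n) * d n ≤ n * (Real.exp B + 1) := by
    rw [div_lt_iff₀ hd0] at h7'
    have hcn : d n ^ 2 ≤ c n * n := by
      have : c n * n = d n ^ i n := by rw [hc]; field_simp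
      rw [this]
      exact pow_le_pow_right₀ hd1 hi
    have e1 : Real.exp (c n) * d n ^ 2 ≤ ((Real.exp B + 1) * d n) * n := by
      calc Real.exp (c n) * d n ^ 2 ≤ Real.exp (c n) * (c n * n) := by gcongr
        _ = (c n * Real.exp (c n)) * n := by ring
        _ ≤ _ := by gcongr
    have e2 : d n * (Real.exp (c n) * d n) ≤ d n * (n * (Real.exp B + 1)) := by
      linarith
    exact le_of_mul_le_mul_left e2 hd0
  have hlΛ : Real.log (d n) ≤ Λ := by
    have : (2 : ℝ) ≤ (i n : ℝ) := by exact_mod_cast hi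
    have : 2 * Real.log (d n) ≤ i n * Real.log (d n) := by gcongr
    linarith
  have hmain := per_n (n := n) (m := m) (p := p n) (d := d n)
    (η := Real.sqrt (12 * Λ / d n)) (δ := δ) (ε := ε) (c := c n) (B := B) (Λ := Λ)
    (l := Real.log (d n)) hn rfl rfl (hd n) (by rw [hc, hm]) hε hε1 rfl hd1 (Real.sqrt_nonneg _)
    (by rw [Real.sq_sqrt (by positivity)]; field_simp) hΛ hη.le (by rw [← hm]; exact hil) hl1 hc2
    (by rw [div_le_iff₀ hδ0] at hd4; linarith) (by linarith)
    (by
      rw [div_le_iff₀ hd0]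
      have : c n ^ 2 ≤ (3 * Λ) ^ 2 := by gcongr
      linarith)
    h5.le
    (by
      have e1 : d n / (Real.exp B + 1) ≤ n * Real.exp (-c n) := by
        rw [div_le_iff₀ (by positivity), Real.exp_neg]
        have := Real.exp_pos (c n)
        field_simp
        linarith
      calc 3 * Λ ≤ κ * d n := by linarith
        _ = (1 - δ) * (1 - δ) ^ 2 * δ ^ 2 / 2 * (d n / (Real.exp B + 1)) := by rw [hκ]; ring
        _ ≤ (1 - δ) * (1 - δ) ^ 2 * δ ^ 2 / 2 * (n * Real.exp (-c n)) := by gcongr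
        _ = _ := by ring)
    (by linarith) hll
    (by
      have e1 : Real.exp (c n) / (Real.exp B + 1) ≤ n / d n := by
        rw [div_le_div_iff₀ (by positivity) hd0]; exact hec
      have e2 : Real.log Λ ≤ Λ := by
        linarith [Real.log_le_sub_one_of_pos (show 0 < Λ by linarith)]
      calc (1 + ε) * (Real.log (d n) + 2 * Real.log Λ) * (Real.exp (c n) / (Real.exp B + 1))
          ≤ (1 + 1) * (Λ + 2 * Λ) * (n / d n) := by gcongr
        _ = (6 * Λ) * (n / d n) := by ring
        _ ≤ d n * (n / d n) := by
            gcongr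
            have : δ / 100 * d n ≤ 1 / 6 * d n := mul_le_mul_of_nonneg_right (by linarith) hd0.le
            linarith
        _ = n := by field_simp)
    (by
      have e1 : c n / d n ≤ 1 / 4 := by
        rw [div_le_iff₀ hd0]
        have : δ / 100 * d n ≤ 1 / 12 * d n := mul_le_mul_of_nonneg_right (by linarith) hd0.le
        linarith
      have e2 : Real.exp (-c n) ≤ Real.exp (-(c n / 2)) := Real.exp_le_exp.2 (by linarith)
      linarith)
  refine le_trans ?_ hmain
  have := err_bound hn
  linarith

theorem final
    (p d : ℕ → ℝ) (i : ℕ → ℕ) (c : ℕ → ℝ)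
    (hd : ∀ n, d n = p n * n)
    (hc : ∀ n, c n = d n ^ i n / n)
    (hlog3 : Filter.Tendsto (fun n : ℕ => (Real.log n) ^ 3 / d n) Filter.atTop (nhds 0))
    (hdn : Filter.Tendsto (fun n : ℕ => d n / n) Filter.atTop (nhds 0))
    (himax : ∀ᶠ n : ℕ in Filter.atTop,
      c n ≤ 3 * Real.log n ∧ 3 * Real.log n < d n ^ (i n + 1) / n)
    (B : ℝ)
    (hcB : Filter.Tendsto
      (fun n : ℕ => c n - (Real.log (d n) - Real.log (Real.log (d n))))
      Filter.atTop (nhds B)) :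
    (∃ ε : ℕ → ℝ, Filter.Tendsto ε Filter.atTop (nhds 0) ∧
      AAS p (fun n : ℕ =>
        {G : SimpleGraph (Fin n) |
          (localizationNumber G : ℝ)
            ≤ (1 + ε n) * (Real.log (d n) + 2 * Real.log (Real.log n))
                * (Real.exp (c n) / (Real.exp B + 1))})) ∧
    Filter.Tendsto
      (fun n : ℕ =>
        ((Real.log (d n) + 2 * Real.log (Real.log n))
            * (Real.exp (c n) / (Real.exp B + 1)))
          / ((Real.log (d n) + 2 * Real.log (Real.log n))
              * n / (d n ^ (i n - 1) * (1 + Real.exp (-B)))))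
      Filter.atTop (nhds 1) := by
  have hmain := main_eps p d i c hd hc hlog3 hdn himax B hcB
  obtain ⟨hdt, hct, hlim, hi, hil, hc2⟩ := asy p d i c hd hc hlog3 hdn himax B hcB
  have hloglog : Tendsto (fun n : ℕ => Real.log (Real.log (n : ℝ))) atTop atTop :=
    Real.tendsto_log_atTop.comp tendsto_logn
  have hlogd : Tendsto (fun n : ℕ => Real.log (d n)) atTop atTop :=
    Real.tendsto_log_atTop.comp hdt
  constructor
  · have hm : ∀ m : ℕ, ∃ N : ℕ, ∀ n ≥ N, 1 - 4 / (n : ℝ) ≤ gnpProb n (p n)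
      {G : SimpleGraph (Fin n) |
          (localizationNumber G : ℝ)
            ≤ (1 + 1 / ((m : ℝ) + 1)) * (Real.log (d n) + 2 * Real.log (Real.log n))
                * (Real.exp (c n) / (Real.exp B + 1))} := by
      intro m
      have hm0 : (0 : ℝ) < (m : ℝ) + 1 := by positivity
      exact eventually_atTop.1 (hmain (1 / ((m : ℝ) + 1)) (by positivity)
        (by rw [div_le_one hm0]; linarith [(Nat.cast_nonneg m : (0 : ℝ) ≤ m)]))
    choose N hN using hm
    set M : ℕ → ℕ := fun n => Nat.findGreatest (fun m => N m ≤ n) n with hM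
    have hMt : Tendsto M atTop atTop := by
      rw [tendsto_atTop]
      intro m
      filter_upwards [eventually_ge_atTop m, eventually_ge_atTop (N m)] with n h1 h2
      exact Nat.le_findGreatest h1 h2
    refine ⟨fun n => 1 / ((M n : ℝ) + 1), ?_, ?_⟩
    · exact tendsto_one_div_add_atTop_nhds_zero_nat.comp hMt
    · have hlow : Tendsto (fun n : ℕ => 1 - 4 / (n : ℝ)) atTop (nhds 1) := by
        have := (tendsto_const_div_atTop_nhds_zero_nat (4 : ℝ)).const_sub 1
        simpa using this
      unfold AAS
      refine tendsto_of_tendsto_of_tendsto_of_le_of_le' hlow tendsto_const_nhds ?_ ?_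
      · filter_upwards [eventually_ge_atTop (N 0)] with n h1
        have h2 : N (M n) ≤ n :=
          Nat.findGreatest_spec (P := fun m => N m ≤ n) (Nat.zero_le n) h1
        exact hN (M n) n h2
      · filter_upwards [hdt.eventually_gt_atTop 0,
          hdn.eventually_lt_const (show (0 : ℝ) < 1 by norm_num), eventually_gt_atTop 0]
          with n h1 h2 h3
        have hn : (0 : ℝ) < n := by exact_mod_cast h3
        have hp : p n = d n / n := by rw [hd]; field_simp
        refine gnpProb_le_one ?_ ?_ _
        · rw [hp]; positivity
        · rw [hp]; exact h2.le
  · have h1 := hlim.mul_const (Real.exp (-B))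
    rw [← Real.exp_add, add_neg_cancel, Real.exp_zero] at h1
    refine h1.congr' ?_
    filter_upwards [hdt.eventually_gt_atTop 0, hi, hlogd.eventually_gt_atTop 0,
      hloglog.eventually_gt_atTop 0, eventually_gt_atTop 0] with n h1 h2 h3 h4 h5
    have hn : (0 : ℝ) < n := by exact_mod_cast h5
    obtain ⟨m, hm⟩ := Nat.exists_eq_add_of_le' h2
    rw [hm, show m + 2 - 1 = m + 1 by omega]
    have hLpos : 0 < Real.log (d n) + 2 * Real.log (Real.log n) := by linarith
    have hcc : c n = d n ^ (m + 1) * d n / n := by rw [hc, hm]; ring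
    have hE : Real.exp (-B) * (Real.exp B + 1) = 1 + Real.exp (-B) := by
      rw [mul_add, ← Real.exp_add, neg_add_cancel, Real.exp_zero, mul_one]
    have hB1 := Real.exp_pos B
    have hB2 := Real.exp_pos (-B)
    generalize Real.exp (c n) = E
    rw [hcc, ← hE]
    generalize Real.log (d n) + 2 * Real.log (Real.log n) = Lx at *
    have : 0 < d n ^ (m + 1) := by positivity
    generalize d n ^ (m + 1) = Q at *
    field_simp

end LocProof

theorem stmt15_localization_upper_bound_critical_window
    (p d : ℕ → ℝ) (i : ℕ → ℕ) (c : ℕ → ℝ)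
    (hd : ∀ n, d n = p n * n)
    (hc : ∀ n, c n = d n ^ i n / n)
    (hlog3 : Filter.Tendsto (fun n : ℕ => (Real.log n) ^ 3 / d n) Filter.atTop (nhds 0))
    (hdn : Filter.Tendsto (fun n : ℕ => d n / n) Filter.atTop (nhds 0))
    (himax : ∀ᶠ n : ℕ in Filter.atTop,
      c n ≤ 3 * Real.log n ∧ 3 * Real.log n < d n ^ (i n + 1) / n)
    (B : ℝ)
    (hcB : Filter.Tendsto
      (fun n : ℕ => c n - (Real.log (d n) - Real.log (Real.log (d n))))
      Filter.atTop (nhds B)) :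
    (∃ ε : ℕ → ℝ, Filter.Tendsto ε Filter.atTop (nhds 0) ∧
      AAS p (fun n : ℕ =>
        {G : SimpleGraph (Fin n) |
          (localizationNumber G : ℝ)
            ≤ (1 + ε n) * (Real.log (d n) + 2 * Real.log (Real.log n))
                * (Real.exp (c n) / (Real.exp B + 1))})) ∧
    Filter.Tendsto
      (fun n : ℕ =>
        ((Real.log (d n) + 2 * Real.log (Real.log n))
            * (Real.exp (c n) / (Real.exp B + 1)))
          / ((Real.log (d n) + 2 * Real.log (Real.log n))
              * n / (d n ^ (i n - 1) * (1 + Real.exp (-B)))))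
      Filter.atTop (nhds 1) := by
  exact LocProof.final p d i c hd hc hlog3 hdn himax B hcB
end

section
/- Suppose d = d(n) := p(n)·n satisfies (log n)^3 ≪ d ≪ n. Let i = i(n) ∈ ℕ be the largest integer such that c = c(n) := d^i/n ≤ 3·log n, and suppose c − (log d − log log d) → ∞ as n → ∞. Then asymptotically almost surely, for G ∈ G(n,p): ζ(G) ≤ (1 + o(1))·(log d + 2·log log n)·n/d^{i−1}. -/
open Filter SimpleGraph Set
open scoped Topology

/-! ### Finite Bernoulli product spaces -/

set_option linter.unusedSectionVars false

noncomputable section Bern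

/-- Weight of a Boolean vector. -/
def bw {ι : Type*} [Fintype ι] (p : ℝ) (ω : ι → Bool) : ℝ :=
  ∏ e, if ω e = true then p else 1 - p

/-- Expectation under the Bernoulli product. -/
def bE {ι : Type*} [Fintype ι] [DecidableEq ι] (p : ℝ) (f : (ι → Bool) → ℝ) : ℝ :=
  ∑ ω, bw p ω * f ω

open Classical in
/-- Probability under the Bernoulli product. -/
def bP {ι : Type*} [Fintype ι] [DecidableEq ι] (p : ℝ) (E : (ι → Bool) → Prop) : ℝ :=
  bE p (fun ω => if E ω then 1 else 0)

variable {ι : Type*} [Fintype ι] [DecidableEq ι] {p : ℝ}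

lemma bw_nonneg (h0 : 0 ≤ p) (h1 : p ≤ 1) (ω : ι → Bool) : 0 ≤ bw p ω := by
  unfold bw
  apply Finset.prod_nonneg
  intro e _
  split_ifs <;> linarith

lemma bE_mono (h0 : 0 ≤ p) (h1 : p ≤ 1) {f g : (ι → Bool) → ℝ} (h : ∀ ω, f ω ≤ g ω) :
    bE p f ≤ bE p g := by
  unfold bE
  apply Finset.sum_le_sum
  intro ω _
  exact mul_le_mul_of_nonneg_left (h ω) (bw_nonneg h0 h1 ω)

lemma bE_add (f g : (ι → Bool) → ℝ) : bE p (fun ω => f ω + g ω) = bE p f + bE p g := by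
  simp [bE, mul_add, Finset.sum_add_distrib]

lemma bE_const_mul (c : ℝ) (f : (ι → Bool) → ℝ) : bE p (fun ω => c * f ω) = c * bE p f := by
  simp only [bE, Finset.mul_sum]
  apply Finset.sum_congr rfl
  intros; ring

lemma bE_sum {α : Type*} (s : Finset α) (f : α → (ι → Bool) → ℝ) :
    bE p (fun ω => ∑ a ∈ s, f a ω) = ∑ a ∈ s, bE p (f a) := by
  simp only [bE, Finset.mul_sum]
  rw [Finset.sum_comm]

lemma bE_prod (F : ι → Bool → ℝ) :
    bE p (fun ω => ∏ e, F e (ω e)) = ∏ e, (p * F e true + (1 - p) * F e false) := by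
  have h := Finset.prod_univ_sum (fun _ : ι => (Finset.univ : Finset Bool))
    (fun e b => (if b = true then p else 1 - p) * F e b)
  simp only [Fintype.piFinset_univ] at h
  unfold bE bw
  simp only [← Finset.prod_mul_distrib]
  rw [← h]
  simp

lemma bE_one : bE p (fun _ : ι → Bool => (1 : ℝ)) = 1 := by
  have := bE_prod (ι := ι) (p := p) (fun _ _ => 1)
  simpa using this

lemma bE_edge (e₀ : ι) :
    bE p (fun ω => if ω e₀ = true then (0 : ℝ) else 1) = 1 - p := by
  have h := bE_prod (ι := ι) (p := p) (fun e b => if e = e₀ then (if b = true then 0 else 1) else 1)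
  simp only [Finset.prod_ite_eq', Finset.mem_univ, if_true] at h
  rw [h]
  rw [Finset.prod_eq_single e₀]
  · simp
  · intro b _ hb; simp [hb]
  · simp

open Classical in
/-- Combine two vectors along a set of coordinates. -/
def bmix (I : Set ι) (ω ω' : ι → Bool) : ι → Bool := fun e => if e ∈ I then ω e else ω' e

lemma bE_indep (I : Set ι) (f g : (ι → Bool) → ℝ)
    (hf : ∀ ω ω', (∀ e ∈ I, ω e = ω' e) → f ω = f ω')
    (hg : ∀ ω ω', (∀ e, e ∉ I → ω e = ω' e) → g ω = g ω') :
    bE p (fun ω => f ω * g ω) = bE p f * bE p g := by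
  have key : bE p f * bE p g
      = ∑ x : (ι → Bool) × (ι → Bool), bw p x.1 * bw p x.2 * (f x.1 * g x.2) := by
    rw [Fintype.sum_prod_type]
    unfold bE
    rw [Finset.sum_mul_sum]
    apply Finset.sum_congr rfl; intro a _
    apply Finset.sum_congr rfl; intro b _
    ring
  have key2 : bE p (fun ω => f ω * g ω)
      = ∑ x : (ι → Bool) × (ι → Bool), bw p x.1 * bw p x.2 * (f x.1 * g x.1) := by
    rw [Fintype.sum_prod_type]
    unfold bE
    apply Finset.sum_congr rfl; intro a _
    have h1 : ∑ b : ι → Bool, bw p b = 1 := by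
      have := bE_one (ι := ι) (p := p)
      simpa [bE] using this
    calc bw p a * (f a * g a) = (bw p a * (f a * g a)) * ∑ b : ι → Bool, bw p b := by rw [h1, mul_one]
      _ = _ := by
        rw [Finset.mul_sum]
        apply Finset.sum_congr rfl; intro b _
        ring
  rw [key, key2]
  let sw : (ι → Bool) × (ι → Bool) → (ι → Bool) × (ι → Bool) :=
    fun x => (bmix I x.1 x.2, bmix I x.2 x.1)
  have hsw : Function.Involutive sw := by
    intro x
    ext e <;> by_cases h : e ∈ I <;> simp [sw, bmix, h]
  rw [← Equiv.sum_comp hsw.toPerm]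
  apply Finset.sum_congr rfl
  rintro ⟨a, b⟩ _
  have e1 : f (bmix I a b) = f a := hf _ _ (fun e he => by simp [bmix, he])
  have e2 : g (bmix I a b) = g b := hg _ _ (fun e he => by simp [bmix, he])
  have e3 : bw p (bmix I a b) * bw p (bmix I b a) = bw p a * bw p b := by
    unfold bw
    rw [← Finset.prod_mul_distrib, ← Finset.prod_mul_distrib]
    apply Finset.prod_congr rfl
    intro e _
    by_cases h : e ∈ I
    · simp [bmix, h]
    · simp only [bmix, h, if_false]; ring
  change bw p (bmix I a b) * bw p (bmix I b a) * (f (bmix I a b) * g (bmix I a b)) = _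
  rw [e1, e2, e3]

lemma bP_mono (h0 : 0 ≤ p) (h1 : p ≤ 1) {E F : (ι → Bool) → Prop} (h : ∀ ω, E ω → F ω) :
    bP p E ≤ bP p F := by
  unfold bP
  apply bE_mono h0 h1
  intro ω
  by_cases hE : E ω
  · simp [hE, h ω hE]
  · simp only [hE, if_false]; split_ifs <;> norm_num

lemma bP_nonneg (h0 : 0 ≤ p) (h1 : p ≤ 1) (E : (ι → Bool) → Prop) : 0 ≤ bP p E := by
  unfold bP bE
  apply Finset.sum_nonneg
  intro ω _
  apply mul_nonneg (bw_nonneg h0 h1 ω)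
  beta_reduce
  split_ifs <;> norm_num

lemma bP_compl (E : (ι → Bool) → Prop) : bP p E + bP p (fun ω => ¬ E ω) = 1 := by
  unfold bP
  rw [← bE_add]
  refine Eq.trans ?_ (bE_one (ι := ι) (p := p))
  congr 1
  ext ω
  by_cases h : E ω <;> simp [h]

open Classical in
lemma bP_exists_le (h0 : 0 ≤ p) (h1 : p ≤ 1) {α : Type*} (s : Finset α)
    (E : α → (ι → Bool) → Prop) :
    bP p (fun ω => ∃ a ∈ s, E a ω) ≤ ∑ a ∈ s, bP p (E a) := by
  unfold bP
  rw [← bE_sum]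
  apply bE_mono h0 h1
  intro ω
  have hnn : ∀ a ∈ s, (0 : ℝ) ≤ (fun a => if E a ω then (1 : ℝ) else 0) a := by
    intro a _; simp only; split_ifs <;> norm_num
  split_ifs with h
  · obtain ⟨a, ha, hE⟩ := h
    have := Finset.single_le_sum hnn ha
    simpa [hE] using this
  · exact Finset.sum_nonneg hnn

/-- Markov inequality in exponential form. -/
lemma bP_chernoff (h0 : 0 ≤ p) (h1 : p ≤ 1) (Z : (ι → Bool) → ℝ) (μ δ : ℝ)
    (hμ : 0 ≤ μ) (hδ0 : 0 ≤ δ) (hδ : δ ≤ 2)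
    (hm : ∀ t : ℝ, |t| ≤ 1 → bE p (fun ω => Real.exp (t * Z ω)) ≤ Real.exp (μ * (t + t ^ 2))) :
    bP p (fun ω => ¬ ((1 - δ) * μ ≤ Z ω ∧ Z ω ≤ (1 + δ) * μ)) ≤ 2 * Real.exp (-(μ * δ ^ 2 / 4)) := by
  have hU : bE p (fun ω => Real.exp ((δ / 2) * Z ω)) ≤ _ :=
    hm (δ / 2) (by rw [abs_of_nonneg (by linarith)]; linarith)
  have hL : bE p (fun ω => Real.exp ((-(δ / 2)) * Z ω)) ≤ _ :=
    hm (-(δ / 2)) (by rw [abs_neg, abs_of_nonneg (by linarith)]; linarith)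
  have hpt : bP p (fun ω => ¬ ((1 - δ) * μ ≤ Z ω ∧ Z ω ≤ (1 + δ) * μ)) ≤
      bE p (fun ω => Real.exp (-(δ / 2 * ((1 + δ) * μ))) * Real.exp ((δ / 2) * Z ω)
        + Real.exp ((δ / 2) * ((1 - δ) * μ)) * Real.exp ((-(δ / 2)) * Z ω)) := by
    unfold bP
    apply bE_mono h0 h1
    intro ω
    simp only [← Real.exp_add]
    by_cases h : (1 - δ) * μ ≤ Z ω ∧ Z ω ≤ (1 + δ) * μ
    swap
    · rw [if_pos h]
      by_cases hlow : (1 - δ) * μ ≤ Z ω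
      · have hup : (1 + δ) * μ < Z ω := by
          by_contra hc; exact h ⟨hlow, not_lt.mp hc⟩
        have : (1 : ℝ) ≤ Real.exp (-(δ / 2 * ((1 + δ) * μ)) + (δ / 2) * Z ω) := by
          apply Real.one_le_exp
          nlinarith
        have := Real.exp_pos (δ / 2 * ((1 - δ) * μ) + -(δ / 2) * Z ω)
        linarith
      · have : (1 : ℝ) ≤ Real.exp (δ / 2 * ((1 - δ) * μ) + -(δ / 2) * Z ω) := by
          apply Real.one_le_exp
          push Not at hlow
          nlinarith
        have := Real.exp_pos (-(δ / 2 * ((1 + δ) * μ)) + (δ / 2) * Z ω)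
        linarith
    · rw [if_neg (not_not.mpr h)]
      positivity
  refine hpt.trans ?_
  rw [bE_add, bE_const_mul, bE_const_mul]
  have a1 := mul_le_mul_of_nonneg_left hU (Real.exp_pos (-(δ / 2 * ((1 + δ) * μ)))).le
  have a2 := mul_le_mul_of_nonneg_left hL (Real.exp_pos (δ / 2 * ((1 - δ) * μ))).le
  rw [← Real.exp_add] at a1 a2
  have b1 : -(δ / 2 * ((1 + δ) * μ)) + μ * (δ / 2 + (δ / 2) ^ 2) = -(μ * δ ^ 2 / 4) := by ring
  have b2 : δ / 2 * ((1 - δ) * μ) + μ * (-(δ / 2) + (-(δ / 2)) ^ 2) = -(μ * δ ^ 2 / 4) := by ring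
  rw [b1] at a1
  rw [b2] at a2
  linarith

end Bern

/-! ### The random graph as a Bernoulli product, and breadth-first search -/

noncomputable section Gr

/-- The non-loop pairs. -/
abbrev Edge (n : ℕ) := {e : Sym2 (Fin n) // ¬ e.IsDiag}

/-- The graph of a Boolean vector. -/
def gr {n : ℕ} (ω : Edge n → Bool) : SimpleGraph (Fin n) where
  Adj u v := ∃ h : ¬ (s(u, v)).IsDiag, ω ⟨s(u, v), h⟩ = true
  symm := ⟨by
    rintro u v ⟨h, hω⟩
    have e : s(v, u) = s(u, v) := Sym2.eq_swap
    refine ⟨by rwa [e], ?_⟩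
    rw [← hω]
    congr 1
    exact Subtype.ext e⟩
  loopless := ⟨by
    rintro u ⟨h, _⟩
    exact h (by simp)⟩

lemma gr_adj {n : ℕ} (ω : Edge n → Bool) (u v : Fin n) :
    (gr ω).Adj u v ↔ ∃ h : ¬ (s(u, v)).IsDiag, ω ⟨s(u, v), h⟩ = true := Iff.rfl

lemma gr_mem_edgeSet {n : ℕ} (ω : Edge n → Bool) (e : Edge n) :
    e.1 ∈ (gr ω).edgeSet ↔ ω e = true := by
  obtain ⟨e, he⟩ := e
  induction e using Sym2.ind with
  | _ u v =>
    simp only [SimpleGraph.mem_edgeSet, gr_adj]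
    exact ⟨fun ⟨_, h⟩ => h, fun h => ⟨he, h⟩⟩

open Classical in
/-- Boolean vectors are the same as graphs. -/
def grEquiv (n : ℕ) : (Edge n → Bool) ≃ SimpleGraph (Fin n) where
  toFun := gr
  invFun G := fun e => decide (e.1 ∈ G.edgeSet)
  left_inv ω := by
    ext e
    have := gr_mem_edgeSet ω e
    by_cases h : ω e = true
    · simp [this, h]
    · simp [this, h]
  right_inv G := by
    ext u v
    rw [gr_adj]
    constructor
    · rintro ⟨_, h⟩
      simpa using h
    · intro h
      exact ⟨by simpa using h.ne, by simpa using h⟩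

lemma bw_eq {n : ℕ} (p : ℝ) (ω : Edge n → Bool) :
    bw p ω = p ^ (Nat.card (gr ω).edgeSet) *
      (1 - p) ^ (n.choose 2 - Nat.card (gr ω).edgeSet) := by
  classical
  have h1 : Nat.card (gr ω).edgeSet = (Finset.univ.filter (fun e : Edge n => ω e = true)).card := by
    rw [← Fintype.card_subtype, ← Nat.card_eq_fintype_card]
    refine Nat.card_congr ?_
    refine ⟨fun e => ⟨⟨e.1, SimpleGraph.not_isDiag_of_mem_edgeSet _ e.2⟩,
      (gr_mem_edgeSet ω ⟨e.1, _⟩).mp e.2⟩, fun e => ⟨e.1.1, (gr_mem_edgeSet ω e.1).mpr e.2⟩,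
      fun _ => rfl, fun _ => rfl⟩
  have h2 : (Finset.univ.filter (fun e : Edge n => ¬ ω e = true)).card
      = n.choose 2 - Nat.card (gr ω).edgeSet := by
    have h3 := Finset.card_filter_add_card_filter_not (s := (Finset.univ : Finset (Edge n)))
      (fun e : Edge n => ω e = true)
    have h4 : (Finset.univ : Finset (Edge n)).card = n.choose 2 := by
      rw [Finset.card_univ, Sym2.card_subtype_not_diag, Fintype.card_fin]
    omega
  unfold bw
  rw [Finset.prod_ite, Finset.prod_const, Finset.prod_const, h2, ← h1]

lemma gnpProb_eq (n : ℕ) (p : ℝ) (A : Set (SimpleGraph (Fin n))) :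
    gnpProb n p A = bP p (fun ω : Edge n → Bool => gr ω ∈ A) := by
  classical
  unfold gnpProb bP bE
  rw [Finset.sum_filter, ← Equiv.sum_comp (grEquiv n)]
  apply Finset.sum_congr rfl
  intro ω _
  rw [bw_eq]
  change (if gr ω ∈ A then _ else _) = _
  by_cases h : gr ω ∈ A
  · simp [h, grEquiv]
  · simp [h]

variable {n : ℕ} {p : ℝ}

lemma gr_congr {ω ω' : Edge n → Bool} {u v : Fin n}
    (h : ∀ e : Edge n, e.1 = s(u, v) → ω e = ω' e) : (gr ω).Adj u v ↔ (gr ω').Adj u v := by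
  simp only [gr_adj]
  constructor
  · rintro ⟨h1, h2⟩
    exact ⟨h1, by rw [← h _ rfl]; exact h2⟩
  · rintro ⟨h1, h2⟩
    exact ⟨h1, by rw [h _ rfl]; exact h2⟩

open Classical in
lemma bE_noedge (w : Fin n) (Y : Finset (Fin n)) (hw : w ∉ Y) :
    bE p (fun ω : Edge n → Bool => if ∃ y ∈ Y, (gr ω).Adj w y then (0 : ℝ) else 1)
      = (1 - p) ^ Y.card := by
  induction Y using Finset.induction_on with
  | empty => simpa using bE_one
  | insert a Y ha ih =>
    rw [Finset.mem_insert, not_or] at hw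
    rw [Finset.card_insert_of_notMem ha, pow_succ, ← ih hw.2]
    have hd : ¬ (s(w, a)).IsDiag := by simpa using hw.1
    rw [← bE_edge (⟨s(w, a), hd⟩ : Edge n)]
    rw [← bE_indep {e : Edge n | ∃ y ∈ Y, e.1 = s(w, y)}]
    · congr 1
      ext ω
      have h1 : (gr ω).Adj w a ↔ ω ⟨s(w, a), hd⟩ = true :=
        ⟨fun ⟨_, h⟩ => h, fun h => ⟨hd, h⟩⟩
      simp only [Finset.exists_mem_insert, h1]
      by_cases hA : ω ⟨s(w, a), hd⟩ = true <;> by_cases hB : ∃ y ∈ Y, (gr ω).Adj w y <;>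
        simp [hA, hB]
    · intro ω ω' h
      have : (∃ y ∈ Y, (gr ω).Adj w y) ↔ (∃ y ∈ Y, (gr ω').Adj w y) := by
        apply exists_congr; intro y
        apply and_congr_right; intro hy
        exact gr_congr (fun e he => h e ⟨y, hy, he⟩)
      simp only [this]
    · intro ω ω' h
      have : ω ⟨s(w, a), hd⟩ = ω' ⟨s(w, a), hd⟩ := by
        apply h
        rintro ⟨y, hy, he⟩
        have : a = y := by
          simp only [Sym2.eq_iff] at he
          rcases he with ⟨_, h⟩ | ⟨h1, h2⟩
          · exact h
          · exact h2.trans h1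
        exact ha (this ▸ hy)
      simp only [this]

open Classical in
/-- Vertices with a neighbour in `Y`. -/
def nbr (G : SimpleGraph (Fin n)) (Y : Finset (Fin n)) : Finset (Fin n) :=
  Finset.univ.filter (fun w => ∃ y ∈ Y, G.Adj w y)

lemma mem_nbr {G : SimpleGraph (Fin n)} {Y : Finset (Fin n)} {w : Fin n} :
    w ∈ nbr G Y ↔ ∃ y ∈ Y, G.Adj w y := by simp [nbr]

lemma bE_mgf (W Y : Finset (Fin n)) (hWY : Disjoint W Y) (t : ℝ) :
    bE p (fun ω : Edge n → Bool => Real.exp (t * ((W ∩ nbr (gr ω) Y).card : ℝ)))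
      = (Real.exp t + (1 - Real.exp t) * (1 - p) ^ Y.card) ^ W.card := by
  classical
  induction W using Finset.induction_on with
  | empty => simpa using bE_one
  | insert a W ha ih =>
    rw [Finset.disjoint_insert_left] at hWY
    rw [Finset.card_insert_of_notMem ha, pow_succ, ← ih hWY.2]
    have h1 : bE p (fun ω : Edge n → Bool =>
        if ∃ y ∈ Y, (gr ω).Adj a y then Real.exp t else 1)
        = Real.exp t + (1 - Real.exp t) * (1 - p) ^ Y.card := by
      rw [← bE_noedge a Y hWY.1, ← bE_const_mul]
      have h2 : Real.exp t = bE p (fun _ : Edge n → Bool => Real.exp t * 1) := by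
        rw [bE_const_mul, bE_one, mul_one]
      refine Eq.trans ?_ (congrArg (fun x => x + _) h2.symm)
      rw [← bE_add]
      congr 1
      ext ω
      split_ifs <;> simp
    rw [← h1, ← bE_indep {e : Edge n | ∃ w ∈ W, ∃ y ∈ Y, e.1 = s(w, y)}]
    · congr 1
      ext ω
      by_cases h : ∃ y ∈ Y, (gr ω).Adj a y
      · rw [if_pos h, Finset.insert_inter_of_mem (mem_nbr.mpr h),
          Finset.card_insert_of_notMem (by simp [ha])]
        rw [← Real.exp_add]
        push_cast
        ring_nf
      · rw [if_neg h, Finset.insert_inter_of_notMem (fun h' => h (mem_nbr.mp h')), mul_one]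
    · intro ω ω' h
      have : W ∩ nbr (gr ω) Y = W ∩ nbr (gr ω') Y := by
        ext w
        simp only [Finset.mem_inter, mem_nbr]
        apply and_congr_right; intro hw
        apply exists_congr; intro y
        apply and_congr_right; intro hy
        exact gr_congr (fun e he => h e ⟨w, hw, y, hy, he⟩)
      simp only [this]
    · intro ω ω' h
      have : (∃ y ∈ Y, (gr ω).Adj a y) ↔ (∃ y ∈ Y, (gr ω').Adj a y) := by
        apply exists_congr; intro y
        apply and_congr_right; intro hy
        refine gr_congr (fun e he => h e ?_)
        rintro ⟨w, hw, y', hy', he'⟩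
        rw [he, Sym2.eq_iff] at he'
        rcases he' with ⟨h1, _⟩ | ⟨h1, _⟩
        · exact ha (h1 ▸ hw)
        · exact hWY.1 (h1 ▸ hy')
      simp only [this]

lemma bP_nbr (h0 : 0 ≤ p) (h1 : p ≤ 1) (W Y : Finset (Fin n)) (hWY : Disjoint W Y)
    (δ : ℝ) (hδ0 : 0 ≤ δ) (hδ : δ ≤ 2) (μ : ℝ) (hμ : μ = W.card * (1 - (1 - p) ^ Y.card)) :
    bP p (fun ω : Edge n → Bool => ¬ ((1 - δ) * μ ≤ ((W ∩ nbr (gr ω) Y).card : ℝ) ∧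
      ((W ∩ nbr (gr ω) Y).card : ℝ) ≤ (1 + δ) * μ)) ≤ 2 * Real.exp (-(μ * δ ^ 2 / 4)) := by
  have hq1 : (1 - p) ^ Y.card ≤ 1 := pow_le_one₀ (by linarith) (by linarith)
  have hq0 : 0 ≤ (1 - p) ^ Y.card := pow_nonneg (by linarith) _
  apply bP_chernoff h0 h1 _ μ δ _ hδ0 hδ
  · intro t ht
    rw [bE_mgf W Y hWY, hμ]
    set q := (1 - p) ^ Y.card
    have e1 : Real.exp t + (1 - Real.exp t) * q ≤ Real.exp ((1 - q) * (t + t ^ 2)) := by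
      have := Real.abs_exp_sub_one_sub_id_le ht
      have h3 : Real.exp t - 1 ≤ t + t ^ 2 := by
        have := (abs_le.mp this).2
        linarith
      have h4 := Real.add_one_le_exp ((1 - q) * (t + t ^ 2))
      nlinarith
    have e0 : 0 ≤ Real.exp t + (1 - Real.exp t) * q := by
      have := Real.exp_pos t
      nlinarith
    calc _ ≤ (Real.exp ((1 - q) * (t + t ^ 2))) ^ W.card := pow_le_pow_left₀ e0 e1 _
      _ = _ := by rw [← Real.exp_nat_mul]; ring_nf
  · rw [hμ]; apply mul_nonneg; positivity; linarith

/-- Breadth-first search: the already processed vertices and the current layer. -/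
def bfs (G : SimpleGraph (Fin n)) (A : Finset (Fin n)) : ℕ → Finset (Fin n) × Finset (Fin n)
  | 0 => (∅, A)
  | j + 1 => ((bfs G A j).1 ∪ (bfs G A j).2,
      ((bfs G A j).1 ∪ (bfs G A j).2)ᶜ ∩ nbr G (bfs G A j).2)

lemma bfs_disjoint (G : SimpleGraph (Fin n)) (A : Finset (Fin n)) (j : ℕ) :
    Disjoint (bfs G A j).1 (bfs G A j).2 := by
  cases j with
  | zero => simp [bfs]
  | succ j =>
    simp only [bfs]
    exact Finset.disjoint_of_subset_right Finset.inter_subset_left disjoint_compl_right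

lemma nbr_congr {ω ω' : Edge n → Bool} {Y : Finset (Fin n)}
    (h : ∀ e : Edge n, (∃ y ∈ Y, y ∈ e.1) → ω e = ω' e) : nbr (gr ω) Y = nbr (gr ω') Y := by
  ext w
  simp only [mem_nbr]
  apply exists_congr; intro y
  apply and_congr_right; intro hy
  exact gr_congr (fun e he => h e ⟨y, hy, by rw [he]; simp⟩)

lemma bfs_local {ω ω' : Edge n → Bool} {A : Finset (Fin n)} {j : ℕ}
    (h : ∀ e : Edge n, (∃ y ∈ (bfs (gr ω) A j).1, y ∈ e.1) → ω e = ω' e) :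
    bfs (gr ω') A j = bfs (gr ω) A j := by
  induction j with
  | zero => rfl
  | succ j ih =>
    have h1 : bfs (gr ω') A j = bfs (gr ω) A j := by
      apply ih
      rintro e ⟨y, hy, hye⟩
      exact h e ⟨y, by simp only [bfs]; exact Finset.mem_union_left _ hy, hye⟩
    have h2 : nbr (gr ω) (bfs (gr ω) A j).2 = nbr (gr ω') (bfs (gr ω) A j).2 := by
      apply nbr_congr
      rintro e ⟨y, hy, hye⟩
      exact h e ⟨y, by simp only [bfs]; exact Finset.mem_union_right _ hy, hye⟩
    simp only [bfs, h1, h2]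

/-- One exploration step: conditional on the state, the next layer is well concentrated. -/
lemma bP_step (h0 : 0 ≤ p) (h1 : p ≤ 1) (A : Finset (Fin n)) (j : ℕ)
    (C : Finset (Fin n) × Finset (Fin n) → Prop)
    (bad : Finset (Fin n) × Finset (Fin n) → ℕ → Prop) (τ : ℝ) (hτ : 0 ≤ τ)
    (hbad : ∀ s, Disjoint s.1 s.2 → C s →
      bP p (fun ω : Edge n → Bool => bad s ((s.1 ∪ s.2)ᶜ ∩ nbr (gr ω) s.2).card) ≤ τ) :
    bP p (fun ω : Edge n → Bool => C (bfs (gr ω) A j) ∧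
      bad (bfs (gr ω) A j) (bfs (gr ω) A (j + 1)).2.card) ≤ τ := by
  classical
  have key : bP p (fun ω : Edge n → Bool => C (bfs (gr ω) A j) ∧
      bad (bfs (gr ω) A j) (bfs (gr ω) A (j + 1)).2.card)
      = ∑ s : Finset (Fin n) × Finset (Fin n),
        bE p (fun ω : Edge n → Bool => (if bfs (gr ω) A j = s then (1 : ℝ) else 0) *
          (if C s ∧ bad s ((s.1 ∪ s.2)ᶜ ∩ nbr (gr ω) s.2).card then (1 : ℝ) else 0)) := by
    rw [← bE_sum]
    unfold bP
    congr 1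
    ext ω
    rw [Finset.sum_eq_single (bfs (gr ω) A j)]
    · simp [bfs]
    · intro s _ hs
      rw [if_neg (Ne.symm hs), zero_mul]
    · simp
  rw [key]
  have hsum : ∑ s : Finset (Fin n) × Finset (Fin n),
      bE p (fun ω : Edge n → Bool => if bfs (gr ω) A j = s then (1 : ℝ) else 0) = 1 := by
    rw [← bE_sum]
    refine Eq.trans ?_ (bE_one (ι := Edge n) (p := p))
    congr 1
    ext ω
    simp
  calc _ ≤ ∑ s : Finset (Fin n) × Finset (Fin n),
      bE p (fun ω : Edge n → Bool => if bfs (gr ω) A j = s then (1 : ℝ) else 0) * τ := by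
        apply Finset.sum_le_sum
        rintro ⟨X, Y⟩ _
        have hnn : 0 ≤ bE p (fun ω : Edge n → Bool =>
            if bfs (gr ω) A j = (X, Y) then (1 : ℝ) else 0) := by
          have := bP_nonneg h0 h1 (fun ω : Edge n → Bool => bfs (gr ω) A j = (X, Y))
          unfold bP at this
          convert this
        by_cases hC : C (X, Y)
        · by_cases hD : Disjoint X Y
          · rw [bE_indep {e : Edge n | ∃ x ∈ X, x ∈ e.1}]
            · apply mul_le_mul_of_nonneg_left _ hnn
              refine le_trans (le_of_eq ?_) (hbad (X, Y) hD hC)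
              unfold bP
              congr 1
              ext ω
              simp [hC]
            · intro ω ω' h
              have : bfs (gr ω) A j = (X, Y) ↔ bfs (gr ω') A j = (X, Y) := by
                constructor
                · intro he
                  rw [← he]
                  apply bfs_local
                  rw [he]
                  exact fun e hx => h e hx
                · intro he
                  rw [← he]
                  apply bfs_local
                  rw [he]
                  exact fun e hx => (h e hx).symm
              simp only [this]
            · intro ω ω' h
              have : (X ∪ Y)ᶜ ∩ nbr (gr ω) Y = (X ∪ Y)ᶜ ∩ nbr (gr ω') Y := by
                ext w
                simp only [Finset.mem_inter, mem_nbr, Finset.mem_compl, Finset.mem_union, not_or]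
                apply and_congr_right; rintro ⟨hw, _⟩
                apply exists_congr; intro y
                apply and_congr_right; intro hy
                refine gr_congr (fun e he => h e ?_)
                rintro ⟨x, hx, hxe⟩
                rw [he, Sym2.mem_iff] at hxe
                rcases hxe with rfl | rfl
                · exact hw hx
                · exact Finset.disjoint_left.mp hD hx hy
              simp only [this]
          · have : ∀ ω : Edge n → Bool, bfs (gr ω) A j ≠ (X, Y) := by
              intro ω he
              have := bfs_disjoint (gr ω) A j
              rw [he] at this
              exact hD this
            simp only [this, if_false, zero_mul]
            simp [bE]
        · simp only [hC, false_and, if_false, mul_zero]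
          have : bE p (fun _ : Edge n → Bool => (0 : ℝ)) = 0 := by simp [bE]
          rw [this]
          exact mul_nonneg hnn hτ
    _ = τ := by rw [← Finset.sum_mul, hsum, one_mul]

end Gr

/-! ### The deterministic part: separating sensors give a winning strategy -/

noncomputable section Game

variable {n : ℕ}

lemma nbr_union (G : SimpleGraph (Fin n)) (X Y : Finset (Fin n)) :
    nbr G (X ∪ Y) = nbr G X ∪ nbr G Y := by
  ext w
  simp only [Finset.mem_union, mem_nbr]
  constructor
  · rintro ⟨y, hy | hy, h⟩
    · exact Or.inl ⟨y, hy, h⟩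
    · exact Or.inr ⟨y, hy, h⟩
  · rintro (⟨y, hy, h⟩ | ⟨y, hy, h⟩)
    · exact ⟨y, Or.inl hy, h⟩
    · exact ⟨y, Or.inr hy, h⟩

lemma bfs_nbr_subset (G : SimpleGraph (Fin n)) (A : Finset (Fin n)) (j : ℕ) :
    nbr G (bfs G A j).1 ⊆ (bfs G A (j + 1)).1 := by
  induction j with
  | zero =>
    intro x hx
    simp [bfs, mem_nbr] at hx
  | succ j ih =>
    intro x hx
    have hx' : x ∈ nbr G ((bfs G A j).1 ∪ (bfs G A j).2) := hx
    rw [nbr_union, Finset.mem_union] at hx'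
    change x ∈ (bfs G A (j + 1)).1 ∪ (((bfs G A (j + 1)).1)ᶜ ∩ nbr G (bfs G A j).2)
    rcases hx' with h | h
    · exact Finset.mem_union_left _ (ih h)
    · by_cases hc : x ∈ (bfs G A (j + 1)).1
      · exact Finset.mem_union_left _ hc
      · exact Finset.mem_union_right _ (Finset.mem_inter.mpr ⟨Finset.mem_compl.mpr hc, h⟩)

lemma bfs_succ_succ (G : SimpleGraph (Fin n)) (A : Finset (Fin n)) (j : ℕ) :
    (bfs G A (j + 2)).1 = (bfs G A (j + 1)).1 ∪ nbr G (bfs G A (j + 1)).1 := by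
  apply Finset.Subset.antisymm
  · intro x hx
    have hx' : x ∈ (bfs G A (j + 1)).1 ∪ (((bfs G A (j + 1)).1)ᶜ ∩ nbr G (bfs G A j).2) := hx
    rw [Finset.mem_union] at hx' ⊢
    rcases hx' with h | h
    · exact Or.inl h
    · right
      change x ∈ nbr G ((bfs G A j).1 ∪ (bfs G A j).2)
      rw [nbr_union]
      exact Finset.mem_union_right _ (Finset.mem_inter.mp h).2
  · apply Finset.union_subset
    · exact Finset.subset_union_left
    · exact bfs_nbr_subset G A (j + 1)

lemma mem_bfs_fst (G : SimpleGraph (Fin n)) (A : Finset (Fin n)) (j : ℕ) (x : Fin n) :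
    x ∈ (bfs G A (j + 1)).1 ↔ ∃ a ∈ A, ∃ w : G.Walk x a, w.length ≤ j := by
  induction j generalizing x with
  | zero =>
    constructor
    · intro h
      have hx : x ∈ A := by simpa [bfs] using h
      exact ⟨x, hx, SimpleGraph.Walk.nil, le_rfl⟩
    · rintro ⟨a, ha, w, hw⟩
      have : x = a := SimpleGraph.Walk.eq_of_length_eq_zero (Nat.le_zero.mp hw)
      subst this
      simpa [bfs] using ha
  | succ j ih =>
    rw [bfs_succ_succ, Finset.mem_union, mem_nbr, ih]
    constructor
    · rintro (⟨a, ha, w, hw⟩ | ⟨y, hy, hxy⟩)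
      · exact ⟨a, ha, w, by omega⟩
      · obtain ⟨a, ha, w, hw⟩ := (ih y).mp hy
        exact ⟨a, ha, SimpleGraph.Walk.cons hxy w, by simp; omega⟩
    · rintro ⟨a, ha, w, hw⟩
      cases w with
      | nil => exact Or.inl ⟨x, ha, SimpleGraph.Walk.nil, by simp⟩
      | cons h w' =>
        right
        refine ⟨_, (ih _).mpr ⟨a, ha, w', ?_⟩, h⟩
        simp at hw
        exact hw

lemma mem_bfs_snd (G : SimpleGraph (Fin n)) (A : Finset (Fin n)) (j : ℕ) (x : Fin n) :
    x ∈ (bfs G A (j + 1)).2 ↔ (∃ a ∈ A, ∃ w : G.Walk x a, w.length ≤ j + 1) ∧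
      ¬ ∃ a ∈ A, ∃ w : G.Walk x a, w.length ≤ j := by
  rw [← mem_bfs_fst, ← mem_bfs_fst]
  have h : x ∈ (bfs G A (j + 1)).1 → x ∉ (bfs G A (j + 1)).2 :=
    fun hx => Finset.disjoint_left.mp (bfs_disjoint G A (j + 1)) hx
  change _ ↔ (x ∈ (bfs G A (j + 1)).1 ∪ (bfs G A (j + 1)).2) ∧ _
  rw [Finset.mem_union]
  tauto

lemma mem_bfs_single (G : SimpleGraph (Fin n)) (u : Fin n) (j : ℕ) (x : Fin n) :
    x ∈ (bfs G {u} (j + 1)).2 ↔ G.dist x u = j + 1 := by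
  rw [mem_bfs_snd]
  simp only [Finset.mem_singleton, exists_eq_left]
  constructor
  · rintro ⟨⟨w, hw⟩, h⟩
    have h1 := (SimpleGraph.dist_le w).trans hw
    by_contra hne
    obtain ⟨w', hw'⟩ := w.reachable.exists_walk_length_eq_dist
    exact h ⟨w', by omega⟩
  · intro h
    have h0 : G.dist x u ≠ 0 := by omega
    obtain ⟨w, hw⟩ := SimpleGraph.exists_walk_of_dist_ne_zero h0
    refine ⟨⟨w, by omega⟩, ?_⟩
    rintro ⟨w', hw'⟩
    have := SimpleGraph.dist_le w'
    omega

lemma bfs_pair_subset (G : SimpleGraph (Fin n)) (u v : Fin n) (j : ℕ) :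
    (bfs G {u, v} (j + 1)).2 ⊆ (bfs G {u} (j + 1)).2 ∪ (bfs G {v} (j + 1)).2 := by
  intro x hx
  rw [Finset.mem_union]
  rw [mem_bfs_snd] at hx ⊢
  rw [mem_bfs_snd]
  simp only [Finset.mem_insert, Finset.mem_singleton, exists_eq_or_imp, exists_eq_left] at hx ⊢
  tauto

/-- Averaging over random sensors. -/
lemma exists_sensors (G : SimpleGraph (Fin n)) (k : ℕ) (D : ℝ) (hk : k ≤ n) (hn : 0 < n) (hD : D ≤ n)
    (hsep : ∀ u v : Fin n, u ≠ v →
      D ≤ ((Finset.univ.filter (fun s : Fin n => G.dist s u ≠ G.dist s v)).card : ℝ))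
    (N : Finset (Fin n)) :
    ∃ S : Finset (Fin n), S.card = k ∧
      (((N.offDiag.filter (fun x => ∀ s ∈ S, G.dist s x.1 = G.dist s x.2)).card : ℝ)
        ≤ (N.card : ℝ) ^ 2 * (1 - D / n) ^ k) := by
  classical
  have hnR : (0 : ℝ) < n := by exact_mod_cast hn
  have hcount : ∀ x ∈ N.offDiag, ((Finset.univ.filter
      (fun f : Fin k → Fin n => ∀ i, G.dist (f i) x.1 = G.dist (f i) x.2)).card : ℝ)
        ≤ (n - D) ^ k := by
    intro x hx
    have hne : x.1 ≠ x.2 := (Finset.mem_offDiag.mp hx).2.2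
    have e : (Finset.univ.filter
      (fun f : Fin k → Fin n => ∀ i, G.dist (f i) x.1 = G.dist (f i) x.2))
        = Fintype.piFinset (fun _ : Fin k =>
          Finset.univ.filter (fun s : Fin n => G.dist s x.1 = G.dist s x.2)) := by
      ext f; simp
    rw [e, Fintype.card_piFinset]
    simp only [Finset.prod_const, Finset.card_univ, Fintype.card_fin]
    push_cast
    apply pow_le_pow_left₀ (by positivity)
    have h1 := Finset.card_filter_add_card_filter_not (s := (Finset.univ : Finset (Fin n)))
      (fun s : Fin n => G.dist s x.1 = G.dist s x.2)
    rw [Finset.card_univ, Fintype.card_fin] at h1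
    have h2 := hsep x.1 x.2 hne
    have h3 : ((Finset.univ.filter (fun s : Fin n => G.dist s x.1 = G.dist s x.2)).card : ℝ)
      + ((Finset.univ.filter (fun s : Fin n => G.dist s x.1 ≠ G.dist s x.2)).card : ℝ) = n := by
      exact_mod_cast h1
    linarith
  have hpk : (n - D) ^ k = (n : ℝ) ^ k * (1 - D / n) ^ k := by
    rw [← mul_pow]
    congr 1
    field_simp
  have hoff : (N.offDiag.card : ℝ) ≤ (N.card : ℝ) ^ 2 := by
    rw [Finset.offDiag_card]
    have : N.card * N.card - N.card ≤ N.card ^ 2 := by rw [sq]; omega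
    exact_mod_cast this
  have hex : ∃ f : Fin k → Fin n,
      ((N.offDiag.filter (fun x => ∀ i, G.dist (f i) x.1 = G.dist (f i) x.2)).card : ℝ)
        ≤ (N.offDiag.card : ℝ) * (1 - D / n) ^ k := by
    have : ∃ f ∈ (Finset.univ : Finset (Fin k → Fin n)),
      ((N.offDiag.filter (fun x => ∀ i, G.dist (f i) x.1 = G.dist (f i) x.2)).card : ℝ)
        ≤ (N.offDiag.card : ℝ) * (1 - D / n) ^ k := by
      apply Finset.exists_le_of_sum_le
      · exact ⟨fun _ => ⟨0, hn⟩, Finset.mem_univ _⟩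
      · have hswap : ∑ f : Fin k → Fin n,
            ((N.offDiag.filter (fun x => ∀ i, G.dist (f i) x.1 = G.dist (f i) x.2)).card : ℝ)
            = ∑ x ∈ N.offDiag, ((Finset.univ.filter
              (fun f : Fin k → Fin n => ∀ i, G.dist (f i) x.1 = G.dist (f i) x.2)).card : ℝ) := by
          have := Finset.sum_card_bipartiteAbove_eq_sum_card_bipartiteBelow
            (s := (Finset.univ : Finset (Fin k → Fin n))) (t := N.offDiag)
            (fun f x => ∀ i, G.dist (f i) x.1 = G.dist (f i) x.2)
          unfold Finset.bipartiteAbove Finset.bipartiteBelow at this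
          exact_mod_cast this
        rw [hswap]
        refine (Finset.sum_le_sum hcount).trans ?_
        simp only [Finset.sum_const, nsmul_eq_mul, Finset.card_univ, Fintype.card_pi,
          Fintype.card_fin, Finset.prod_const]
        rw [hpk]
        push_cast
        apply le_of_eq; ring
    obtain ⟨f, _, hf⟩ := this
    exact ⟨f, hf⟩
  obtain ⟨f, hf⟩ := hex
  have hc : (Finset.univ.image f).card ≤ k := by
    refine Finset.card_image_le.trans ?_
    simp
  obtain ⟨S, hS1, hS2⟩ := Finset.exists_superset_card_eq hc (by simpa using hk)
  refine ⟨S, hS2, ?_⟩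
  have hle : ((N.offDiag.filter (fun x => ∀ s ∈ S, G.dist s x.1 = G.dist s x.2)).card : ℝ)
      ≤ ((N.offDiag.filter (fun x => ∀ i, G.dist (f i) x.1 = G.dist (f i) x.2)).card : ℝ) := by
    have : (N.offDiag.filter (fun x => ∀ s ∈ S, G.dist s x.1 = G.dist s x.2)).card
      ≤ (N.offDiag.filter (fun x => ∀ i, G.dist (f i) x.1 = G.dist (f i) x.2)).card := by
      apply Finset.card_le_card
      intro x hx
      rw [Finset.mem_filter] at hx ⊢
      exact ⟨hx.1, fun i => hx.2 _ (hS1 (Finset.mem_image_of_mem _ (Finset.mem_univ _)))⟩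
    exact_mod_cast this
  refine hle.trans (hf.trans ?_)
  apply mul_le_mul_of_nonneg_right hoff
  apply pow_nonneg
  have : D / n ≤ 1 := by rw [div_le_one hnR]; exact hD
  linarith

open Classical in
/-- Possible positions after a move from `C`. -/
def cnb (G : SimpleGraph (Fin n)) (C : Finset (Fin n)) : Finset (Fin n) := C ∪ nbr G C

lemma cnb_card (G : SimpleGraph (Fin n)) (M : ℕ) (hdeg : ∀ u, (nbr G {u}).card + 1 ≤ M)
    (C : Finset (Fin n)) : (cnb G C).card ≤ C.card * M := by
  classical
  have h : cnb G C ⊆ C.biUnion (fun u => insert u (nbr G {u})) := by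
    intro x hx
    rw [cnb, Finset.mem_union, mem_nbr] at hx
    rw [Finset.mem_biUnion]
    rcases hx with h | ⟨y, hy, h⟩
    · exact ⟨x, h, by simp⟩
    · exact ⟨y, hy, by rw [Finset.mem_insert, mem_nbr]; right; exact ⟨y, by simp, h⟩⟩
  refine (Finset.card_le_card h).trans ?_
  apply Finset.card_biUnion_le_card_mul
  intro u _
  exact (Finset.card_insert_le _ _).trans (hdeg u)

open Classical in
/-- Vertices of `N` consistent with the probe result `r`. -/
def cons (G : SimpleGraph (Fin n)) (N : Finset (Fin n)) (r : Finset (Fin n) × (Fin n → ℕ)) :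
    Finset (Fin n) := N.filter (fun v => probe G r.1 v = r)

/-- Possible positions before the next probe. -/
def poss (G : SimpleGraph (Fin n)) (h : List (Finset (Fin n) × (Fin n → ℕ))) :
    Finset (Fin n) :=
  h.foldl (fun N r => cnb G (cons G N r)) Finset.univ

lemma probe_fst (G : SimpleGraph (Fin n)) (S : Finset (Fin n)) (v : Fin n) :
    (probe G S v).1 = S := rfl

lemma mem_cons {G : SimpleGraph (Fin n)} {N S : Finset (Fin n)} {v u : Fin n} :
    u ∈ cons G N (probe G S v) ↔ u ∈ N ∧ probe G S u = probe G S v := by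
  unfold cons
  rw [Finset.mem_filter]
  exact Iff.rfl

lemma probe_dist {G : SimpleGraph (Fin n)} {S : Finset (Fin n)} {v u : Fin n}
    (h : probe G S u = probe G S v) : ∀ s ∈ S, G.dist s u = G.dist s v := by
  intro s hs
  have := congrFun (congrArg Prod.snd h) s
  simpa [probe, hs] using this

lemma poss_succ (G : SimpleGraph (Fin n)) (σ : CopStrategy (Fin n)) (w : ℕ → Fin n) (t : ℕ) :
    poss G (gameHistory G σ w (t + 1)) = cnb G (cons G (poss G (gameHistory G σ w t))
      (probe G (σ (gameHistory G σ w t)) (w t))) := by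
  simp [poss, gameHistory, List.foldl_append]

lemma mem_poss (G : SimpleGraph (Fin n)) (σ : CopStrategy (Fin n)) (w : ℕ → Fin n)
    (hw : IsRobberWalk G w) (t : ℕ) : w t ∈ poss G (gameHistory G σ w t) := by
  induction t with
  | zero => simp [poss, gameHistory]
  | succ t ih =>
    rw [poss_succ, cnb, Finset.mem_union, mem_nbr]
    have h1 : w t ∈ cons G (poss G (gameHistory G σ w t))
      (probe G (σ (gameHistory G σ w t)) (w t)) := mem_cons.mpr ⟨ih, rfl⟩
    rcases hw t with h | h
    · left; rw [h]; exact h1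
    · right; exact ⟨w t, h1, h.symm⟩

theorem copsWin_of (G : SimpleGraph (Fin n)) (k M : ℕ) (D : ℝ) (hk : k ≤ n) (hn : 0 < n)
    (hD : D ≤ n) (hdeg : ∀ u, (nbr G {u}).card + 1 ≤ M)
    (hsep : ∀ u v : Fin n, u ≠ v →
      D ≤ ((Finset.univ.filter (fun s : Fin n => G.dist s u ≠ G.dist s v)).card : ℝ))
    (hq : (M : ℝ) ^ 2 * (1 - D / n) ^ k < 1 / 2) : CopsWin G k := by
  classical
  choose S hS1 hS2 using exists_sensors G k D hk hn hD hsep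
  let σ : CopStrategy (Fin n) := fun h => S (poss G h)
  have hnR : (0 : ℝ) < n := by exact_mod_cast hn
  have hQ : 0 ≤ (1 - D / n) ^ k := by
    apply pow_nonneg
    have : D / n ≤ 1 := by rw [div_le_one hnR]; exact hD
    linarith
  refine ⟨σ, fun h => hS1 _, ?_⟩
  intro w hw
  let C : ℕ → Finset (Fin n) := fun t => cons G (poss G (gameHistory G σ w t))
      (probe G (σ (gameHistory G σ w t)) (w t))
  have hwC : ∀ t, w t ∈ C t := fun t => mem_cons.mpr ⟨mem_poss G σ w hw t, rfl⟩
  have hstep : ∀ t, (C (t + 1)).card ≤ 1 ∨ (C (t + 1)).card < (C t).card := by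
    intro t
    by_contra hcon
    push Not at hcon
    obtain ⟨hc1, hc2⟩ := hcon
    set N := poss G (gameHistory G σ w (t + 1)) with hN
    have hNcard : N.card ≤ (C t).card * M := by
      rw [hN, poss_succ]
      exact cnb_card G M hdeg _
    have hsub : (C (t + 1)).offDiag ⊆
        N.offDiag.filter (fun x => ∀ s ∈ S N, G.dist s x.1 = G.dist s x.2) := by
      intro x hx
      rw [Finset.mem_offDiag] at hx
      obtain ⟨h1, h2, h3⟩ := hx
      have h1' := mem_cons.mp h1
      have h2' := mem_cons.mp h2
      rw [Finset.mem_filter, Finset.mem_offDiag]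
      exact ⟨⟨h1'.1, h2'.1, h3⟩, probe_dist (h1'.2.trans h2'.2.symm)⟩
    have h4 : ((C (t + 1)).offDiag.card : ℝ) ≤ (N.card : ℝ) ^ 2 * (1 - D / n) ^ k :=
      le_trans (by exact_mod_cast Finset.card_le_card hsub) (hS2 N)
    have h5 : ((C (t + 1)).offDiag.card : ℝ) = (C (t + 1)).card * ((C (t + 1)).card - 1) := by
      rw [Finset.offDiag_card, Nat.cast_sub (by nlinarith)]
      push_cast; ring
    have h6 : (N.card : ℝ) ≤ (C t).card * M := by exact_mod_cast hNcard
    have h7 : (2 : ℝ) ≤ (C (t + 1)).card := by exact_mod_cast hc1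
    have h8 : ((C t).card : ℝ) ≤ (C (t + 1)).card := by exact_mod_cast hc2
    have h9 : (0 : ℝ) < (C t).card := by
      exact_mod_cast Finset.card_pos.mpr ⟨_, hwC t⟩
    have h10 : (N.card : ℝ) ^ 2 * (1 - D / n) ^ k
        ≤ ((C t).card : ℝ) ^ 2 * ((M : ℝ) ^ 2 * (1 - D / n) ^ k) := by
      rw [← mul_assoc, ← mul_pow]
      apply mul_le_mul_of_nonneg_right _ hQ
      exact pow_le_pow_left₀ (by positivity) h6 2
    have h11 : ((C t).card : ℝ) ^ 2 * ((M : ℝ) ^ 2 * (1 - D / n) ^ k)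
        < ((C t).card : ℝ) ^ 2 * (1 / 2) := by
      apply mul_lt_mul_of_pos_left hq (by positivity)
    nlinarith
  have hdec : ∀ t, (C t).card ≤ max 1 (n - t) := by
    intro t
    induction t with
    | zero =>
      have := Finset.card_le_univ (C 0)
      rw [Fintype.card_fin] at this
      simp [this]
    | succ t ih =>
      rcases hstep t with h | h
      · exact h.trans (le_max_left _ _)
      · have h1 : 0 < (C (t + 1)).card := Finset.card_pos.mpr ⟨_, hwC (t + 1)⟩
        rcases le_max_iff.mp ih with h2 | h2
        · omega
        · exact le_max_of_le_right (by omega)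
  refine ⟨n, ?_⟩
  intro w' hw' hh
  have h1 : (C n).card ≤ 1 := by simpa using hdec n
  obtain ⟨e1, e2⟩ := List.append_inj' (show gameHistory G σ w' n ++ _ = gameHistory G σ w n ++ _
    from hh) rfl
  have h2 : w' n ∈ C n := by
    apply mem_cons.mpr
    refine ⟨?_, ?_⟩
    · rw [← e1]; exact mem_poss G σ w' hw' n
    · have e3 : probe G (σ (gameHistory G σ w' n)) (w' n)
        = probe G (σ (gameHistory G σ w n)) (w n) := by simpa using e2
      rw [e1] at e3
      exact e3
  exact Finset.card_le_one.mp h1 _ h2 _ (hwC n)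

end Game

/-! ### Layer growth in the random graph -/

noncomputable section Growth

variable {n : ℕ}

/-- Preconditions on a search state. -/
def stOK (n : ℕ) (p δ : ℝ) (s : Finset (Fin n) × Finset (Fin n)) : Prop :=
  ((s.1 ∪ s.2).card : ℝ) ≤ δ ^ 2 / 2 * n ∧ 1 ≤ s.2.card ∧ p * s.2.card ≤ δ ^ 2 / 2

/-- The next layer has the wrong size. -/
def stBad (d δ : ℝ) (s : Finset (Fin n) × Finset (Fin n)) (z : ℕ) : Prop :=
  ¬ ((1 - 2 * δ) * (d * s.2.card) ≤ z ∧ (z : ℝ) ≤ (1 + 2 * δ) * (d * s.2.card))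

lemma q_bounds (p : ℝ) (h0 : 0 ≤ p) (h1 : p ≤ 1) (y : ℕ) (hy : p * y ≤ 1) :
    p * y * (1 - p * y) ≤ 1 - (1 - p) ^ y ∧ 1 - (1 - p) ^ y ≤ p * y := by
  constructor
  · have e1 : (1 - p) ^ y ≤ Real.exp (-(p * y)) := by
      have : (1 - p) ≤ Real.exp (-p) := by
        have := Real.add_one_le_exp (-p); linarith
      calc (1 - p) ^ y ≤ (Real.exp (-p)) ^ y := pow_le_pow_left₀ (by linarith) this _
        _ = _ := by rw [← Real.exp_nat_mul]; ring_nf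
    have hpy : 0 ≤ p * y := by positivity
    have e2 := Real.abs_exp_sub_one_sub_id_le (x := -(p * y)) (by rw [abs_neg, abs_of_nonneg hpy]; exact hy)
    have e3 := (abs_le.mp e2).2
    nlinarith
  · have := one_add_mul_le_pow (a := -p) (by linarith) y
    rw [← sub_eq_add_neg] at this
    linarith

lemma step_prob (hn : 0 < n) (p d δ : ℝ) (h0 : 0 < p) (h1 : p < 1) (hd : d = p * n)
    (hδ0 : 0 < δ) (hδ : δ ≤ 1 / 2) (A : Finset (Fin n)) (j : ℕ) :
    bP p (fun ω : Edge n → Bool => stOK n p δ (bfs (gr ω) A j) ∧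
      stBad d δ (bfs (gr ω) A j) (bfs (gr ω) A (j + 1)).2.card)
      ≤ 2 * Real.exp (-(d * δ ^ 2 / 8)) := by
  apply bP_step h0.le h1.le A j (stOK n p δ) (stBad d δ) _ (by positivity)
  rintro ⟨X, Y⟩ hXY ⟨hc1, hc2, hc3⟩
  simp only at hXY hc1 hc2 hc3 ⊢
  have hnR : (0 : ℝ) < n := by exact_mod_cast hn
  have hδ2 : δ ^ 2 ≤ 1 / 4 := by nlinarith
  have hdpos : 0 < d := by rw [hd]; positivity
  have hyR : (1 : ℝ) ≤ Y.card := by exact_mod_cast hc2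
  obtain ⟨q1, q2⟩ := q_bounds p h0.le h1.le Y.card (by linarith)
  set q := 1 - (1 - p) ^ Y.card with hq
  set y : ℝ := (Y.card : ℝ) with hy
  have hW : (((X ∪ Y)ᶜ).card : ℝ) = n - (X ∪ Y).card := by
    rw [Finset.card_compl, Fintype.card_fin, Nat.cast_sub]
    simpa using Finset.card_le_univ (X ∪ Y)
  set m : ℝ := (((X ∪ Y)ᶜ).card : ℝ) with hm
  have hm1 : (1 - δ ^ 2 / 2) * n ≤ m := by rw [hW]; linarith
  have hm2 : m ≤ n := by
    rw [hW]
    have : (0 : ℝ) ≤ ((X ∪ Y).card : ℝ) := by positivity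
    linarith
  have hm0 : 0 ≤ m := by positivity
  have hpy : 0 < p * y := by positivity
  have hq0 : 0 ≤ q := le_trans (mul_nonneg hpy.le (by linarith)) q1
  have hup : m * q ≤ d * y := by
    calc m * q ≤ n * (p * y) := mul_le_mul hm2 q2 hq0 hnR.le
      _ = d * y := by rw [hd]; ring
  have hlow : (1 - δ ^ 2) * (d * y) ≤ m * q := by
    calc (1 - δ ^ 2) * (d * y) ≤ ((1 - δ ^ 2 / 2) * n) * (p * y * (1 - δ ^ 2 / 2)) := by
          rw [hd]
          have : 0 ≤ n * (p * y) := by positivity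
          have h2 : (1 - δ ^ 2) ≤ (1 - δ ^ 2 / 2) * (1 - δ ^ 2 / 2) := by nlinarith [sq_nonneg (δ ^ 2)]
          nlinarith [mul_le_mul_of_nonneg_right h2 this]
      _ ≤ m * (p * y * (1 - p * y)) := by
          apply mul_le_mul hm1 _ _ hm0
          · apply mul_le_mul_of_nonneg_left _ hpy.le
            linarith
          · apply mul_nonneg hpy.le; linarith
      _ ≤ m * q := mul_le_mul_of_nonneg_left q1 hm0
  have hdy : d ≤ d * y := by nlinarith
  refine le_trans (bP_mono h0.le h1.le ?_) (le_trans
    (bP_nbr (p := p) h0.le h1.le (X ∪ Y)ᶜ Y ?_ δ hδ0.le (by linarith) (m * q) rfl) ?_)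
  · intro ω hb hgood
    apply hb
    simp only
    constructor
    · refine le_trans ?_ hgood.1
      refine le_trans ?_ (mul_le_mul_of_nonneg_left hlow (by linarith))
      change (1 - 2 * δ) * (d * y) ≤ _
      rw [← mul_assoc (1 - δ)]
      apply mul_le_mul_of_nonneg_right _ (by positivity)
      nlinarith [mul_pos hδ0 hδ0, mul_pos (mul_pos hδ0 hδ0) hδ0]
    · refine le_trans hgood.2 ?_
      refine le_trans (mul_le_mul_of_nonneg_left hup (by linarith)) ?_
      apply mul_le_mul_of_nonneg_right _ (by positivity)
      linarith
  · rw [Finset.disjoint_left]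
    intro x hx hxY
    rw [Finset.mem_compl, Finset.mem_union] at hx
    exact hx (Or.inr hxY)
  · apply mul_le_mul_of_nonneg_left _ (by norm_num)
    apply Real.exp_le_exp.mpr
    have : d / 2 ≤ m * q := by nlinarith
    nlinarith [sq_nonneg δ]

/-- Deterministic consequence of good steps. -/
lemma growth (G : SimpleGraph (Fin n)) (hn : 0 < n) (A : Finset (Fin n)) (p d δ : ℝ) (r : ℕ)
    (hd : d = p * n) (hd2 : 2 ≤ d) (hδ0 : 0 < δ) (hδ : 2 * δ < 1)
    (hA1 : 1 ≤ A.card) (hA2 : A.card ≤ 2)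
    (hr2 : (1 + 2 * δ) ^ r ≤ 2) (H2 : 4 * d ^ r ≤ δ ^ 2 / 2 * n)
    (hgood : ∀ j < r, ¬ (stOK n p δ (bfs G A j) ∧ stBad d δ (bfs G A j) (bfs G A (j + 1)).2.card)) :
    ∀ j ≤ r, A.card * ((1 - 2 * δ) ^ j * d ^ j) ≤ ((bfs G A j).2.card : ℝ) ∧
      ((bfs G A j).2.card : ℝ) ≤ A.card * ((1 + 2 * δ) ^ j * d ^ j) ∧
      ((bfs G A j).1.card : ℝ) ≤ 4 * d ^ j := by
  intro j
  have hnR : (0 : ℝ) < n := by exact_mod_cast hn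
  have hA1R : (1 : ℝ) ≤ A.card := by exact_mod_cast hA1
  have hA2R : (A.card : ℝ) ≤ 2 := by exact_mod_cast hA2
  induction j with
  | zero => intro _; simp [bfs]
  | succ j ih =>
    intro hj
    obtain ⟨i1, i2, i3⟩ := ih (by omega)
    have hdj : 0 < d ^ j := by positivity
    have hpj : (1 + 2 * δ) ^ j ≤ 2 :=
      le_trans (pow_le_pow_right₀ (by linarith) (by omega)) hr2
    have hpj0 : 0 < (1 + 2 * δ) ^ j := by positivity
    have hY4 : ((bfs G A j).2.card : ℝ) ≤ 4 * d ^ j := by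
      refine i2.trans ?_
      calc (A.card : ℝ) * ((1 + 2 * δ) ^ j * d ^ j) ≤ 2 * (2 * d ^ j) := by gcongr
        _ = _ := by ring
    have hYpos : 0 < ((bfs G A j).2.card : ℝ) := by
      refine lt_of_lt_of_le ?_ i1
      have : 0 < (1 - 2 * δ) ^ j := pow_pos (by linarith) _
      positivity
    have hdr : d ^ j * d ≤ d ^ r := by
      rw [← pow_succ]
      exact pow_le_pow_right₀ (by linarith) hj
    have hX : ((bfs G A (j + 1)).1.card : ℝ) ≤ 8 * d ^ j := by
      have : (bfs G A (j + 1)).1.card ≤ (bfs G A j).1.card + (bfs G A j).2.card :=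
        Finset.card_union_le _ _
      have : ((bfs G A (j + 1)).1.card : ℝ) ≤ (bfs G A j).1.card + (bfs G A j).2.card := by
        exact_mod_cast this
      linarith
    have hOK : stOK n p δ (bfs G A j) := by
      refine ⟨?_, by exact_mod_cast hYpos, ?_⟩
      · refine le_trans hX ?_
        nlinarith
      · have : p * (bfs G A j).2.card * n ≤ δ ^ 2 / 2 * n := by
          calc p * (bfs G A j).2.card * n = d * (bfs G A j).2.card := by rw [hd]; ring
            _ ≤ d * (4 * d ^ j) := by gcongr
            _ ≤ _ := by nlinarith
        exact le_of_mul_le_mul_right this hnR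
    have hb : (1 - 2 * δ) * (d * (bfs G A j).2.card) ≤ (bfs G A (j + 1)).2.card ∧
        ((bfs G A (j + 1)).2.card : ℝ) ≤ (1 + 2 * δ) * (d * (bfs G A j).2.card) := by
      by_contra hc
      exact hgood j (by omega) ⟨hOK, hc⟩
    refine ⟨?_, ?_, ?_⟩
    · refine le_trans ?_ hb.1
      calc (A.card : ℝ) * ((1 - 2 * δ) ^ (j + 1) * d ^ (j + 1))
          = (1 - 2 * δ) * (d * (A.card * ((1 - 2 * δ) ^ j * d ^ j))) := by ring
        _ ≤ _ := by
          apply mul_le_mul_of_nonneg_left _ (by linarith)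
          apply mul_le_mul_of_nonneg_left i1 (by linarith)
    · refine le_trans hb.2 ?_
      calc (1 + 2 * δ) * (d * ((bfs G A j).2.card : ℝ))
          ≤ (1 + 2 * δ) * (d * (A.card * ((1 + 2 * δ) ^ j * d ^ j))) := by
            apply mul_le_mul_of_nonneg_left _ (by linarith)
            apply mul_le_mul_of_nonneg_left i2 (by linarith)
        _ = _ := by ring
    · rw [pow_succ]
      nlinarith

/-- Good graphs are won with `k` sensors. -/
lemma good_copsWin (G : SimpleGraph (Fin n)) (hn : 0 < n) (p d δ L : ℝ) (r k : ℕ)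
    (hd : d = p * n) (hd2 : 2 ≤ d) (hδ0 : 0 < δ) (hL : 1 ≤ L) (hLδ : 16 * (L * δ) ≤ 1)
    (hr1 : 1 ≤ r) (hrL : (r : ℝ) ≤ L) (H2 : 4 * d ^ r ≤ δ ^ 2 / 2 * n)
    (hkn : k ≤ n)
    (hk : Real.log (18 * d ^ 2) < k * (2 * (1 - 8 * (L * δ)) * d ^ r / n))
    (hgood : ∀ u v : Fin n, ∀ j < r, ¬ (stOK n p δ (bfs G {u, v} j) ∧
      stBad d δ (bfs G {u, v} j) (bfs G {u, v} (j + 1)).2.card)) :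
    CopsWin G k := by
  classical
  have hnR : (0 : ℝ) < n := by exact_mod_cast hn
  have hδs : 16 * δ ≤ 1 := by nlinarith
  have hrδ : (r : ℝ) * δ ≤ L * δ := by gcongr
  have hr0 : 0 ≤ (r : ℝ) * δ := by positivity
  have hdr : 0 < d ^ r := by positivity
  have hup : (1 + 2 * δ) ^ r ≤ 1 + 4 * (L * δ) := by
    have h1 : (1 + 2 * δ) ^ r ≤ Real.exp (r * (2 * δ)) := by
      rw [Real.exp_nat_mul]
      apply pow_le_pow_left₀ (by linarith)
      have := Real.add_one_le_exp (2 * δ); linarith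
    have h2 := Real.abs_exp_sub_one_le (x := r * (2 * δ))
      (by rw [abs_of_nonneg (by positivity)]; linarith)
    rw [abs_of_nonneg (a := (r : ℝ) * (2 * δ)) (by positivity)] at h2
    have := (abs_le.mp h2).2
    linarith
  have hlo : 1 - 2 * (L * δ) ≤ (1 - 2 * δ) ^ r := by
    have := one_add_mul_le_pow (a := -(2 * δ)) (by linarith) r
    rw [← sub_eq_add_neg] at this
    nlinarith
  have hpair : ∀ u v : Fin n, u ≠ v →
      2 * ((1 - 2 * (L * δ)) * d ^ r) ≤ ((bfs G {u, v} r).2.card : ℝ) := by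
    intro u v huv
    have hc := Finset.card_pair huv
    have := (growth G hn {u, v} p d δ r hd hd2 hδ0 (by linarith) (by rw [hc]; norm_num)
      (by rw [hc]) (by linarith) H2 (hgood u v) r le_rfl).1
    rw [hc] at this
    refine le_trans ?_ this
    push_cast
    gcongr
  have hsingle := fun u : Fin n => growth G hn {u} p d δ r hd hd2 hδ0 (by linarith)
      (by simp) (by simp) (by linarith) H2 (by simpa using hgood u u)
  have hone : ∀ u : Fin n, ((bfs G {u} r).2.card : ℝ) ≤ (1 + 4 * (L * δ)) * d ^ r := by
    intro u
    have := (hsingle u r le_rfl).2.1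
    simp only [Finset.card_singleton, Nat.cast_one, one_mul] at this
    refine this.trans ?_
    gcongr
  have hdeg : ∀ u, (nbr G {u}).card + 1 ≤ ⌊2 * d⌋₊ + 1 := by
    intro u
    have h1 := (hsingle u 1 hr1).2.1
    have h2 : (bfs G {u} 1).2 = nbr G {u} := by
      simp only [bfs]
      apply Finset.inter_eq_right.mpr
      intro x hx
      obtain ⟨y, hy, hxy⟩ := mem_nbr.mp hx
      rw [Finset.mem_singleton] at hy
      subst hy
      simpa using hxy.ne
    rw [h2] at h1
    simp only [Finset.card_singleton, Nat.cast_one, one_mul, pow_one] at h1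
    have : (nbr G {u}).card ≤ ⌊2 * d⌋₊ := by
      apply Nat.le_floor
      nlinarith
    omega
  have hM : ((⌊2 * d⌋₊ + 1 : ℕ) : ℝ) ≤ 3 * d := by
    push_cast
    have := Nat.floor_le (a := 2 * d) (by linarith)
    linarith
  have hδ2 : δ ^ 2 ≤ 1 := by nlinarith
  have hDn : 2 * (1 - 8 * (L * δ)) * d ^ r ≤ n := by
    have : 0 ≤ L * δ := by positivity
    nlinarith
  have hD0 : 0 ≤ 2 * (1 - 8 * (L * δ)) * d ^ r := by
    apply mul_nonneg _ hdr.le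
    linarith
  apply copsWin_of G k (⌊2 * d⌋₊ + 1) (2 * (1 - 8 * (L * δ)) * d ^ r) hkn hn hDn hdeg
  · intro u v huv
    obtain ⟨r', rfl⟩ : ∃ r', r = r' + 1 := ⟨r - 1, by omega⟩
    set Yu := (bfs G {u} (r' + 1)).2 with hYu
    set Yv := (bfs G {v} (r' + 1)).2 with hYv
    have h1 : (Yu \ Yv) ∪ (Yv \ Yu) ⊆
        Finset.univ.filter (fun s : Fin n => G.dist s u ≠ G.dist s v) := by
      intro s hs
      simp only [Finset.mem_union, Finset.mem_sdiff, hYu, hYv, mem_bfs_single] at hs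
      simp only [Finset.mem_filter, Finset.mem_univ, true_and]
      omega
    have h2 := Finset.card_le_card h1
    rw [Finset.card_union_of_disjoint (by
      rw [Finset.disjoint_left]; intro x hx hx'
      rw [Finset.mem_sdiff] at hx hx'; exact hx.2 hx'.1)] at h2
    have h3 : (bfs G {u, v} (r' + 1)).2.card ≤ (Yu ∪ Yv).card :=
      Finset.card_le_card (bfs_pair_subset G u v r')
    have h4 : (Yu ∪ Yv).card = Yu.card + (Yv \ Yu).card := by
      rw [← Finset.card_union_of_disjoint Finset.disjoint_sdiff, Finset.union_sdiff_self_eq_union]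
    have h5 : (Yu ∪ Yv).card = Yv.card + (Yu \ Yv).card := by
      rw [← Finset.card_union_of_disjoint Finset.disjoint_sdiff, Finset.union_sdiff_self_eq_union,
        Finset.union_comm]
    have h6 : 2 * (bfs G {u, v} (r' + 1)).2.card ≤ Yu.card + Yv.card +
        (Finset.univ.filter (fun s : Fin n => G.dist s u ≠ G.dist s v)).card := by omega
    have h7 : 2 * ((bfs G {u, v} (r' + 1)).2.card : ℝ) ≤ Yu.card + Yv.card +
        ((Finset.univ.filter (fun s : Fin n => G.dist s u ≠ G.dist s v)).card : ℝ) := by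
      exact_mod_cast h6
    have h8 := hpair u v huv
    have h9 := hone u
    have h10 := hone v
    linarith
  · set D := 2 * (1 - 8 * (L * δ)) * d ^ r with hD
    have e1 : (1 - D / n) ^ k ≤ Real.exp (-(k * (D / n))) := by
      have h1 : 1 - D / n ≤ Real.exp (-(D / n)) := by
        have := Real.add_one_le_exp (-(D / n)); linarith
      calc (1 - D / n) ^ k ≤ (Real.exp (-(D / n))) ^ k := by
            apply pow_le_pow_left₀ _ h1
            have : D / n ≤ 1 := by rw [div_le_one hnR]; exact hDn
            linarith
        _ = _ := by rw [← Real.exp_nat_mul]; ring_nf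
    have e2 : Real.exp (-(k * (D / n))) < (18 * d ^ 2)⁻¹ := by
      rw [← Real.exp_log (show 0 < (18 * d ^ 2)⁻¹ by positivity), Real.log_inv]
      apply Real.exp_lt_exp.mpr
      linarith
    calc ((⌊2 * d⌋₊ + 1 : ℕ) : ℝ) ^ 2 * (1 - D / n) ^ k
        ≤ (3 * d) ^ 2 * Real.exp (-(k * (D / n))) := by
          apply mul_le_mul (pow_le_pow_left₀ (by positivity) hM 2) e1 _ (by positivity)
          apply pow_nonneg
          have : D / n ≤ 1 := by rw [div_le_one hnR]; exact hDn
          linarith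
      _ < (3 * d) ^ 2 * (18 * d ^ 2)⁻¹ := by
          apply mul_lt_mul_of_pos_left e2; positivity
      _ = 1 / 2 := by field_simp; norm_num

/-- The finite probabilistic statement. -/
theorem prob_copsWin (hn : 0 < n) (p d δ L : ℝ) (r k : ℕ) (h0 : 0 < p) (h1 : p < 1)
    (hd : d = p * n) (hd2 : 2 ≤ d) (hL : L = Real.log n) (hL1 : 1 ≤ L) (hδ0 : 0 < δ)
    (hδ2 : δ ^ 2 = 40 * L / d) (hLδ : 16 * (L * δ) ≤ 1)
    (hr1 : 1 ≤ r) (hrL : (r : ℝ) ≤ L) (H : d ^ r * d ≤ 3 * L * n)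
    (hkn : k ≤ n)
    (hk : Real.log (18 * d ^ 2) < k * (2 * (1 - 8 * (L * δ)) * d ^ r / n)) :
    1 - 2 / n ≤ gnpProb n p {G | CopsWin G k} := by
  classical
  have hnR : (0 : ℝ) < n := by exact_mod_cast hn
  have hδs : 16 * δ ≤ 1 := by nlinarith
  have hdpos : 0 < d := by linarith
  have H2 : 4 * d ^ r ≤ δ ^ 2 / 2 * n := by
    rw [hδ2]
    have : d ^ r ≤ 3 * L * n / d := by rw [le_div_iff₀ hdpos]; exact H
    have e : 40 * L / d / 2 * n = 20 * (L * n / d) := by ring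
    have e' : 3 * L * n / d = 3 * (L * n / d) := by ring
    have : 0 ≤ L * n / d := by positivity
    rw [e]
    linarith
  rw [gnpProb_eq]
  have hc := bP_compl (p := p) (fun ω : Edge n → Bool => gr ω ∈ {G | CopsWin G k})
  have hub : bP p (fun ω : Edge n → Bool => ¬ gr ω ∈ {G | CopsWin G k}) ≤ 2 / n := by
    let E : (Fin n × Fin n) × ℕ → (Edge n → Bool) → Prop := fun x ω =>
      stOK n p δ (bfs (gr ω) {x.1.1, x.1.2} x.2) ∧
      stBad d δ (bfs (gr ω) {x.1.1, x.1.2} x.2) (bfs (gr ω) {x.1.1, x.1.2} (x.2 + 1)).2.card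
    let s : Finset ((Fin n × Fin n) × ℕ) := Finset.univ ×ˢ Finset.range r
    have hsub : ∀ ω : Edge n → Bool, ¬ gr ω ∈ {G | CopsWin G k} → ∃ x ∈ s, E x ω := by
      intro ω hω
      by_contra hcon
      push Not at hcon
      apply hω
      refine good_copsWin (gr ω) hn p d δ L r k hd hd2 hδ0 hL1 hLδ hr1 hrL H2 hkn hk ?_
      intro u v j hj
      exact hcon ((u, v), j) (by simp [s, hj])
    have hbound : ∀ x ∈ s, bP p (E x) ≤ 2 * Real.exp (-(d * δ ^ 2 / 8)) := by
      intro x _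
      exact step_prob hn p d δ h0 h1 hd hδ0 (by linarith) _ _
    have hexp : Real.exp (-(d * δ ^ 2 / 8)) = 1 / (n : ℝ) ^ 5 := by
      have : -(d * δ ^ 2 / 8) = -(((5 : ℕ) : ℝ) * Real.log n) := by
        rw [hδ2, hL]; field_simp; push_cast; ring
      rw [this, Real.exp_neg, Real.exp_nat_mul, Real.exp_log hnR, one_div]
    have hcard : s.card = n * n * r := by simp [s]
    have hrn : (r : ℝ) ≤ n := by
      have := Real.log_le_sub_one_of_pos hnR
      linarith
    have hn1 : (1 : ℝ) ≤ n := by exact_mod_cast hn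
    calc bP p (fun ω : Edge n → Bool => ¬ gr ω ∈ {G | CopsWin G k})
        ≤ bP p (fun ω => ∃ x ∈ s, E x ω) := bP_mono h0.le h1.le hsub
      _ ≤ ∑ x ∈ s, bP p (E x) := bP_exists_le h0.le h1.le s E
      _ ≤ ∑ x ∈ s, 2 * Real.exp (-(d * δ ^ 2 / 8)) := Finset.sum_le_sum hbound
      _ = (n * n * r) * (2 * (1 / (n : ℝ) ^ 5)) := by
        rw [Finset.sum_const, hcard, hexp, nsmul_eq_mul]; push_cast; ring
      _ ≤ (n * n * n) * (2 * (1 / (n : ℝ) ^ 5)) := by gcongr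
      _ = 2 / n * (1 / n) := by field_simp
      _ ≤ 2 / n * 1 := by
        gcongr
        rw [div_le_one hnR]; exact hn1
      _ = 2 / n := by ring
  linarith

lemma gnpProb_le_one (p : ℝ) (h0 : 0 ≤ p) (h1 : p ≤ 1) (A : Set (SimpleGraph (Fin n))) :
    gnpProb n p A ≤ 1 := by
  rw [gnpProb_eq]
  have hc := bP_compl (p := p) (fun ω : Edge n → Bool => gr ω ∈ A)
  have := bP_nonneg h0 h1 (fun ω : Edge n → Bool => ¬ gr ω ∈ A)
  linarith

lemma gnpProb_mono (p : ℝ) (h0 : 0 ≤ p) (h1 : p ≤ 1) {A B : Set (SimpleGraph (Fin n))}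
    (h : A ⊆ B) : gnpProb n p A ≤ gnpProb n p B := by
  rw [gnpProb_eq, gnpProb_eq]
  exact bP_mono h0 h1 (fun ω hω => h hω)

end Growth

/-! ### Asymptotics -/

/-- Basic consequences of the hypotheses at a single large `n`. -/
lemma basic_facts (n i : ℕ) (d c L : ℝ) (hL : L = Real.log n) (hn : 0 < n) (hL5 : 5 ≤ L)
    (hc : c = d ^ i / n) (h3 : |L ^ 3 / d| < 1) (hdn : d / n < 1)
    (hi : c ≤ 3 * L ∧ 3 * L < d ^ (i + 1) / n)
    (hcB : 1 ≤ c - (Real.log d - Real.log (Real.log d))) :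
    L ^ 3 ≤ d ∧ 2 ≤ i ∧ d ^ (i - 1) * d ≤ 3 * L * n := by
  have hnR : (0 : ℝ) < n := by exact_mod_cast hn
  have hd0 : d ≠ 0 := by
    rintro rfl
    have := hi.2
    rw [zero_pow (by omega), zero_div] at this
    linarith
  have hLd : L ^ 3 < |d| := by
    rw [abs_div, div_lt_one (abs_pos.mpr hd0), abs_of_nonneg (by positivity)] at h3
    exact h3
  have hLL : L ≤ L ^ 3 := by nlinarith [sq_nonneg (L - 1)]
  have hlogpos : 0 < Real.log d := by
    rw [← Real.log_abs]
    exact Real.log_pos (by linarith)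
  have hll := Real.log_le_sub_one_of_pos hlogpos
  have hc2 : 2 ≤ c := by linarith
  have hdi : 0 < d ^ i := by
    have : 0 < d ^ i / n := by rw [← hc]; linarith
    by_contra hcon
    have := div_nonpos_of_nonpos_of_nonneg (not_lt.mp hcon) hnR.le
    linarith
  have hdi1 : 0 < d ^ (i + 1) := by
    have : 0 < d ^ (i + 1) / n := by linarith [hi.2]
    by_contra hcon
    have := div_nonpos_of_nonpos_of_nonneg (not_lt.mp hcon) hnR.le
    linarith
  have hdpos : 0 < d := by
    rw [pow_succ] at hdi1
    exact (pos_iff_pos_of_mul_pos hdi1).mp hdi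
  rw [abs_of_pos hdpos] at hLd
  have hn1 : (1 : ℝ) ≤ n := by exact_mod_cast hn
  have hi2 : 2 ≤ i := by
    by_contra hcon
    have : i = 0 ∨ i = 1 := by omega
    rcases this with rfl | rfl
    · have : c ≤ 1 := by
        rw [hc, pow_zero, div_le_one hnR]; exact hn1
      linarith
    · rw [pow_one] at hc
      linarith
  refine ⟨hLd.le, hi2, ?_⟩
  rw [← pow_succ, show i - 1 + 1 = i by omega]
  have := hi.1
  rw [hc, div_le_iff₀ hnR] at this
  exact this


theorem stmt16_localization_upper_bound_beyond_window
    (p d : ℕ → ℝ) (i : ℕ → ℕ) (c : ℕ → ℝ)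
    (hd : ∀ n, d n = p n * n)
    (hc : ∀ n, c n = d n ^ i n / n)
    (hlog3 : Filter.Tendsto (fun n : ℕ => (Real.log n) ^ 3 / d n) Filter.atTop (nhds 0))
    (hdn : Filter.Tendsto (fun n : ℕ => d n / n) Filter.atTop (nhds 0))
    (himax : ∀ᶠ n : ℕ in Filter.atTop,
      c n ≤ 3 * Real.log n ∧ 3 * Real.log n < d n ^ (i n + 1) / n)
    (hcB : Filter.Tendsto
      (fun n : ℕ => c n - (Real.log (d n) - Real.log (Real.log (d n))))
      Filter.atTop Filter.atTop) :
    ∃ ε : ℕ → ℝ, Filter.Tendsto ε Filter.atTop (nhds 0) ∧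
      AAS p (fun n : ℕ =>
        {G : SimpleGraph (Fin n) |
          (localizationNumber G : ℝ)
            ≤ (1 + ε n) * (Real.log (d n) + 2 * Real.log (Real.log n))
                * (n / d n ^ (i n - 1))}) := by
  classical
  set L : ℕ → ℝ := fun n => Real.log n with hLdef
  set δ : ℕ → ℝ := fun n => Real.sqrt (40 * L n / d n) with hδdef
  set ξ : ℕ → ℝ := fun n => 8 * (L n * δ n) with hξdef
  set R : ℕ → ℝ := fun n => (Real.log (d n) + 2 * Real.log (L n)) * (n / d n ^ (i n - 1)) with hRdef
  set k : ℕ → ℕ := fun n => ⌈R n / (1 - ξ n)⌉₊ with hkdef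
  have tL : Tendsto L atTop atTop := Real.tendsto_log_atTop.comp tendsto_natCast_atTop_atTop
  have eL : ∀ᶠ n in atTop, Real.exp 5 ≤ L n := tL.eventually_ge_atTop _
  have e3 : ∀ᶠ n : ℕ in atTop, |L n ^ 3 / d n| < 1 := by
    have := hlog3.abs
    rw [abs_zero] at this
    exact this.eventually_lt_const one_pos
  have edn : ∀ᶠ n : ℕ in atTop, d n / n < 1 := hdn.eventually_lt_const one_pos
  have eB := hcB.eventually_ge_atTop 1
  have en : ∀ᶠ n : ℕ in atTop, 0 < n := eventually_gt_atTop 0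
  have hexp5 : (6 : ℝ) ≤ Real.exp 5 := by
    have := Real.add_one_le_exp 5; linarith
  have ebasic : ∀ᶠ n : ℕ in atTop, L n ^ 3 ≤ d n ∧ 2 ≤ i n ∧
      d n ^ (i n - 1) * d n ≤ 3 * L n * n := by
    filter_upwards [eL, e3, edn, eB, en, himax] with n h1 h2 h3 h4 h5 h6
    exact basic_facts n (i n) (d n) (c n) (L n) rfl h5 (by linarith) (hc n) h2 h3 h6 h4
  have td : Tendsto d atTop atTop := by
    apply tendsto_atTop_mono' _ _ tL
    filter_upwards [ebasic, eL] with n h1 h2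
    have : 1 ≤ L n := by linarith
    have : L n ≤ L n ^ 3 := by nlinarith [sq_nonneg (L n - 1)]
    linarith [h1.1]
  have elog : ∀ᶠ n : ℕ in atTop, Real.log (d n) ≤ d n / 12 := by
    have h := Real.isLittleO_log_id_atTop.bound (show (0 : ℝ) < 1 / 12 by norm_num)
    filter_upwards [td.eventually h, td.eventually_ge_atTop 1] with n h1 h2
    have h3 := (le_abs_self (Real.log (d n))).trans h1
    simp only [id, Real.norm_eq_abs] at h3
    rw [abs_of_nonneg (by linarith)] at h3
    linarith
  have tLδ : Tendsto (fun n => L n * δ n) atTop (nhds 0) := by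
    have h1 : Tendsto (fun n : ℕ => Real.sqrt (40 * (L n ^ 3 / d n))) atTop (nhds 0) := by
      have := (hlog3.const_mul 40).sqrt
      simpa using this
    refine h1.congr' ?_
    filter_upwards [eL] with n h1
    have hL0 : 0 ≤ L n := by linarith
    simp only [hδdef]
    rw [show 40 * (L n ^ 3 / d n) = L n ^ 2 * (40 * L n / d n) by ring,
      Real.sqrt_mul (by positivity), Real.sqrt_sq hL0]
  have tξ : Tendsto ξ atTop (nhds 0) := by
    have := tLδ.const_mul 8
    simpa [hξdef] using this
  have eLδ : ∀ᶠ n in atTop, L n * δ n < 1 / 16 := tLδ.eventually_lt_const (by norm_num)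
  have elogs : ∀ᶠ n : ℕ in atTop, 5 ≤ Real.log (L n) ∧ 1 ≤ Real.log (d n) ∧
      3 * Real.log (L n) ≤ Real.log (d n) := by
    filter_upwards [eL, ebasic] with n h1 h2
    have hLpos : 0 < L n := by linarith
    have a1 : 5 ≤ Real.log (L n) := by
      rw [Real.le_log_iff_exp_le hLpos]; exact h1
    have a2 : 3 * Real.log (L n) ≤ Real.log (d n) := by
      have := Real.log_le_log (by positivity) h2.1
      rw [Real.log_pow] at this
      exact_mod_cast this
    exact ⟨a1, by linarith, a2⟩
  have eR : ∀ᶠ n in atTop, L n ≤ R n := by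
    filter_upwards [eL, ebasic, elogs, en] with n h1 h2 h3 h4
    obtain ⟨b1, b2, b3⟩ := h2
    have hnR : (0 : ℝ) < n := by exact_mod_cast h4
    have hL6 : 6 ≤ L n := by linarith
    have hdpos : 0 < d n := lt_of_lt_of_le (by positivity) b1
    have hdr : 0 < d n ^ (i n - 1) := by positivity
    have h5 : L n ≤ n / d n ^ (i n - 1) := by
      rw [le_div_iff₀ hdr]
      have h6 : L n * d n ^ (i n - 1) * d n ≤ n * d n := by
        calc L n * d n ^ (i n - 1) * d n = L n * (d n ^ (i n - 1) * d n) := by ring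
          _ ≤ L n * (3 * L n * n) := by gcongr
          _ = n * (3 * L n ^ 2) := by ring
          _ ≤ n * d n := by
            gcongr
            nlinarith [sq_nonneg (L n)]
      exact le_of_mul_le_mul_right h6 hdpos
    simp only [hRdef]
    have h7 : 1 ≤ Real.log (d n) + 2 * Real.log (L n) := by linarith
    have h8 : 0 ≤ (n : ℝ) / d n ^ (i n - 1) := by positivity
    nlinarith
  have tR : Tendsto R atTop atTop := tendsto_atTop_mono' _ eR tL
  have eξ : ∀ᶠ n in atTop, ξ n < 1 / 2 := tξ.eventually_lt_const (by norm_num)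
  have t1 : Tendsto (fun n => 1 / (1 - ξ n) - 1) atTop (nhds 0) := by
    have h1 : Tendsto (fun n => 1 - ξ n) atTop (nhds (1 - 0)) := tξ.const_sub 1
    have h2 := (h1.inv₀ (by norm_num)).sub_const 1
    simpa using h2
  have t2 : Tendsto (fun n => 1 / (1 - ξ n) - 1 + 1 / R n) atTop (nhds 0) := by
    have h1 : Tendsto (fun n => 1 / R n) atTop (nhds 0) := by
      simp only [one_div]; exact tR.inv_tendsto_atTop
    simpa using t1.add h1
  refine ⟨fun n => k n / R n - 1, ?_, ?_⟩
  · refine tendsto_of_tendsto_of_tendsto_of_le_of_le' t1 t2 ?_ ?_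
    · filter_upwards [eR, eL, eξ] with n h1 h2 h3
      have hRpos : 0 < R n := by linarith
      have h4 := Nat.le_ceil (R n / (1 - ξ n))
      have h5 : 1 / (1 - ξ n) ≤ k n / R n := by
        rw [le_div_iff₀ hRpos]
        refine le_trans (le_of_eq ?_) h4
        ring
      linarith
    · filter_upwards [eR, eL, eξ] with n h1 h2 h3
      have hRpos : 0 < R n := by linarith
      have h4 := (Nat.ceil_lt_add_one (a := R n / (1 - ξ n))
        (div_nonneg hRpos.le (by linarith))).le
      have h5 : k n / R n ≤ 1 / (1 - ξ n) + 1 / R n := by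
        rw [div_le_iff₀ hRpos]
        refine le_trans h4 (le_of_eq ?_)
        have : 1 - ξ n ≠ 0 := by linarith
        field_simp
      linarith
  · have tn : Tendsto (fun n : ℕ => 1 - 2 / (n : ℝ)) atTop (nhds 1) := by
      have := (tendsto_const_div_atTop_nhds_zero_nat (2 : ℝ)).const_sub 1
      simpa using this
    refine tendsto_of_tendsto_of_tendsto_of_le_of_le' tn tendsto_const_nhds ?_ ?_
    · filter_upwards [eL, edn, en, ebasic, elog, eLδ, elogs, eR, eξ,
        eventually_ge_atTop 2] with n hL6 hdn1 hn0 hb hlogd hLδ hlogs hRL hξ hn2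
      obtain ⟨b1, b2, b3⟩ := hb
      obtain ⟨l1, l2, l3⟩ := hlogs
      have hnR : (0 : ℝ) < n := by exact_mod_cast hn0
      have hL6' : 6 ≤ L n := by linarith
      have hdpos : 0 < d n := lt_of_lt_of_le (by positivity) b1
      have hd3L : 3 * L n ≤ d n := by nlinarith [sq_nonneg (L n)]
      have hd1 : 1 ≤ d n := by linarith
      have hp0 : 0 < p n := by
        have := hd n
        by_contra hcon
        have : p n * n ≤ 0 := mul_nonpos_of_nonpos_of_nonneg (not_lt.mp hcon) hnR.le
        linarith
      have hp1 : p n < 1 := by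
        rw [hd n, mul_div_cancel_right₀ _ hnR.ne'] at hdn1
        exact hdn1
      have hRpos : 0 < R n := by linarith
      have hdr : 0 < d n ^ (i n - 1) := by positivity
      have hξ1 : 0 < 1 - ξ n := by linarith
      have hrL : ((i n - 1 : ℕ) : ℝ) ≤ L n := by
        have h1 : d n ^ (i n - 1) ≤ n := by
          have : d n ^ (i n - 1) * d n ≤ n * d n := by
            refine b3.trans ?_
            rw [mul_comm]
            gcongr
          exact le_of_mul_le_mul_right this hdpos
        have h2 := Real.log_le_log hdr h1
        rw [Real.log_pow] at h2
        have h3 : (0 : ℝ) ≤ ((i n - 1 : ℕ) : ℝ) := by positivity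
        change _ ≤ Real.log n
        nlinarith
      have hkR : R n / (1 - ξ n) ≤ k n := Nat.le_ceil _
      have hkn : k n ≤ n := by
        have h1 := (Nat.ceil_lt_add_one (a := R n / (1 - ξ n))
          (div_nonneg hRpos.le hξ1.le)).le
        have h2 : R n / (1 - ξ n) ≤ 2 * R n := by
          rw [div_le_iff₀ hξ1]
          nlinarith
        have h3 : R n ≤ n / 6 := by
          have h4 : (n : ℝ) / d n ^ (i n - 1) ≤ n / d n := by
            apply div_le_div_of_nonneg_left hnR.le hdpos
            exact le_self_pow₀ hd1 (by omega)
          calc R n ≤ (2 * (d n / 12)) * (n / d n) := by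
                simp only [hRdef]
                apply mul_le_mul _ h4 (by positivity) (by positivity)
                linarith
            _ = n / 6 := by field_simp; norm_num
        have h5 : (2 : ℝ) ≤ n := by exact_mod_cast hn2
        have h6 : (k n : ℝ) ≤ n := by
          have : (k n : ℝ) ≤ R n / (1 - ξ n) + 1 := h1
          linarith
        exact_mod_cast h6
      have hkk : Real.log (18 * d n ^ 2) <
          k n * (2 * (1 - 8 * (L n * δ n)) * d n ^ (i n - 1) / n) := by
        have h1 : R n ≤ k n * (1 - ξ n) := by
          rwa [div_le_iff₀ hξ1] at hkR
        have h2 : k n * (2 * (1 - 8 * (L n * δ n)) * d n ^ (i n - 1) / n)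
            = (k n * (1 - ξ n)) * (2 * (d n ^ (i n - 1) / n)) := by
          simp only [hξdef]; ring
        have h3 : R n * (2 * (d n ^ (i n - 1) / n))
            = 2 * (Real.log (d n) + 2 * Real.log (L n)) := by
          simp only [hRdef]
          field_simp
        have h4 : R n * (2 * (d n ^ (i n - 1) / n))
            ≤ (k n * (1 - ξ n)) * (2 * (d n ^ (i n - 1) / n)) := by gcongr
        have h5 : Real.log (18 * d n ^ 2) = Real.log 18 + 2 * Real.log (d n) := by
          rw [Real.log_mul (by norm_num) (by positivity), Real.log_pow]
          push_cast; ring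
        have h6 : Real.log 18 ≤ 17 := by
          have := Real.log_le_sub_one_of_pos (show (0 : ℝ) < 18 by norm_num)
          linarith
        rw [h2, h5]
        linarith
      have hδpos : 0 < δ n := Real.sqrt_pos.mpr (by positivity)
      have hδsq : δ n ^ 2 = 40 * L n / d n := Real.sq_sqrt (by positivity)
      refine (prob_copsWin hn0 (p n) (d n) (δ n) (L n) (i n - 1) (k n) hp0 hp1 (hd n)
        (by linarith) rfl (by linarith) hδpos hδsq (by linarith) (by omega) hrL b3 hkn hkk).trans ?_
      apply gnpProb_mono _ hp0.le hp1.le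
      intro G hG
      have h1 : localizationNumber G ≤ k n := Nat.sInf_le hG
      have h2 : (localizationNumber G : ℝ) ≤ k n := by exact_mod_cast h1
      change (localizationNumber G : ℝ) ≤ (1 + (k n / R n - 1)) *
        (Real.log (d n) + 2 * Real.log (L n)) * (n / d n ^ (i n - 1))
      refine h2.trans (le_of_eq ?_)
      rw [mul_assoc]
      change (k n : ℝ) = (1 + (k n / R n - 1)) * R n
      field_simp
      ring
    · filter_upwards [edn, en, td.eventually_ge_atTop 0] with n hdn1 hn0 hd0
      have hnR : (0 : ℝ) < n := by exact_mod_cast hn0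
      apply gnpProb_le_one
      · rw [hd n] at hd0
        by_contra hcon
        have : p n * n < 0 := mul_neg_of_neg_of_pos (not_le.mp hcon) hnR
        linarith
      · rw [hd n, mul_div_cancel_right₀ _ hnR.ne'] at hdn1
        exact hdn1.le
end
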